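/- Let FH be a Frobenius group with kernel F and complement H acting on a finite q-group Q, and let V be a module for the semidirect product Q ⋊ (F ⋊ H) over a field whose characteristic is coprime to |Q||H|. If C_Q(F) = 1, then Ker(C_Q(H) on C_V(H)) = Ker(C_Q(H) on V). -/

import Mathlib

/-!
The inclusion of `C_V(H)` in `V` gives one direction. For the other, let `x ∈ C_Q(H)` act trivially
on `C_V(H)`; it is to be shown that `x` acts trivially on `V`. If `H = 1` then `C_V(H) = V`.

**Nilpotency of the kernel.** If `H ≠ 1`, an element of prime order of `H` acts fixed-point-freely
on `F`, so `F` is nilpotent by Thompson's theorem (`allNil_of_fpf`). Nilpotency is expressed here as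
`p`-nilpotency for all primes `p`, and `p`-nilpotency by the condition that products of `p`-regular
elements are `p`-regular. The theorem follows by induction from Thompson's normal `p`-complement
theorem for odd `p` (`thompson`) and from a computation with traces (`smul_pow_card`), which
provides a nontrivial centre once there is an abelian invariant normal subgroup of prime power
order. Thompson's criterion is in turn derived from that of Frobenius (`LocPNilpotent.pNilpotent`): a
minimal counterexample reduces to the configuration `TConfig`, where the centre or the Thompson
subgroup of a Sylow `p`-subgroup is normal (`TConfig.normal_or_normal`); this uses
the replacement theorem (`replacement`) and quadratic action (`quadratic_group`).

**Reductions.** The subgroup `F` may be replaced by its normal `q`-complement, which still has no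
nontrivial fixed point on `Q` (`eq_one_of_isReg_fixed`). Scalars may be extended to an algebraic
closure, and `V` replaced by a finite-dimensional submodule (`eq_of_eq_on_repFixed`).

**The induction** (`ActConfig.trivial`). Decompose `V` into weight spaces of the subgroup `Z` of the
elements of `Q` that act centrally. On `C_V(Z)` the group `Q` acts with a larger kernel. If `F`
fixes the weight `χ`, then `[Z, F]` is trivial on the weight space, and so is `Z`, since fixed
points lift under coprime action (`exists_fixed_mem_coset`). If the stabiliser of `χ` in `H` is
trivial, then averaging over `H` shows that `x` is trivial on the weight space
(`eq_of_fixed_by_stab`). Otherwise every other weight in the orbit `F χ` has trivial stabiliser in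
`H` (`stab_trivial`), so that `x` is trivial on all the weight spaces of this orbit except possibly
that of `χ`. There the stabilisers of `χ` in `F` and `H`, together with the subgroup of `Q`
generated by the conjugates of `x` under the former, are again in the inductive situation, with a
smaller `F`: an element of this subgroup centralised by the stabiliser of `χ` in `F` can be spread
over the orbit `F χ` to an element of `Q` whose action commutes with `F` (`exists_glue`), and such an
element acts trivially because `C_Q(F) = 1`.
-/

/-- The submodule of fixed points of a subgroup under a representation. -/
def repFixed {k A V : Type*} [CommRing k] [Group A] [AddCommGroup V] [Module k V]
    (ρ : Representation k A V) (S : Subgroup A) : Submodule k V where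
  carrier := {v | ∀ x ∈ S, ρ x v = v}
  zero_mem' := by intro x _; simp
  add_mem' := by intro a b ha hb x hx; simp [map_add, ha x hx, hb x hx]
  smul_mem' := by intro c v hv x hx; simp [map_smul, hv x hx]

universe u

/-! ### `p`-regular elements and `p`-nilpotent groups -/

/-- `IsReg p x`: the element `x` is `p`-regular, i.e. its order is prime to `p`. -/
def IsReg (p : ℕ) {G : Type*} [Group G] (x : G) : Prop := p.Coprime (orderOf x)

/-- `PNilpotent p G`: products of `p`-regular elements are `p`-regular. For a finite group `G` and
a prime `p` this says that the `p`-regular elements form a normal `p`-complement. -/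
def PNilpotent (p : ℕ) (G : Type*) [Group G] : Prop :=
  ∀ x y : G, IsReg p x → IsReg p y → IsReg p (x * y)

section Reg

variable {p : ℕ} {G G' : Type*} [Group G] [Group G']

lemma IsReg.of_pow {x : G} {n : ℕ} (hn : p.Coprime n) (h : x ^ n = 1) : IsReg p x :=
  Nat.Coprime.coprime_dvd_right (orderOf_dvd_of_pow_eq_one h) hn

lemma IsReg.map (φ : G →* G') {x : G} (h : IsReg p x) : IsReg p (φ x) :=
  Nat.Coprime.coprime_dvd_right (orderOf_map_dvd φ x) h

lemma IsReg.one : IsReg p (1 : G) := by simp [IsReg]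

lemma IsReg.inv {x : G} (h : IsReg p x) : IsReg p x⁻¹ := by simpa [IsReg] using h

lemma IsReg.pow {x : G} (h : IsReg p x) (n : ℕ) : IsReg p (x ^ n) :=
  Nat.Coprime.coprime_dvd_right (orderOf_pow_dvd n) h

lemma isReg_map_iff (φ : G →* G') (hφ : Function.Injective φ) {x : G} :
    IsReg p (φ x) ↔ IsReg p x := by
  simp [IsReg, orderOf_injective φ hφ]

lemma isReg_conj_iff (g : G) {x : G} : IsReg p (g * x * g⁻¹) ↔ IsReg p x := by
  have := isReg_map_iff (p := p) (MulAut.conj g).toMonoidHom (MulAut.conj g).injective (x := x)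
  simpa using this

lemma isReg_coe_iff {S : Subgroup G} {x : S} : IsReg p (x : G) ↔ IsReg p x :=
  isReg_map_iff S.subtype S.subtype_injective

/-- An element that is both of `p`-power order and `p`-regular is trivial. -/
lemma IsReg.eq_one_of_pow {x : G} (h : IsReg p x) {k : ℕ} (hk : x ^ p ^ k = 1) : x = 1 := by
  have h1 : orderOf x ∣ p ^ k := orderOf_dvd_of_pow_eq_one hk
  have h2 : (p ^ k).Coprime (orderOf x) := Nat.Coprime.pow_left k h
  exact orderOf_eq_one_iff.mp (Nat.eq_one_of_dvd_coprimes h2 h1 dvd_rfl)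

lemma IsReg.eq_one_of_mem {D : Subgroup G} (hD : IsPGroup p D) {x : G} (h : IsReg p x)
    (hx : x ∈ D) : x = 1 := by
  obtain ⟨k, hk⟩ := hD ⟨x, hx⟩
  exact h.eq_one_of_pow (by simpa [Subtype.ext_iff] using hk)

/-- Every element has a `p`-regular power with exponent a power of `p`. -/
lemma exists_isReg_pow [Finite G] (hp : p.Prime) (x : G) : ∃ k, IsReg p (x ^ p ^ k) := by
  obtain ⟨k, m, hm, h⟩ := Nat.exists_eq_pow_mul_and_not_dvd (orderOf_pos x).ne' p hp.ne_one
  refine ⟨k, IsReg.of_pow (n := m) ((hp.coprime_iff_not_dvd).2 hm) ?_⟩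
  rw [← pow_mul, ← h, pow_orderOf_eq_one]

lemma isReg_of_map [Finite G] (hp : p.Prime) (φ : G →* G') (x : G) (h : IsReg p (φ x)) :
    ∃ y, IsReg p y ∧ φ y = φ x := by
  obtain ⟨k, m, hm, hk⟩ := Nat.exists_eq_pow_mul_and_not_dvd (orderOf_pos x).ne' p hp.ne_one
  have hc : (p ^ k).Coprime m := Nat.Coprime.pow_left k ((hp.coprime_iff_not_dvd).2 hm)
  obtain ⟨u, hu1, hu2⟩ := Nat.chineseRemainder hc 0 1
  refine ⟨x ^ u, IsReg.of_pow (n := m) ((hp.coprime_iff_not_dvd).2 hm) ?_, ?_⟩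
  · have : p ^ k ∣ u := (Nat.modEq_zero_iff_dvd).1 hu1
    rw [← pow_mul]
    apply orderOf_dvd_iff_pow_eq_one.1
    rw [hk]; exact Nat.mul_dvd_mul_right this m
  · have h1 : orderOf (φ x) ∣ m := by
      have : orderOf (φ x) ∣ p ^ k * m := hk ▸ orderOf_map_dvd φ x
      exact Nat.Coprime.dvd_of_dvd_mul_left (Nat.Coprime.pow_left k h).symm this
    have h2 : u ≡ 1 [MOD orderOf (φ x)] := hu2.of_dvd h1
    rw [map_pow]
    simpa using (pow_eq_pow_iff_modEq).2 h2

lemma PNilpotent.of_injective (φ : G →* G') (hφ : Function.Injective φ) (h : PNilpotent p G') :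
    PNilpotent p G := by
  intro x y hx hy
  rw [← isReg_map_iff φ hφ, map_mul]
  exact h _ _ (hx.map φ) (hy.map φ)

lemma PNilpotent.of_surjective [Finite G] (hp : p.Prime) (φ : G →* G')
    (hφ : Function.Surjective φ) (h : PNilpotent p G) : PNilpotent p G' := by
  intro x y hx hy
  obtain ⟨x, rfl⟩ := hφ x
  obtain ⟨y, rfl⟩ := hφ y
  obtain ⟨x', h1, h1'⟩ := isReg_of_map hp φ x hx
  obtain ⟨y', h2, h2'⟩ := isReg_of_map hp φ y hy
  rw [← h1', ← h2', ← map_mul]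
  exact (h _ _ h1 h2).map φ

lemma PNilpotent.mono {S T : Subgroup G} (hST : S ≤ T) (h : PNilpotent p T) : PNilpotent p S :=
  h.of_injective (Subgroup.inclusion hST) (Subgroup.inclusion_injective hST)

lemma PNilpotent.subgroup (h : PNilpotent p G) (S : Subgroup G) : PNilpotent p S :=
  h.of_injective S.subtype S.subtype_injective

lemma pNilpotent_top_iff : PNilpotent p (⊤ : Subgroup G) ↔ PNilpotent p G :=
  ⟨fun h => h.of_injective (Subgroup.topEquiv (G := G)).symm.toMonoidHom
      (Subgroup.topEquiv (G := G)).symm.injective,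
    fun h => h.subgroup _⟩

/-- Being `p`-nilpotent for a subgroup, in terms of elements of the ambient group. -/
lemma pNilpotent_subgroup_iff {S : Subgroup G} : PNilpotent p S ↔
    ∀ x ∈ S, ∀ y ∈ S, IsReg p x → IsReg p y → IsReg p (x * y) := by
  constructor
  · intro h x hx y hy h1 h2
    have := h ⟨x, hx⟩ ⟨y, hy⟩ (isReg_coe_iff.1 h1) (isReg_coe_iff.1 h2)
    exact isReg_coe_iff.2 this
  · intro h x y h1 h2
    exact isReg_coe_iff.1 (h x x.2 y y.2 (isReg_coe_iff.2 h1) (isReg_coe_iff.2 h2))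

lemma IsPGroup.pNilpotent (h : IsPGroup p G) : PNilpotent p G := by
  intro x y hx hy
  obtain ⟨k, hk⟩ := h x
  obtain ⟨l, hl⟩ := h y
  rw [hx.eq_one_of_pow hk, hy.eq_one_of_pow hl, one_mul]
  exact IsReg.one

/-- Regularity can be tested modulo a normal subgroup consisting of regular elements. -/
lemma isReg_of_quotient {N : Subgroup G} [N.Normal] (hN : ∀ x ∈ N, IsReg p x) {x : G}
    (hx : IsReg p (x : G ⧸ N)) : IsReg p x := by
  set n := orderOf (x : G ⧸ N) with hn
  have h1 : x ^ n ∈ N := by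
    rw [← QuotientGroup.eq_one_iff, QuotientGroup.mk_pow, hn, pow_orderOf_eq_one]
  refine IsReg.of_pow (n := n * orderOf (x ^ n)) (Nat.Coprime.mul_right hx (hN _ h1)) ?_
  rw [pow_mul, pow_orderOf_eq_one]

lemma PNilpotent.of_quotient {N : Subgroup G} [N.Normal] (hN : ∀ x ∈ N, IsReg p x)
    (h : PNilpotent p (G ⧸ N)) : PNilpotent p G := by
  intro x y hx hy
  apply isReg_of_quotient hN
  rw [QuotientGroup.mk_mul]
  exact h _ _ (hx.map (QuotientGroup.mk' N)) (hy.map (QuotientGroup.mk' N))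

/-- The subgroup of `p`-regular elements of a `p`-nilpotent group: its normal `p`-complement. -/
def PNilpotent.compl (h : PNilpotent p G) : Subgroup G where
  carrier := {x | IsReg p x}
  one_mem' := IsReg.one
  mul_mem' := fun ha hb => h _ _ ha hb
  inv_mem' := fun ha => IsReg.inv ha

lemma PNilpotent.mem_compl (h : PNilpotent p G) {x : G} : x ∈ h.compl ↔ IsReg p x := Iff.rfl

instance PNilpotent.compl_normal (h : PNilpotent p G) : h.compl.Normal :=
  ⟨fun _ hn g => (isReg_conj_iff g).2 hn⟩

/-- A group of order prime to `p` has only `p`-regular elements. -/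
lemma isReg_of_card (h : p.Coprime (Nat.card G)) (x : G) : IsReg p x :=
  Nat.Coprime.coprime_dvd_right (orderOf_dvd_natCard x) h

lemma coprime_card_of_isReg [Finite G] (hp : p.Prime) (h : ∀ x : G, IsReg p x) :
    p.Coprime (Nat.card G) := by
  rw [hp.coprime_iff_not_dvd]
  intro hd
  have := Fact.mk hp
  obtain ⟨x, hx⟩ := exists_prime_orderOf_dvd_card' p hd
  have := h x
  rw [IsReg, hx, Nat.coprime_self] at this
  exact hp.ne_one this

/-- If only the identity is `p`-regular then `G` is a `p`-group. -/
lemma isPGroup_of_isReg_eq_one [Finite G] (hp : p.Prime) (h : ∀ x : G, IsReg p x → x = 1) :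
    IsPGroup p G := fun x => by
  obtain ⟨k, hk⟩ := exists_isReg_pow hp x
  exact ⟨k, h _ hk⟩

/-- The local condition of Frobenius: `p`-regular elements centralise the `p`-subgroups that they
normalise. -/
def LocPNilpotent (p : ℕ) (G : Type*) [Group G] : Prop :=
  ∀ D : Subgroup G, IsPGroup p D → ∀ g, IsReg p g → (∀ d, d ∈ D ↔ g * d * g⁻¹ ∈ D) →
    ∀ d ∈ D, g * d * g⁻¹ = d

lemma PNilpotent.loc (h : PNilpotent p G) : LocPNilpotent p G := by
  intro D hD g hg hn d hd
  have h1 : g * d * g⁻¹ * d⁻¹ ∈ D := D.mul_mem ((hn d).1 hd) (D.inv_mem hd)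
  have h2 : IsReg p (g * (d * g⁻¹ * d⁻¹)) := h _ _ hg ((isReg_conj_iff d).2 hg.inv)
  have h3 : g * d * g⁻¹ * d⁻¹ = 1 := IsReg.eq_one_of_mem hD (by simpa [mul_assoc] using h2) h1
  exact mul_inv_eq_one.1 h3

lemma LocPNilpotent.of_injective (φ : G →* G') (hφ : Function.Injective φ)
    (h : LocPNilpotent p G') : LocPNilpotent p G := by
  intro D hD g hg hn d hd
  apply hφ
  rw [map_mul, map_mul, map_inv]
  refine h (D.map φ) (hD.map φ) (φ g) (hg.map φ) ?_ (φ d) ⟨d, hd, rfl⟩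
  intro x
  constructor
  · rintro ⟨y, hy, rfl⟩
    exact ⟨g * y * g⁻¹, (hn y).1 hy, by simp⟩
  · rintro ⟨y, hy, hyx⟩
    refine ⟨g⁻¹ * y * g, ?_, ?_⟩
    · rw [SetLike.mem_coe, hn]; simpa [mul_assoc] using hy
    · rw [map_mul, map_mul, hyx]; simp [mul_assoc]

/-- If all normalisers of nontrivial `p`-subgroups are `p`-nilpotent, the local condition holds. -/
lemma locPNilpotent_of_normalizer
    (h : ∀ D : Subgroup G, IsPGroup p D → D ≠ ⊥ → PNilpotent p (Subgroup.normalizer (D : Set G))) :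
    LocPNilpotent p G := by
  intro D hD g hg hn d hd
  by_cases hb : D = ⊥
  · subst hb
    rw [Subgroup.mem_bot] at hd
    simp [hd]
  have hl := (h D hD hb).loc
  have hgN : g ∈ Subgroup.normalizer (D : Set G) := Subgroup.mem_normalizer_iff.2 hn
  have hDN : D ≤ Subgroup.normalizer (D : Set G) := Subgroup.le_normalizer
  have := hl (D.subgroupOf _) (hD.of_injective (Subgroup.subgroupOfEquivOfLe hDN).toMonoidHom
    (Subgroup.subgroupOfEquivOfLe hDN).injective) ⟨g, hgN⟩ (isReg_coe_iff.1 hg)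
    (fun d => by simpa [Subgroup.mem_subgroupOf] using hn d) ⟨d, hDN hd⟩ hd
  simpa [Subtype.ext_iff] using this

end Reg

/-! ### Frobenius' criterion for `p`-nilpotency -/

section Frobenius

variable {p : ℕ} {G : Type*} [Group G]

/-- Normalisers grow in `p`-groups. -/
lemma exists_mem_normalizer_not_mem [Finite G] [Fact p.Prime] {P D : Subgroup G}
    (hP : IsPGroup p P) (hD : D < P) :
    ∃ x ∈ P, x ∉ D ∧ x ∈ Subgroup.normalizer (D : Set G) := by
  have := hP.isNilpotent
  have hc := Group.normalizerCondition_of_isNilpotent (G := P)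
  have h1 : D.subgroupOf P < ⊤ := by
    rw [lt_top_iff_ne_top, Ne, Subgroup.subgroupOf_eq_top]
    exact hD.not_ge
  obtain ⟨x, hx, hx'⟩ := SetLike.exists_of_lt (hc _ h1)
  refine ⟨x, x.2, hx', ?_⟩
  rw [Subgroup.mem_normalizer_iff] at hx ⊢
  intro d
  constructor
  · intro hd
    exact (hx ⟨d, hD.le hd⟩).1 hd
  · intro hd
    have hdP : d ∈ P := by
      have := P.mul_mem (P.mul_mem (P.inv_mem x.2) (hD.le hd)) x.2
      simpa [mul_assoc] using this
    exact (hx ⟨d, hdP⟩).2 hd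

/-- Under the local condition, the normaliser of a `p`-subgroup `D` is the product of the
centraliser of `D` and a Sylow `p`-subgroup. -/
lemma LocPNilpotent.factor [Finite G] [hp : Fact p.Prime] (h : LocPNilpotent p G) {D : Subgroup G}
    (hD : IsPGroup p D) {N : Subgroup G} (hN : N = Subgroup.normalizer (D : Set G))
    (S : Sylow p N) (n : N) :
    ∃ c s : N, (∀ d ∈ D, (c : G) * d * (c : G)⁻¹ = d) ∧ s ∈ S ∧
      n = c * s := by
  let C : Subgroup N := (Subgroup.centralizer (D : Set G)).subgroupOf N
  have hCmem : ∀ c : N, c ∈ C ↔ ∀ d ∈ D, (c : G) * d * (c : G)⁻¹ = d := by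
    intro c
    rw [Subgroup.mem_subgroupOf, Subgroup.mem_centralizer_iff]
    refine forall₂_congr fun d _ => ?_
    rw [mul_inv_eq_iff_eq_mul]; exact eq_comm
  have hCn : C.Normal := by
    constructor
    intro c hc g
    rw [hCmem] at hc ⊢
    intro d hd
    have hg := Subgroup.mem_normalizer_iff.1 (hN.le g.2) ((g : G)⁻¹ * d * g)
    have h1 : (g : G)⁻¹ * d * g ∈ D := hg.2 (by simpa [mul_assoc] using hd)
    have h2 := hc _ h1
    have : ((g * c * g⁻¹ : N) : G) * d * ((g * c * g⁻¹ : N) : G)⁻¹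
      = g * (c * ((g : G)⁻¹ * d * g) * (c : G)⁻¹) * (g : G)⁻¹ := by
      simp [mul_assoc]
    rw [this, h2]; simp [mul_assoc]
  have hQ : IsPGroup p (N ⧸ C) := by
    intro x
    obtain ⟨x, rfl⟩ := QuotientGroup.mk_surjective x
    obtain ⟨k, hk⟩ := exists_isReg_pow hp.out (x : G)
    refine ⟨k, ?_⟩
    rw [← QuotientGroup.mk_pow, QuotientGroup.eq_one_iff, hCmem]
    have := hN.le (x ^ p ^ k).2
    rw [Subgroup.mem_normalizer_iff] at this
    exact h D hD _ (by simpa using hk) this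
  have htop : C ⊔ (S : Subgroup N) = ⊤ := by
    obtain ⟨m, hm⟩ := IsPGroup.iff_card.1 hQ
    have h1 : (C ⊔ (S : Subgroup N)).index ∣ p ^ m := by
      rw [← hm]; exact Subgroup.index_dvd_of_le le_sup_left
    have h2 : (C ⊔ (S : Subgroup N)).index ∣ (S : Subgroup N).index :=
      Subgroup.index_dvd_of_le le_sup_right
    have h3 : (p ^ m).Coprime (S : Subgroup N).index :=
      Nat.Coprime.pow_left m ((hp.out.coprime_iff_not_dvd).2 S.not_dvd_index)
    rw [← Subgroup.index_eq_one]
    exact Nat.eq_one_of_dvd_coprimes h3 h1 h2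
  have hn : n ∈ C ⊔ (S : Subgroup N) := htop ▸ Subgroup.mem_top n
  obtain ⟨c, hc, s, hs, rfl⟩ := Subgroup.mem_sup_of_normal_left.1 hn
  exact ⟨c, s, (hCmem c).1 hc, hs, rfl⟩

/-- Under the local condition, two Sylow `p`-subgroups are conjugate by an element which
centralises their intersection. -/
lemma LocPNilpotent.fusion [Finite G] [hp : Fact p.Prime] (h : LocPNilpotent p G) :
    ∀ (n : ℕ) (P Q : Sylow p G), Nat.card G - Nat.card (P ⊓ Q : Subgroup G) = n →
    ∃ c : G, (∀ d ∈ (P ⊓ Q : Subgroup G), c * d * c⁻¹ = d) ∧ c • P = Q := by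
  intro n
  induction n using Nat.strong_induction_on with
  | _ n ih =>
  intro P Q hn
  by_cases hPQ : P = Q
  · exact ⟨1, by simp, by simpa using hPQ⟩
  set D : Subgroup G := (P ⊓ Q : Subgroup G) with hDdef
  have hDP : D < P := lt_of_le_of_ne inf_le_left fun e =>
    hPQ (Sylow.ext (P.3 Q.2 (inf_eq_left.1 e)).symm)
  have hDQ : D < Q := lt_of_le_of_ne inf_le_right fun e =>
    hPQ (Sylow.ext (Q.3 P.2 (inf_eq_right.1 e)))
  have hD : IsPGroup p D := P.2.to_le inf_le_left
  set N := Subgroup.normalizer (D : Set G) with hN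
  have key : ∀ R : Sylow p G, D < R → ∃ S : Sylow p N, ∀ T : Sylow p G, (∀ s ∈ S, (s : G) ∈ T) →
      D < (R ⊓ T : Subgroup G) := by
    intro R hR
    have h1 : IsPGroup p ((R : Subgroup G).subgroupOf N) := by
      have : IsPGroup p (((R : Subgroup G).subgroupOf N).map N.subtype) :=
        R.2.to_le (by rw [Subgroup.subgroupOf_map_subtype]; exact inf_le_left)
      exact this.of_injective (((R : Subgroup G).subgroupOf N).equivMapOfInjective _
        N.subtype_injective).toMonoidHom (MulEquiv.injective _)
    obtain ⟨S, hS⟩ := h1.exists_le_sylow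
    refine ⟨S, fun T hT => ?_⟩
    obtain ⟨x, hx, hxD, hxN⟩ := exists_mem_normalizer_not_mem R.2 hR
    have hT' : ∀ y ∈ R, y ∈ N → y ∈ T := fun y hy hyN => hT ⟨y, hyN⟩ (hS hy)
    refine lt_of_le_of_ne (le_inf hR.le fun d hd => hT' d (hR.le hd) (Subgroup.le_normalizer hd)) ?_
    intro e
    apply hxD
    rw [e]
    exact ⟨hx, hT' x hx hxN⟩
  have hcard : ∀ E : Subgroup G, D < E → Nat.card G - Nat.card E < n := by
    intro E hE
    have h1 : Nat.card D < Nat.card E := by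
      apply Nat.lt_of_le_of_ne (Subgroup.card_le_of_le hE.le)
      intro e
      exact hE.ne (Subgroup.eq_of_le_of_card_ge hE.le e.ge)
    have h2 := Subgroup.card_le_card_group E
    omega
  obtain ⟨S1, hS1⟩ := key P hDP
  obtain ⟨S2, hS2⟩ := key Q hDQ
  obtain ⟨m, hm⟩ := MulAction.exists_smul_eq N S1 S2
  obtain ⟨c, s, hc, hs, rfl⟩ := h.factor hD hN S1 m
  have hs1 : s • S1 = S1 := Sylow.smul_eq_iff_mem_normalizer.2 (Subgroup.le_normalizer hs)
  rw [mul_smul, hs1] at hm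
  have hS1p : IsPGroup p ((S1 : Subgroup N).map N.subtype) := S1.2.map _
  obtain ⟨R, hR⟩ := hS1p.exists_le_sylow
  have hPR := hS1 R fun s hs => hR ⟨s, hs, rfl⟩
  have hQR := hS2 ((c : G) • R) (by
    intro s hs
    rw [← hm] at hs
    change s ∈ ((c • S1 : Sylow p N) : Subgroup N) at hs
    rw [Sylow.coe_subgroup_smul, Subgroup.mem_pointwise_smul_iff_inv_smul_mem] at hs
    change (s : G) ∈ (((c : G) • R : Sylow p G) : Subgroup G)
    rw [Sylow.coe_subgroup_smul, Subgroup.mem_pointwise_smul_iff_inv_smul_mem]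
    have := hR ⟨_, hs, rfl⟩
    simpa using this)
  obtain ⟨c1, hc1, hc1'⟩ := ih _ (hcard _ hPR) P R rfl
  obtain ⟨c2, hc2, hc2'⟩ := ih _ (hcard _ hQR) ((c : G) • R) Q
    (by rw [inf_comm])
  refine ⟨c2 * c * c1, ?_, by rw [mul_smul, mul_smul, hc1', hc2']⟩
  intro d hd
  have e1 := hc1 d (hPR.le hd)
  have e2 := hc d hd
  have e3 := hc2 d (by rw [inf_comm]; exact hQR.le hd)
  calc c2 * c * c1 * d * (c2 * c * c1)⁻¹ = c2 * (c * (c1 * d * c1⁻¹) * (c : G)⁻¹) * c2⁻¹ := by group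
    _ = d := by rw [e1, e2, e3]

open scoped commutatorElement in
/-- Under the local condition the focal subgroup of a Sylow `p`-subgroup is its derived group. -/
lemma LocPNilpotent.focal [Finite G] [hp : Fact p.Prime] (h : LocPNilpotent p G) (P : Sylow p G) :
    (P : Subgroup G).focalSubgroup ≤ ⁅(P : Subgroup G), (P : Subgroup G)⁆ := by
  rw [Subgroup.focalSubgroup_def, Subgroup.closure_le]
  rintro g ⟨hg, x, hx, u, rfl⟩
  have hy : u * x * u⁻¹ ∈ (P : Subgroup G) := by
    have := (P : Subgroup G).inv_mem ((P : Subgroup G).mul_mem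
      ((P : Subgroup G).inv_mem hx) hg)
    simpa [commutatorElement_def, mul_assoc] using this
  obtain ⟨c, hc, hcP⟩ := h.fusion _ P (u⁻¹ • P) rfl
  have hcx : c * x * c⁻¹ = x := by
    apply hc
    refine ⟨hx, ?_⟩
    change x ∈ ((u⁻¹ • P : Sylow p G) : Subgroup G)
    rw [Sylow.coe_subgroup_smul, Subgroup.mem_pointwise_smul_iff_inv_smul_mem]
    simpa using hy
  have hn : u * c ∈ Subgroup.normalizer ((P : Subgroup G) : Set G) := by
    exact Sylow.smul_eq_iff_mem_normalizer.1 (by rw [mul_smul, hcP, smul_inv_smul])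
  obtain ⟨e, s, he, hs, hes⟩ := h.factor P.2 rfl (P.subtype Subgroup.le_normalizer) ⟨u * c, hn⟩
  have hs' : (s : G) ∈ (P : Subgroup G) := hs
  have hes' : u * c = e * s := congrArg Subtype.val hes
  have h1 : u * x * u⁻¹ = s * x * (s : G)⁻¹ := by
    have h2 := he (s * x * (s : G)⁻¹) (mul_mem (mul_mem hs' hx) (inv_mem hs'))
    calc u * x * u⁻¹ = u * (c * x * c⁻¹) * u⁻¹ := by rw [hcx]
      _ = (u * c) * x * (u * c)⁻¹ := by group
      _ = e * (s * x * (s : G)⁻¹) * (e : G)⁻¹ := by rw [hes']; group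
      _ = _ := h2
  have h3 : ⁅x, u⁆ = ⁅x, (s : G)⁆ := by
    have h4 : u * x⁻¹ * u⁻¹ = s * x⁻¹ * (s : G)⁻¹ := by
      have := congrArg (·⁻¹) h1
      simpa [mul_assoc] using this
    calc ⁅x, u⁆ = x * (u * x⁻¹ * u⁻¹) := by rw [commutatorElement_def]; group
      _ = _ := by rw [h4, commutatorElement_def]; group
  rw [h3]
  exact Subgroup.commutator_mem_commutator hx hs'

/-- **Frobenius' normal `p`-complement theorem.** -/
theorem LocPNilpotent.pNilpotent (hp : p.Prime) : ∀ (n : ℕ) (G : Type u) [Group G] [Finite G],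
    Nat.card G = n → LocPNilpotent p G → PNilpotent p G := by
  have := Fact.mk hp
  intro n
  induction n using Nat.strong_induction_on with
  | _ n ih =>
  intro G _ _ hn h
  obtain ⟨P⟩ : Nonempty (Sylow p G) := inferInstance
  by_cases hP : (P : Subgroup G) = ⊥
  · have hd : ¬ p ∣ Nat.card G := fun hd => P.ne_bot_of_dvd_card hd hP
    exact fun x y _ _ => isReg_of_card ((hp.coprime_iff_not_dvd).2 hd) _
  have hPnt : Nontrivial P := (Subgroup.nontrivial_iff_ne_bot _).2 hP
  have hf : (P : Subgroup G).focalSubgroupOf ≠ ⊤ := by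
    intro e
    have h1 : (P : Subgroup G).focalSubgroupOf ≤ commutator P := by
      rw [Subgroup.focalSubgroupOf_def]
      intro x hx
      have h2 := h.focal P (Subgroup.mem_subgroupOf.1 hx)
      rw [← Subgroup.map_subtype_commutator] at h2
      obtain ⟨y, hy, hyx⟩ := h2
      have : y = x := Subtype.ext hyx
      exact this ▸ hy
    have := P.2.isNilpotent
    have h2 := Group.IsSolvable.commutator_lt_top_of_nontrivial P
    rw [e] at h1
    exact h2.not_ge h1
  set φ := (P : Subgroup G).transferFocal with hφ
  have hker : φ.ker ≠ ⊤ := by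
    intro e
    apply hf
    rw [eq_top_iff]
    intro x _
    obtain ⟨g, hg⟩ := Subgroup.transferFocal_surjective P (x : P ⧸ (P : Subgroup G).focalSubgroupOf)
    have hg' : g ∈ φ.ker := e ▸ Subgroup.mem_top g
    rw [MonoidHom.mem_ker] at hg'
    rw [← QuotientGroup.eq_one_iff, ← hg]
    exact hg'
  have hlt : Nat.card φ.ker < n := by
    rw [← hn]
    apply Nat.lt_of_le_of_ne (Subgroup.card_le_card_group _)
    intro e
    exact hker (Subgroup.eq_top_of_card_eq _ e)
  have hkn := ih _ hlt φ.ker rfl (h.of_injective φ.ker.subtype φ.ker.subtype_injective)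
  rw [pNilpotent_subgroup_iff] at hkn
  have hreg : ∀ x : G, IsReg p x → x ∈ φ.ker := by
    intro x hx
    obtain ⟨k, hk⟩ := P.2.to_quotient (P : Subgroup G).focalSubgroupOf (φ x)
    exact (hx.map φ).eq_one_of_pow hk
  exact fun x y hx hy => hkn x (hreg x hx) y (hreg y hy) hx hy

end Frobenius

/-! ### Invariant Sylow subgroups, products of subgroups, replacement and quadratic action -/

open scoped Pointwise in
/-- A `p`-group acting on a group `K` of order prime to `p` leaves a Sylow `s`-subgroup invariant,
for each prime `s`. -/
lemma exists_invariant_sylow {p s : ℕ} (hp : p.Prime) (hs : s.Prime) {Γ K : Type*} [Group Γ]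
    [Group K] [Finite K] [MulDistribMulAction Γ K] (hΓ : IsPGroup p Γ)
    (hK : ¬ p ∣ Nat.card K) : ∃ S : Sylow s K, ∀ γ : Γ, ∀ x ∈ S, γ • x ∈ S := by
  have := Fact.mk hp
  have := Fact.mk hs
  obtain ⟨S0⟩ : Nonempty (Sylow s K) := inferInstance
  obtain ⟨S, hS⟩ := hΓ.nonempty_fixed_point_of_prime_not_dvd_card (Sylow s K)
    (fun h => hK ((h.trans S0.card_dvd_index).trans (Subgroup.index_dvd_card _)))
  refine ⟨S, fun γ x hx => ?_⟩
  have h1 : γ • (S : Subgroup K) = S := by rw [← Sylow.pointwise_smul_def, hS γ]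
  change γ • x ∈ (S : Subgroup K)
  rw [← h1]
  exact Subgroup.smul_mem_pointwise_smul _ _ _ hx

section Products

variable {G : Type*} [Group G]

lemma card_sup_mul_card_inf [Finite G] {A K : Subgroup G}
    (h : K ≤ Subgroup.normalizer (A : Set G)) :
    Nat.card (A ⊔ K : Subgroup G) * Nat.card (A ⊓ K : Subgroup G) = Nat.card A * Nat.card K := by
  set M := Subgroup.normalizer (A : Set G) with hM
  have hAM : A ≤ M := Subgroup.le_normalizer
  have h0 : (A.subgroupOf M).Normal := Subgroup.normal_in_normalizer
  have h1 : A.relIndex (A ⊔ K) = A.relIndex K := by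
    have := Subgroup.relIndex_sup_left (K.subgroupOf M) (A.subgroupOf M)
    rw [← Subgroup.subgroupOf_sup hAM h] at this
    rwa [Subgroup.relIndex_subgroupOf (sup_le hAM h), Subgroup.relIndex_subgroupOf h] at this
  have h2 : Nat.card A * A.relIndex (A ⊔ K) = Nat.card (A ⊔ K : Subgroup G) := by
    have := Subgroup.relIndex_mul_relIndex ⊥ A (A ⊔ K) bot_le le_sup_left
    simpa [Subgroup.relIndex_bot_left] using this
  have h3 : Nat.card (A ⊓ K : Subgroup G) * A.relIndex K = Nat.card K := by
    have := Subgroup.relIndex_mul_relIndex ⊥ (A ⊓ K) K bot_le inf_le_right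
    simpa [Subgroup.relIndex_bot_left, Subgroup.inf_relIndex_right] using this
  rw [← h2, ← h3, h1]; ring

lemma mem_normalizer_of_forall [Finite G] {A : Subgroup G} {x : G}
    (h : ∀ a ∈ A, x * a * x⁻¹ ∈ A) : x ∈ Subgroup.normalizer (A : Set G) := by
  have h1 : A.map (MulAut.conj x).toMonoidHom = A := by
    apply Subgroup.eq_of_le_of_card_ge
    · rintro _ ⟨a, ha, rfl⟩
      simpa using h a ha
    · exact (Nat.card_congr (A.equivMapOfInjective _ (MulAut.conj x).injective).toEquiv).le
  rw [Subgroup.mem_normalizer_iff]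
  intro a
  refine ⟨h a, fun ha => ?_⟩
  rw [← h1] at ha
  obtain ⟨b, hb, hbe⟩ := ha
  have : b = a := by
    have h2 : x * b * x⁻¹ = x * a * x⁻¹ := by simpa using hbe
    simpa using h2
  exact this ▸ hb

/-- **Replacement theorem.** Let `A` be an abelian subgroup of maximal order of the `p`-group `P`
and let `B` be an abelian subgroup of `P` normalised by `A` but not normalising `A`. Then there is
another abelian subgroup `A'` of maximal order which normalises `A` and meets `B` in a larger
subgroup than `A` does. -/
lemma replacement [Finite G] {p : ℕ} [Fact p.Prime] {P A B : Subgroup G} (hP : IsPGroup p P)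
    (hA : A ≤ P) (hAc : ∀ a ∈ A, ∀ b ∈ A, a * b = b * a)
    (hB : B ≤ P) (hBc : ∀ a ∈ B, ∀ b ∈ B, a * b = b * a)
    (hAB : ∀ a ∈ A, ∀ b ∈ B, a * b * a⁻¹ ∈ B)
    (hBA : ¬ B ≤ Subgroup.normalizer (A : Set G)) :
    ∃ A' : Subgroup G, A' ≤ P ∧ (∀ a ∈ A', ∀ b ∈ A', a * b = b * a) ∧ Nat.card A' = Nat.card A ∧
      A' ≤ Subgroup.normalizer (A : Set G) ∧ A ⊓ B < A' ⊓ B := by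
  set M := Subgroup.normalizer (A : Set G) with hM
  set N : Subgroup G := B ⊓ M with hN
  have hAM : A ≤ M := Subgroup.le_normalizer
  -- `A` normalises `N`, hence `A ⊔ N = A * N`
  have hNM : N ≤ M := inf_le_right
  have memAN : ∀ y, y ∈ A ⊔ N → ∃ a ∈ A, ∃ b ∈ N, a * b = y := by
    intro y hy
    have h0 : (A.subgroupOf M).Normal := Subgroup.normal_in_normalizer
    have hyM : y ∈ M := sup_le hAM hNM hy
    have hy' : (⟨y, hyM⟩ : M) ∈ A.subgroupOf M ⊔ N.subgroupOf M := by
      rw [← Subgroup.subgroupOf_sup hAM hNM]; exact hy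
    obtain ⟨a, ha, b, hb, e⟩ := Subgroup.mem_sup_of_normal_left.1 hy'
    exact ⟨a, ha, b, hb, congrArg Subtype.val e⟩
  have hlt : A ⊔ N < A ⊔ B := by
    refine lt_of_le_of_ne (sup_le_sup_left inf_le_left _) fun e => hBA ?_
    exact le_sup_right.trans (e ▸ sup_le hAM hNM)
  obtain ⟨y, hy, hyN, hyn⟩ := exists_mem_normalizer_not_mem (hP.to_le (sup_le hA hB)) hlt
  -- reduce to an element of `B`
  have hABn : A ≤ Subgroup.normalizer (B : Set G) := fun a ha => mem_normalizer_of_forall (hAB a ha)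
  have memAB : ∃ b ∈ B, ∃ a ∈ A, b * a = y := by
    have h0 : (B.subgroupOf (Subgroup.normalizer (B : Set G))).Normal := Subgroup.normal_in_normalizer
    have hyM : y ∈ Subgroup.normalizer (B : Set G) := sup_le hABn Subgroup.le_normalizer hy
    have hy' : (⟨y, hyM⟩ : Subgroup.normalizer (B : Set G)) ∈
        B.subgroupOf (Subgroup.normalizer (B : Set G)) ⊔
        A.subgroupOf (Subgroup.normalizer (B : Set G)) := by
      rw [← Subgroup.subgroupOf_sup Subgroup.le_normalizer hABn, sup_comm]; exact hy
    obtain ⟨a, ha, b, hb, e⟩ := Subgroup.mem_sup_of_normal_left.1 hy'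
    exact ⟨a, ha, b, hb, congrArg Subtype.val e⟩
  obtain ⟨x, hxB, a0, ha0, rfl⟩ := memAB
  have hxN : x ∉ N := fun h => hyN (mul_mem (le_sup_right (a := A) h) (le_sup_left (b := N) ha0))
  have hxM : x ∉ M := fun h => hxN ⟨hxB, h⟩
  have hxn : x ∈ Subgroup.normalizer ((A ⊔ N : Subgroup G) : Set G) := by
    have h1 : a0 ∈ Subgroup.normalizer ((A ⊔ N : Subgroup G) : Set G) :=
      Subgroup.le_normalizer (le_sup_left (b := N) ha0)
    have := mul_mem hyn (inv_mem h1)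
    simpa using this
  have hcomm : ∀ a ∈ A, x * a * x⁻¹ * a⁻¹ ∈ N := by
    intro a ha
    have h1 : x * a * x⁻¹ * a⁻¹ ∈ B := by
      have := mul_mem hxB (hAB a ha _ (inv_mem hxB))
      simpa [mul_assoc] using this
    refine ⟨h1, ?_⟩
    have h2 : x * a * x⁻¹ ∈ A ⊔ N :=
      (Subgroup.mem_normalizer_iff.1 hxn a).1 (le_sup_left (b := N) ha)
    exact M.mul_mem (sup_le hAM hNM h2) (M.inv_mem (hAM ha))
  set Ax : Subgroup G := A.map (MulAut.conj x).toMonoidHom with hAx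
  have memAx : ∀ a ∈ A, x * a * x⁻¹ ∈ Ax := fun a ha => ⟨a, ha, by simp⟩
  have hAxM : Ax ≤ M := by
    rintro _ ⟨a, ha, rfl⟩
    have := mul_mem (hcomm a ha).2 (hAM ha)
    simpa using this
  have hAxc : ∀ a ∈ Ax, ∀ b ∈ Ax, a * b = b * a := by
    rintro _ ⟨a, ha, rfl⟩ _ ⟨b, hb, rfl⟩
    rw [← map_mul, ← map_mul, hAc a ha b hb]
  have hcardAx : Nat.card Ax = Nat.card A :=
    (Nat.card_congr (A.equivMapOfInjective _ (MulAut.conj x).injective).toEquiv).symm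
  set D := A ⊓ Ax with hD
  set H := A ⊔ Ax with hH
  set E := H ⊓ B with hE
  have hHM : H ≤ M := sup_le hAM hAxM
  have hHP : H ≤ P := by
    refine sup_le hA ?_
    rintro _ ⟨a, ha, rfl⟩
    have := P.mul_mem (P.mul_mem (hB hxB) (hA ha)) (P.inv_mem (hB hxB))
    simpa using this
  have hHE : A ⊔ E = H := by
    apply le_antisymm (sup_le le_sup_left inf_le_left)
    refine sup_le le_sup_left ?_
    rintro _ ⟨a, ha, rfl⟩
    have h1 : x * a * x⁻¹ * a⁻¹ ∈ E :=
      ⟨H.mul_mem (le_sup_right (a := A) (memAx a ha)) (H.inv_mem (le_sup_left (b := Ax) ha)),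
        (hcomm a ha).1⟩
    have := mul_mem (le_sup_right (a := A) h1) (le_sup_left (b := E) ha)
    simpa using this
  have hDcent : ∀ d ∈ D, ∀ h ∈ H, d * h = h * d := by
    intro d hd
    have : H ≤ Subgroup.centralizer {d} := by
      refine sup_le ?_ ?_
      · intro a ha
        rw [Subgroup.mem_centralizer_singleton_iff]
        exact (hAc a ha d hd.1)
      · intro a ha
        rw [Subgroup.mem_centralizer_singleton_iff]
        exact (hAxc a ha d hd.2)
    intro h hh
    exact ((Subgroup.mem_centralizer_singleton_iff).1 (this hh)).symm
  have hEM : E ≤ M := inf_le_left.trans hHM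
  have hABE : A ⊓ B ≤ E := inf_le_inf_right _ le_sup_left
  have hABD : A ⊓ B ≤ D := by
    intro z hz
    refine ⟨hz.1, z, hz.1, ?_⟩
    have := hBc x hxB z hz.2
    simp [this]
  have hDE : D ⊓ E = A ⊓ B :=
    le_antisymm (inf_le_inf inf_le_left inf_le_right) (le_inf hABD hABE)
  have hAE : A ⊓ E = A ⊓ B := le_antisymm (inf_le_inf_left _ inf_le_right) (le_inf inf_le_left hABE)
  have hEnD : E ≤ Subgroup.normalizer (D : Set G) := fun e he => mem_normalizer_of_forall
    fun d hd => by rw [← hDcent d hd e he.1]; simpa using hd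
  have c1 := card_sup_mul_card_inf hAxM
  have c2 := card_sup_mul_card_inf hEM
  have c3 := card_sup_mul_card_inf hEnD
  rw [hHE, hAE] at c2
  rw [hDE] at c3
  rw [← hH, ← hD, hcardAx] at c1
  have hpos1 : 0 < Nat.card (A ⊓ B : Subgroup G) := Nat.card_pos
  have hpos2 : 0 < Nat.card H := Nat.card_pos
  have hpos3 : 0 < Nat.card A := Nat.card_pos
  have hcard : Nat.card (D ⊔ E : Subgroup G) = Nat.card A := by
    have h1 : Nat.card (D ⊔ E : Subgroup G) * (Nat.card (A ⊓ B : Subgroup G) * (Nat.card H * Nat.card A))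
        = Nat.card A * (Nat.card (A ⊓ B : Subgroup G) * (Nat.card H * Nat.card A)) := by
      calc _ = (Nat.card (D ⊔ E : Subgroup G) * Nat.card (A ⊓ B : Subgroup G)) * (Nat.card H * Nat.card A) := by ring
        _ = (Nat.card H * Nat.card D) * (Nat.card A * Nat.card E) := by rw [c3]; ring
        _ = _ := by rw [c1, ← c2]; ring
    exact Nat.eq_of_mul_eq_mul_right (by positivity) h1
  refine ⟨D ⊔ E, sup_le (inf_le_left.trans hA) (inf_le_right.trans hB), ?_, hcard,
    sup_le (inf_le_left.trans hAM) hEM, ?_⟩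
  · have hc : ∀ a ∈ D ⊔ E, ∀ b ∈ E, a * b = b * a := by
      intro a ha b hb
      have : D ⊔ E ≤ Subgroup.centralizer {b} := by
        refine sup_le ?_ ?_
        · intro a ha
          rw [Subgroup.mem_centralizer_singleton_iff]
          exact (hDcent a ha b hb.1)
        · intro a ha
          rw [Subgroup.mem_centralizer_singleton_iff]
          exact (hBc a ha.2 b hb.2)
      exact ((Subgroup.mem_centralizer_singleton_iff).1 (this ha))
    have hDEH : D ⊔ E ≤ H := sup_le (inf_le_left.trans le_sup_left) inf_le_left
    intro a ha b hb
    have : D ⊔ E ≤ Subgroup.centralizer {a} := by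
      refine sup_le ?_ ?_
      · intro d hd
        rw [Subgroup.mem_centralizer_singleton_iff]
        exact hDcent d hd a (hDEH ha)
      · intro e he
        rw [Subgroup.mem_centralizer_singleton_iff]
        exact (hc a ha e he).symm
    exact ((Subgroup.mem_centralizer_singleton_iff).1 (this hb)).symm
  · refine lt_of_le_of_ne (le_inf (hABE.trans le_sup_right) inf_le_right) fun e => hxM ?_
    have h1 : E ≤ A := by
      have : E ≤ (D ⊔ E) ⊓ B := le_inf le_sup_right inf_le_right
      exact (this.trans e.ge).trans inf_le_left
    have h2 : H = A := by rw [← hHE]; exact sup_eq_left.2 h1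
    exact mem_normalizer_of_forall fun a ha => h2 ▸ (le_sup_right (a := A) (memAx a ha))

end Products

section Quadratic

/-- If `n ^ 2 = 0` and the three conjugates of `s` by `1`, `1 + n` and `1 - n` commute with each
other, then the difference `m` of two of them commutes with `s` and satisfies `m ^ 2 = 0`. -/
lemma quadratic_ring {R : Type*} [Ring R] (h2 : ∀ x : R, x + x = 0 → x = 0) {n s : R}
    (hn : n * n = 0)
    (c1 : s * ((1 - n) * s * (1 + n)) = (1 - n) * s * (1 + n) * s)
    (c2 : s * ((1 + n) * s * (1 - n)) = (1 + n) * s * (1 - n) * s)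
    (c3 : (1 - n) * s * (1 + n) * ((1 + n) * s * (1 - n)) =
      (1 + n) * s * (1 - n) * ((1 - n) * s * (1 + n))) :
    ((1 - n) * s * (1 + n) - s) * s = s * ((1 - n) * s * (1 + n) - s) ∧
    ((1 - n) * s * (1 + n) - s) * ((1 - n) * s * (1 + n) - s) = 0 := by
  set u := s * n - n * s with hu
  set w := n * s * n with hw
  have e1 : (1 - n) * s * (1 + n) = s + u - w := by rw [hu, hw]; noncomm_ring
  have e2 : (1 + n) * s * (1 - n) = s - u - w := by rw [hu, hw]; noncomm_ring
  rw [e1] at c1 c3 ⊢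
  rw [e2] at c2 c3
  have hsu : s * u = u * s := by
    apply sub_eq_zero.1
    apply h2
    have : s * u - u * s + (s * u - u * s) =
      (s * (s + u - w) - (s + u - w) * s) - (s * (s - u - w) - (s - u - w) * s) := by noncomm_ring
    rw [this, c1, c2]; simp
  have hsw : s * w = w * s := by
    have h1 : s * (s + u - w) - (s + u - w) * s = (s * u - u * s) - (s * w - w * s) := by
      noncomm_ring
    rw [c1, hsu, sub_self, sub_self, zero_sub, eq_comm, neg_eq_zero, sub_eq_zero] at h1
    exact h1
  have huw : u * w = w * u := by
    apply sub_eq_zero.1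
    apply h2
    have h1 : (s + u - w) * (s - u - w) - (s - u - w) * (s + u - w) =
      (u * s - s * u) + (u * s - s * u) - ((u * w - w * u) + (u * w - w * u)) := by noncomm_ring
    rw [c3, hsu, sub_self, sub_self, zero_add, zero_sub, eq_comm, neg_eq_zero] at h1
    exact h1
  have hnw : n * w = 0 := by rw [hw, ← mul_assoc, ← mul_assoc, hn]; simp
  have hwn : w * n = 0 := by rw [hw, mul_assoc, hn]; simp
  have hnu : n * u = w := by
    have : n * u = n * s * n - n * n * s := by rw [hu]; noncomm_ring
    rw [this, hn, hw]; simp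
  have hun : u * n = -w := by
    have : u * n = s * (n * n) - n * s * n := by rw [hu]; noncomm_ring
    rw [this, hn, hw]; simp
  have huw1 : u * w = - (n * s * w) := by
    have : u * w = s * (n * w) - n * s * w := by rw [hu]; noncomm_ring
    rw [this, hnw]; simp
  have hwu1 : w * u = n * s * w := by
    have : w * u = n * s * (n * u) := by rw [hw]; noncomm_ring
    rw [this, hnu]
  have h0 : w * u = 0 := by
    apply h2
    nth_rewrite 1 [← huw]
    rw [huw1, hwu1]; simp
  have hww : w * w = 0 := by
    have : w * w = n * s * (n * w) := by nth_rewrite 1 [hw]; noncomm_ring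
    rw [this, hnw]; simp
  have huu : u * u = 0 := by
    have : u * u = s * (n * u) - n * (s * u) := by nth_rewrite 1 [hu]; noncomm_ring
    have e : n * (s * u) = w * s := by rw [hsu, ← mul_assoc n u s, hnu]
    rw [this, hnu, e, hsw, sub_self]
  constructor
  · have : (s + u - w - s) * s - s * (s + u - w - s) = (u * s - s * u) - (w * s - s * w) := by
      noncomm_ring
    rw [hsu, hsw] at this
    exact sub_eq_zero.1 (this.trans (by simp))
  · have : (s + u - w - s) * (s + u - w - s) = u * u - u * w - w * u + w * w := by noncomm_ring
    rw [this, huu, huw, h0, hww]; simp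

lemma one_add_pow_of_sq_zero {R : Type*} [Ring R] {e : R} (he : e * e = 0) (N : ℕ) :
    (1 + e) ^ N = 1 + N * e := by
  induction N with
  | zero => simp
  | succ N ih =>
    rw [pow_succ, ih]
    have : (1 + (N : R) * e) * (1 + e) = 1 + (N * e + e) + N * (e * e) := by noncomm_ring
    rw [this, he]; push_cast; noncomm_ring

/-- Quadratic action: if `a` acts quadratically and `s` commutes with its conjugates by `a` and
`a⁻¹`, then the commutator of `s` and `a` acts unipotently. -/
lemma quadratic_hom {G R : Type*} [Group G] [Ring R] (h2 : ∀ x : R, x + x = 0 → x = 0)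
    (φ : G →* R) {N : ℕ} (hN : (N : R) = 0) (a s : G) (ha : (φ a - 1) * (φ a - 1) = 0)
    (c1 : φ (s * (a⁻¹ * s * a)) = φ (a⁻¹ * s * a * s))
    (c2 : φ (s * (a * s * a⁻¹)) = φ (a * s * a⁻¹ * s))
    (c3 : φ (a⁻¹ * s * a * (a * s * a⁻¹)) = φ (a * s * a⁻¹ * (a⁻¹ * s * a))) :
    φ ((a⁻¹ * s * a * s⁻¹) ^ N) = 1 := by
  set n := φ a - 1 with hn
  have e1 : φ a = 1 + n := by rw [hn]; abel
  have e2 : φ a⁻¹ = 1 - n := by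
    have h1 : (1 - n) * φ a = 1 := by
      have : (1 - n) * (1 + n) = 1 - n * n := by noncomm_ring
      rw [e1, this, ha, sub_zero]
    calc φ a⁻¹ = (1 - n) * φ a * φ a⁻¹ := by rw [h1, one_mul]
      _ = 1 - n := by rw [mul_assoc, ← map_mul]; simp
  simp only [map_mul, e1, e2] at c1 c2 c3
  obtain ⟨h3, h4⟩ := quadratic_ring h2 ha c1 c2 c3
  set m := (1 - n) * φ s * (1 + n) - φ s with hm
  have h5 : φ (a⁻¹ * s * a * s⁻¹) = 1 + m * φ s⁻¹ := by
    have h6 : φ s * φ s⁻¹ = 1 := by rw [← map_mul]; simp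
    have h7 : (1 - n) * φ s * (1 + n) = m + φ s := by rw [hm]; abel
    rw [map_mul, map_mul, map_mul, e1, e2, h7, add_mul, h6, add_comm]
  have h7 : φ s⁻¹ * m = m * φ s⁻¹ := by
    have h6 : φ s * φ s⁻¹ = 1 := by rw [← map_mul]; simp
    have h6' : φ s⁻¹ * φ s = 1 := by rw [← map_mul]; simp
    calc φ s⁻¹ * m = φ s⁻¹ * (m * φ s) * φ s⁻¹ := by rw [mul_assoc, mul_assoc, h6, mul_one]
      _ = (φ s⁻¹ * φ s) * m * φ s⁻¹ := by rw [h3]; noncomm_ring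
      _ = _ := by rw [h6', one_mul]
  have h8 : (m * φ s⁻¹) * (m * φ s⁻¹) = 0 := by
    calc (m * φ s⁻¹) * (m * φ s⁻¹) = m * (φ s⁻¹ * m) * φ s⁻¹ := by noncomm_ring
      _ = (m * m) * (φ s⁻¹ * φ s⁻¹) := by rw [h7]; noncomm_ring
      _ = 0 := by rw [h4]; simp
  rw [map_pow, h5, one_add_pow_of_sq_zero h8, hN]; simp

/-- Group-theoretic form of `quadratic_hom` for conjugation on an abelian normal `p`-subgroup `V`,
where `p` is odd. -/
lemma quadratic_group {G : Type*} [Group G] [Finite G] {p : ℕ} [hp : Fact p.Prime] (hp2 : p ≠ 2)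
    {V : Subgroup G} [V.Normal] (hV : IsPGroup p V) (hVc : ∀ a ∈ V, ∀ b ∈ V, a * b = b * a)
    (a s : G) (ha : ∀ v ∈ V, a * (a * v * a⁻¹ * v⁻¹) * a⁻¹ = a * v * a⁻¹ * v⁻¹)
    (c : ∀ x y : G, x ∈ ({s, a⁻¹ * s * a, a * s * a⁻¹} : Set G) →
      y ∈ ({s, a⁻¹ * s * a, a * s * a⁻¹} : Set G) → ∀ v ∈ V, x * y * v * (x * y)⁻¹ = y * x * v * (y * x)⁻¹) :
    ∃ k, ∀ v ∈ V, (a⁻¹ * s * a * s⁻¹) ^ p ^ k * v = v * (a⁻¹ * s * a * s⁻¹) ^ p ^ k := by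
  let _ : CommGroup V := { (inferInstance : Group V) with
    mul_comm := fun a b => Subtype.ext (hVc a a.2 b b.2) }
  let ψ : G →* AddMonoid.End (Additive V) :=
    { toFun := fun g => MonoidHom.toAdditive ((MulAut.conjNormal g : MulAut V) : V →* V)
      map_one' := by
        ext v
        change (((MulAut.conjNormal (1 : G) : MulAut V) v.toMul : V) : G) = v.toMul
        simp
      map_mul' := by
        intro x y
        ext v
        change (((MulAut.conjNormal (x * y) : MulAut V) v.toMul : V) : G) =
          ((MulAut.conjNormal x : MulAut V) ((MulAut.conjNormal y : MulAut V) v.toMul) : V)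
        simp }
  have hψ : ∀ g (v : V), (Additive.toMul (ψ g (Additive.ofMul v)) : V) = (MulAut.conjNormal g v : V) :=
    fun g v => rfl
  have hψ' : ∀ g (v : V), ((Additive.toMul (ψ g (Additive.ofMul v)) : V) : G) = g * v * g⁻¹ :=
    fun g v => by rw [hψ, MulAut.conjNormal_apply]
  have hψeq : ∀ x y : G, ψ x = ψ y ↔ ∀ v ∈ V, x * v * x⁻¹ = y * v * y⁻¹ := by
    intro x y
    constructor
    · intro h v hv
      rw [← hψ' x ⟨v, hv⟩, h, hψ']
    · intro h
      ext v
      have := h v.toMul v.toMul.2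
      rw [← hψ', ← hψ'] at this
      exact this
  obtain ⟨k, hk⟩ := IsPGroup.iff_card.1 hV
  refine ⟨k, fun v hv => ?_⟩
  have h2 : ∀ x : AddMonoid.End (Additive V), x + x = 0 → x = 0 := by
    intro x hx
    ext v
    have h1 : x v + x v = 0 := DFunLike.congr_fun hx v
    have h3 : (Additive.toMul (x v)) ^ 2 = 1 := by rw [pow_two]; exact h1
    have h4 : (Additive.toMul (x v)) ^ p ^ k = 1 := by rw [← hk]; exact pow_card_eq_one'
    have h5 : orderOf (Additive.toMul (x v)) ∣ 1 := by
      have : Nat.Coprime 2 (p ^ k) := Nat.Coprime.pow_right k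
        ((Nat.coprime_primes Nat.prime_two hp.out).2 hp2.symm)
      rw [← this.gcd_eq_one]
      exact Nat.dvd_gcd (orderOf_dvd_of_pow_eq_one h3) (orderOf_dvd_of_pow_eq_one h4)
    have h6 : Additive.toMul (x v) = 1 := orderOf_eq_one_iff.1 (Nat.dvd_one.1 h5)
    exact congrArg Subtype.val h6
  have hN : ((p ^ k : ℕ) : AddMonoid.End (Additive V)) = 0 := by
    ext v
    have h4 : (Additive.toMul v) ^ p ^ k = 1 := by rw [← hk]; exact pow_card_eq_one'
    rw [AddMonoid.End.natCast_apply]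
    exact congrArg Subtype.val h4
  have hsq : (ψ a - 1) * (ψ a - 1) = 0 := by
    have h1 : ∀ v, ψ a (ψ a v - v) = ψ a v - v := by
      intro v
      have h3 := ha v.toMul v.toMul.2
      apply Subtype.ext (p := fun x => x ∈ V)
      have h5 : ((Additive.toMul (ψ a v - v) : V) : G) = a * (v.toMul : V) * a⁻¹ * ((v.toMul : V) : G)⁻¹ := by
        rw [toMul_sub, div_eq_mul_inv, Subgroup.coe_mul, Subgroup.coe_inv]
        congr 1
      have h4 := hψ' a (Additive.toMul (ψ a v - v))
      rw [h5] at h4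
      exact (h4.trans h3).trans h5.symm
    ext v
    change ((Additive.toMul (ψ a (ψ a v - v) - (ψ a v - v)) : V) : G) = _
    rw [h1 v, sub_self]; rfl
  have := quadratic_hom h2 ψ hN a s hsq ((hψeq _ _).2 (c _ _ (by simp) (by simp)))
    ((hψeq _ _).2 (c _ _ (by simp) (by simp))) ((hψeq _ _).2 (c _ _ (by simp) (by simp)))
  rw [← map_one ψ, hψeq] at this
  have := this v hv
  rw [one_mul, inv_one, mul_one] at this
  exact mul_inv_eq_iff_eq_mul.1 this

end Quadratic

/-! ### The minimal configuration in Thompson's normal `p`-complement theorem -/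

section Config

variable {p : ℕ} {G : Type*} [Group G]

lemma mem_sup_of_le_normalizer {A K : Subgroup G} (h : K ≤ Subgroup.normalizer (A : Set G)) {y : G}
    (hy : y ∈ A ⊔ K) : ∃ a ∈ A, ∃ k ∈ K, a * k = y := by
  have h0 : (A.subgroupOf (Subgroup.normalizer (A : Set G))).Normal := Subgroup.normal_in_normalizer
  have hyM : y ∈ Subgroup.normalizer (A : Set G) := sup_le Subgroup.le_normalizer h hy
  have hy' : (⟨y, hyM⟩ : Subgroup.normalizer (A : Set G)) ∈
      A.subgroupOf (Subgroup.normalizer (A : Set G)) ⊔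
      K.subgroupOf (Subgroup.normalizer (A : Set G)) := by
    rw [← Subgroup.subgroupOf_sup Subgroup.le_normalizer h]; exact hy
  obtain ⟨a, ha, b, hb, e⟩ := Subgroup.mem_sup_of_normal_left.1 hy'
  exact ⟨a, ha, b, hb, congrArg Subtype.val e⟩

/-- `A` is an abelian subgroup of `P` of maximal order. -/
structure MaxAb (P A : Subgroup G) : Prop where
  le : A ≤ P
  comm : ∀ a ∈ A, ∀ b ∈ A, a * b = b * a
  max : ∀ B : Subgroup G, B ≤ P → (∀ a ∈ B, ∀ b ∈ B, a * b = b * a) → Nat.card B ≤ Nat.card A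

/-- The Thompson subgroup of `P`, generated by the abelian subgroups of maximal order. -/
def thompsonJ (P : Subgroup G) : Subgroup G := sSup {A | MaxAb P A}

lemma thompsonJ_le (P : Subgroup G) : thompsonJ P ≤ P := sSup_le fun _ hA => hA.le

lemma MaxAb.map [Finite G] {P A : Subgroup G} (h : MaxAb P A) (φ : P ≃* P) :
    MaxAb P (((A.subgroupOf P).map φ.toMonoidHom).map P.subtype) := by
  have hc : Nat.card (((A.subgroupOf P).map φ.toMonoidHom).map P.subtype : Subgroup G) = Nat.card A := by
    rw [← Nat.card_congr (Subgroup.equivMapOfInjective _ _ P.subtype_injective).toEquiv,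
      ← Nat.card_congr (Subgroup.equivMapOfInjective _ _ φ.injective).toEquiv,
      Nat.card_congr (Subgroup.subgroupOfEquivOfLe h.le).toEquiv]
  refine ⟨?_, ?_, ?_⟩
  · rintro _ ⟨x, _, rfl⟩
    exact x.2
  · rintro _ ⟨_, ⟨x, hx, rfl⟩, rfl⟩ _ ⟨_, ⟨y, hy, rfl⟩, rfl⟩
    have : x * y = y * x := Subtype.ext (h.comm x hx y hy)
    rw [← map_mul, ← map_mul, ← map_mul, ← map_mul, this]
  · intro B hB hBc
    rw [hc]; exact h.max B hB hBc

lemma thompsonJ_characteristic [Finite G] (P : Subgroup G) :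
    ((thompsonJ P).subgroupOf P).Characteristic := by
  rw [Subgroup.characteristic_iff_map_le]
  intro φ
  have h : thompsonJ P ≤ (((thompsonJ P).subgroupOf P).comap φ.toMonoidHom).map P.subtype := by
    refine sSup_le fun A hA a ha => ?_
    refine ⟨⟨a, hA.le ha⟩, ?_, rfl⟩
    have h1 : (((A.subgroupOf P).map φ.toMonoidHom).map P.subtype : Subgroup G) ≤ thompsonJ P :=
      le_sSup (hA.map φ)
    exact h1 ⟨_, ⟨⟨a, hA.le ha⟩, ha, rfl⟩, rfl⟩
  rintro _ ⟨x, hx, rfl⟩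
  obtain ⟨y, hy, e⟩ := h hx
  have : y = x := Subtype.ext e
  exact this ▸ hy

lemma exists_maxAb [Finite G] (P : Subgroup G) {B : Subgroup G} (hB : B ≤ P)
    (hBc : ∀ a ∈ B, ∀ b ∈ B, a * b = b * a) : ∃ A, MaxAb P A ∧ Nat.card B ≤ Nat.card A := by
  obtain ⟨A, hA, hmax⟩ := Set.exists_max_image
    {A : Subgroup G | A ≤ P ∧ ∀ a ∈ A, ∀ b ∈ A, a * b = b * a} (fun A => Nat.card A)
    (Set.toFinite _) ⟨B, hB, hBc⟩
  exact ⟨A, ⟨hA.1, hA.2, fun B h1 h2 => hmax B ⟨h1, h2⟩⟩, hmax B ⟨hB, hBc⟩⟩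

lemma thompsonJ_ne_bot [Finite G] {P : Subgroup G} (hP : P ≠ ⊥) : thompsonJ P ≠ ⊥ := by
  obtain ⟨x, hx, hx1⟩ := P.ne_bot_iff_exists_ne_one.1 hP |>.imp fun x h => (⟨x.2, h⟩ : _ ∧ _)
  obtain ⟨A, hA, hcard⟩ := exists_maxAb P (B := Subgroup.zpowers (x : G)) (by simpa using x.2) (by
    rintro _ ⟨m, rfl⟩ _ ⟨n, rfl⟩
    exact (Commute.refl (x : G)).zpow_zpow m n)
  intro h
  have hA' : A = ⊥ := le_bot_iff.1 (h ▸ (le_sSup hA : A ≤ thompsonJ P))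
  rw [hA', Subgroup.card_bot, Nat.card_zpowers] at hcard
  have h2 := orderOf_pos (x : G)
  have h3 : orderOf (x : G) = 1 := by omega
  exact hx1 (Subtype.ext (orderOf_eq_one_iff.1 h3))

/-- The configuration to which a minimal counterexample to Thompson's theorem reduces: `U` is the
largest normal `p`-subgroup of `G`, `K / U` is the normal `p`-complement of `G / U`, the
centraliser of `U` in `K` is contained in `U`, and the `p`-subgroup `P` is a maximal subgroup. -/
structure TConfig (p : ℕ) (P U K : Subgroup G) : Prop where
  hP : IsPGroup p P
  hU : U.Normal
  hUp : IsPGroup p U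
  hUmax : ∀ N : Subgroup G, N.Normal → IsPGroup p N → N ≤ U
  hK : K.Normal
  hUK : U ≤ K
  hKp : ∀ x ∈ K, ∀ k, x ^ p ^ k = 1 → x ∈ U
  hKreg : ∀ x ∈ K, ∃ l, p.Coprime l ∧ x ^ l ∈ U
  hcent : Subgroup.centralizer (U : Set G) ⊓ K ≤ U
  hUP : U ≤ P
  hmax : ∀ L : Subgroup G, P ≤ L → L = ⊤ ∨ L = P
  hPtop : P ≠ ⊤
  hPK : P ⊔ K = ⊤

namespace TConfig

variable {P U K : Subgroup G}

/-- The centre of `P`, as a subgroup of the ambient group. -/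
def ctr (P : Subgroup G) : Subgroup G := P ⊓ Subgroup.centralizer (P : Set G)

lemma mem_ctr {P : Subgroup G} {z : G} : z ∈ ctr P ↔ z ∈ P ∧ ∀ x ∈ P, x * z = z * x := by
  rw [ctr, Subgroup.mem_inf, Subgroup.mem_centralizer_iff]; rfl

lemma normal_of_sup [Finite G] (h : TConfig p P U K) {W : Subgroup G}
    (h1 : ∀ x ∈ P, ∀ w ∈ W, x * w * x⁻¹ ∈ W) (h2 : ∀ x ∈ K, ∀ w ∈ W, x * w * x⁻¹ ∈ W) :
    W.Normal := by
  rw [← Subgroup.normalizer_eq_top_iff, eq_top_iff, ← h.hPK]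
  exact sup_le (fun x hx => mem_normalizer_of_forall (h1 x hx))
    (fun x hx => mem_normalizer_of_forall (h2 x hx))

lemma mem_U_of_mem (h : TConfig p P U K) {x : G} (hxP : x ∈ P) (hxK : x ∈ K) : x ∈ U := by
  obtain ⟨k, hk⟩ := h.hP ⟨x, hxP⟩
  exact h.hKp x hxK k (by simpa [Subtype.ext_iff] using hk)

lemma ctr_le_centralizer (h : TConfig p P U K) : ctr P ≤ Subgroup.centralizer (U : Set G) := by
  intro z hz
  rw [Subgroup.mem_centralizer_iff]
  intro u hu
  exact (mem_ctr.1 hz).2 u (h.hUP hu)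

lemma ctr_le_U [Finite G] (h : TConfig p P U K) : ctr P ≤ U := by
  have := h.hU
  have := h.hK
  have hW : (ctr P ⊔ U).Normal := by
    apply h.normal_of_sup
    · intro x hx w hw
      obtain ⟨z, hz, u, hu, rfl⟩ := Subgroup.mem_sup_of_normal_right.1 hw
      have e : x * (z * u) * x⁻¹ = z * (x * u * x⁻¹) := by
        rw [← mul_assoc, (mem_ctr.1 hz).2 x hx]; group
      rw [e]
      exact Subgroup.mul_mem_sup hz (h.hU.conj_mem u hu x)
    · intro x hx w hw
      obtain ⟨z, hz, u, hu, rfl⟩ := Subgroup.mem_sup_of_normal_right.1 hw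
      have h1 : z⁻¹ * (x * z * x⁻¹) ∈ U := by
        apply h.hcent
        refine ⟨(Subgroup.centralizer _).mul_mem ((Subgroup.centralizer _).inv_mem (h.ctr_le_centralizer hz)) ?_, ?_⟩
        · exact (inferInstance : (Subgroup.centralizer (U : Set G)).Normal).conj_mem _
            (h.ctr_le_centralizer hz) x
        · have := K.mul_mem (h.hK.conj_mem x hx z⁻¹) (K.inv_mem hx)
          simpa [mul_assoc] using this
      have e : x * (z * u) * x⁻¹ = z * (z⁻¹ * (x * z * x⁻¹) * (x * u * x⁻¹)) := by group
      rw [e]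
      exact Subgroup.mul_mem_sup hz (mul_mem h1 (h.hU.conj_mem u hu x))
  have hWp : IsPGroup p (ctr P ⊔ U : Subgroup G) :=
    h.hP.to_le (sup_le inf_le_left h.hUP)
  exact le_sup_left.trans (h.hUmax _ hW hWp)

/-- The normal closure of the centre of `P`. -/
abbrev V (P : Subgroup G) : Subgroup G := Subgroup.normalClosure (ctr P : Set G)

/-- The centraliser of `V P`. -/
abbrev C (P : Subgroup G) : Subgroup G := Subgroup.centralizer (V P : Set G)

lemma V_le_U [Finite G] (h : TConfig p P U K) : V P ≤ U := by
  have := h.hU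
  exact Subgroup.normalClosure_le_normal h.ctr_le_U

lemma V_le_centralizer (h : TConfig p P U K) : V P ≤ Subgroup.centralizer (U : Set G) := by
  have := h.hU
  exact Subgroup.normalClosure_le_normal h.ctr_le_centralizer

lemma U_le_C (h : TConfig p P U K) : U ≤ C P := by
  intro u hu
  rw [Subgroup.mem_centralizer_iff]
  intro v hv
  exact ((Subgroup.mem_centralizer_iff.1 (h.V_le_centralizer hv)) u hu).symm

lemma V_comm [Finite G] (h : TConfig p P U K) : ∀ a ∈ V P, ∀ b ∈ V P, a * b = b * a := by
  intro a ha b hb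
  exact Subgroup.mem_centralizer_iff.1 (h.V_le_centralizer hb) a (h.V_le_U ha)

lemma mem_C {x : G} : x ∈ C P ↔ ∀ v ∈ V P, x * v = v * x := by
  rw [Subgroup.mem_centralizer_iff]
  exact forall₂_congr fun _ _ => eq_comm

end TConfig

end Config

section Config2

variable {p : ℕ} {G : Type*} [Group G]

namespace TConfig

variable {P U K : Subgroup G}

/-- `K / U` acts on `V P` through an abelian group. Otherwise maximality of `P` forces `K / U` to be
perfect and, by taking a `P`-invariant Sylow subgroup of it, to be an `s`-group for some prime. -/
lemma commutator_le_C [Finite G] (hp : p.Prime) (h : TConfig p P U K) : ⁅K, K⁆ ≤ C P := by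
  have := h.hU
  have := h.hK
  have hcK : ⁅K, K⁆ ≤ K := Subgroup.commutator_le_left K K
  rcases h.hmax (P ⊔ ⁅K, K⁆) le_sup_left with hT | hT
  swap
  · intro x hx
    exact h.U_le_C (h.mem_U_of_mem (hT ▸ (le_sup_right : ⁅K, K⁆ ≤ P ⊔ ⁅K, K⁆) hx) (hcK hx))
  exfalso
  have hKU : K ≤ U ⊔ ⁅K, K⁆ := by
    intro k hk
    obtain ⟨x, hx, t, ht, rfl⟩ := Subgroup.mem_sup_of_normal_right.1
      (hT ▸ Subgroup.mem_top k : k ∈ P ⊔ ⁅K, K⁆)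
    refine Subgroup.mul_mem_sup (h.mem_U_of_mem hx ?_) ht
    simpa using K.mul_mem hk (K.inv_mem (hcK ht))
  let π := QuotientGroup.mk' U
  let K' : Subgroup (G ⧸ U) := K.map π
  have hK'n : K'.Normal := h.hK.map π (QuotientGroup.mk'_surjective U)
  have hperf : ⁅K', K'⁆ = K' := by
    refine le_antisymm (Subgroup.commutator_le_left _ _) ?_
    rw [← Subgroup.map_commutator]
    refine (Subgroup.map_mono hKU).trans ?_
    rw [Subgroup.map_sup, sup_le_iff]
    refine ⟨?_, le_rfl⟩
    rintro _ ⟨u, hu, rfl⟩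
    rw [show π u = 1 from (QuotientGroup.eq_one_iff u).2 hu]
    exact Subgroup.one_mem _
  have hKnU : ¬ K ≤ U := fun hle => h.hPtop (by
    rw [← h.hPK, sup_eq_left.2 (hle.trans h.hUP)])
  have hcop : p.Coprime (Nat.card K') := by
    refine coprime_card_of_isReg hp ?_
    rintro ⟨_, x, hx, rfl⟩
    obtain ⟨l, hl, hxl⟩ := h.hKreg x hx
    refine IsReg.of_pow hl (Subtype.ext ?_)
    change π x ^ l = 1
    rw [← map_pow]
    exact (QuotientGroup.eq_one_iff _).2 hxl
  have hne : Nat.card K' ≠ 1 := by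
    intro h1
    apply hKnU
    intro x hx
    have : K' = ⊥ := Subgroup.card_eq_one.1 h1
    have h2 : π x ∈ K' := ⟨x, hx, rfl⟩
    rw [this, Subgroup.mem_bot] at h2
    exact (QuotientGroup.eq_one_iff x).1 h2
  obtain ⟨s, hs, hsd⟩ := Nat.exists_prime_and_dvd hne
  have := Fact.mk hs
  let act : MulDistribMulAction P K' :=
    MulDistribMulAction.compHom K' (((MulAut.conjNormal (H := K')).comp π).comp P.subtype)
  obtain ⟨S, hS⟩ := exists_invariant_sylow (Γ := P) (K := K') hp hs h.hP
    (fun hd => by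
      have := Nat.Coprime.eq_one_of_dvd hcop hd
      exact hp.one_lt.ne' this)
  let T : Subgroup G := ((S : Subgroup K').map K'.subtype).comap π
  have hTK : T ≤ K := by
    rintro t ⟨y, hy, e⟩
    obtain ⟨k, hk, e2⟩ := y.2
    have e3 : π k = π t := e2.trans e
    have : k⁻¹ * t ∈ U := QuotientGroup.eq.1 e3
    simpa using K.mul_mem hk (h.hUK this)
  have hUT : U ≤ T := by
    intro u hu
    refine ⟨1, S.one_mem, ?_⟩
    exact ((QuotientGroup.eq_one_iff u).2 hu).symm
  have hPT : P ≤ Subgroup.normalizer (T : Set G) := by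
    intro x hx
    refine mem_normalizer_of_forall ?_
    rintro t ⟨y, hy, e⟩
    refine ⟨(⟨x, hx⟩ : P) • y, hS ⟨x, hx⟩ y hy, ?_⟩
    have e4 : (((⟨x, hx⟩ : P) • y : K') : G ⧸ U) = π x * y * (π x)⁻¹ := rfl
    change (((⟨x, hx⟩ : P) • y : K') : G ⧸ U) = _
    rw [e4, map_mul, map_mul, map_inv, ← e]; rfl
  rcases h.hmax (P ⊔ T) le_sup_left with h1 | h1
  · have hKT : K ≤ T := by
      intro k hk
      have hk' : k ∈ T ⊔ P := by rw [sup_comm, h1]; trivial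
      obtain ⟨t, ht, x, hx, rfl⟩ := mem_sup_of_le_normalizer hPT hk'
      refine T.mul_mem ht (hUT (h.mem_U_of_mem hx ?_))
      simpa using K.mul_mem (K.inv_mem (hTK ht)) hk
    have hStop : (S : Subgroup K') = ⊤ := by
      rw [eq_top_iff]
      rintro ⟨_, k, hk, rfl⟩ -
      obtain ⟨y, hy, e⟩ := hKT hk
      have : y = ⟨π k, k, hk, rfl⟩ := Subtype.ext e
      exact this ▸ hy
    have hSp : IsPGroup s K' := by
      have := S.2
      rw [hStop] at this
      exact this.of_equiv Subgroup.topEquiv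
    have := hSp.isNilpotent
    have : Nontrivial K' := Finite.one_lt_card_iff_nontrivial.1 (by
      have : 0 < Nat.card K' := Nat.card_pos
      omega)
    have h5 := Group.IsSolvable.commutator_lt_top_of_nontrivial K'
    apply h5.ne
    apply Subgroup.map_injective K'.subtype_injective
    rw [Subgroup.map_subtype_commutator, hperf]
    ext x; simp
  · have hTP : T ≤ P := h1 ▸ le_sup_right
    have h6 : ∀ y ∈ (S : Subgroup K'), y = 1 := by
      rintro ⟨_, k, hk, rfl⟩ hy
      have hkT : k ∈ T := ⟨_, hy, rfl⟩
      exact Subtype.ext ((QuotientGroup.eq_one_iff k).2 (h.mem_U_of_mem (hTP hkT) hk))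
    have h7 := S.dvd_card_of_dvd_card hsd
    have h8 : (S : Subgroup K') = ⊥ := (Subgroup.eq_bot_iff_forall _).2 h6
    rw [h8, Subgroup.card_bot] at h7
    exact hs.one_lt.ne' (Nat.dvd_one.1 h7)

/-- An abelian subgroup `A` of `P` that is normalised by `V P` acts quadratically on `V P`, and
therefore centralises it. -/
lemma le_C_of_normalizer [Finite G] (hp : p.Prime) (hp2 : p ≠ 2) (h : TConfig p P U K)
    {A : Subgroup G} (hA : A ≤ P) (hAc : ∀ a ∈ A, ∀ b ∈ A, a * b = b * a)
    (hV : V P ≤ Subgroup.normalizer (A : Set G)) : A ≤ C P := by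
  have := h.hU
  have := h.hK
  have := Fact.mk hp
  have hCn : (C P).Normal := inferInstance
  -- elements of `A` commute with `K` modulo `C P`
  have key : ∀ a ∈ A, ∀ s ∈ K, a⁻¹ * s * a * s⁻¹ ∈ C P := by
    intro a ha s hs
    have hconj : ∀ x ∈ ({s, a⁻¹ * s * a, a * s * a⁻¹} : Set G), x ∈ K := by
      rintro x (rfl | rfl | rfl)
      · exact hs
      · simpa using h.hK.conj_mem s hs a⁻¹
      · exact h.hK.conj_mem s hs a
    obtain ⟨k, hk⟩ := quadratic_group (p := p) hp2 (V := V P) (h.hUp.to_le h.V_le_U) h.V_comm a s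
      (by
        intro v hv
        have h1 : a * v * a⁻¹ * v⁻¹ ∈ A := by
          have := (Subgroup.mem_normalizer_iff.1 (hV hv) a⁻¹).1 (A.inv_mem ha)
          simpa [mul_assoc] using A.mul_mem ha this
        rw [hAc a ha _ h1]; group)
      (by
        intro x y hx hy v hv
        have h2 : x⁻¹ * y⁻¹ * x * y ∈ C P := by
          have := h.commutator_le_C hp (Subgroup.commutator_mem_commutator
            (K.inv_mem (hconj x hx)) (K.inv_mem (hconj y hy)))
          simpa [commutatorElement_def] using this
        have h3 : ∀ c ∈ C P, ∀ g : G, g * c * v * (g * c)⁻¹ = g * v * g⁻¹ := by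
          intro c hc g
          rw [mul_assoc g c v, mem_C.1 hc v hv]; group
        have e : x * y = y * x * (x⁻¹ * y⁻¹ * x * y) := by group
        rw [e, h3 _ h2])
    set g := a⁻¹ * s * a * s⁻¹ with hg
    have hgK : g ∈ K := K.mul_mem (by simpa using h.hK.conj_mem s hs a⁻¹) (K.inv_mem hs)
    obtain ⟨l, hl, hgl⟩ := h.hKreg g hgK
    have h1 : g ^ p ^ k ∈ C P := mem_C.2 hk
    have h2 : g ^ l ∈ C P := h.U_le_C hgl
    have h3 : Nat.Coprime (p ^ k) l := hl.pow_left k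
    have h4 : g ^ (Nat.gcd (p ^ k) l : ℤ) ∈ C P := by
      rw [Nat.gcd_eq_gcd_ab, zpow_add, zpow_mul, zpow_mul]
      refine (C P).mul_mem ((C P).zpow_mem ?_ _) ((C P).zpow_mem ?_ _)
      · exact_mod_cast h1
      · exact_mod_cast h2
    rw [h3.gcd_eq_one] at h4
    simpa using h4
  let T : Subgroup G := (Subgroup.centralizer
    ((K.map (QuotientGroup.mk' (C P)) : Subgroup (G ⧸ C P)) : Set (G ⧸ C P))).comap
      (QuotientGroup.mk' (C P))
  have hKn' : (K.map (QuotientGroup.mk' (C P))).Normal :=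
    h.hK.map _ (QuotientGroup.mk'_surjective _)
  have hTn : T.Normal := inferInstance
  have hTmem : ∀ t ∈ T, ∀ s ∈ K, t⁻¹ * s * t * s⁻¹ ∈ C P := by
    intro t ht s hs
    have h1 := Subgroup.mem_centralizer_iff.1 ht _ ⟨s, hs, rfl⟩
    rw [← QuotientGroup.eq_one_iff]
    change QuotientGroup.mk' (C P) _ = 1
    rw [map_mul, map_mul, map_mul, mul_assoc _ (QuotientGroup.mk' (C P) s), h1, map_inv, map_inv]
    group
  have hAT : A ≤ P ⊓ T := by
    refine le_inf hA fun a ha => ?_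
    change QuotientGroup.mk' (C P) a ∈ Subgroup.centralizer _
    rw [Subgroup.mem_centralizer_iff]
    rintro _ ⟨s, hs, rfl⟩
    have h1 := key a ha s hs
    rw [← QuotientGroup.eq_one_iff] at h1
    change QuotientGroup.mk' (C P) _ = 1 at h1
    rw [map_mul, map_mul, map_mul, map_inv, map_inv, mul_inv_eq_one, mul_assoc,
      inv_mul_eq_iff_eq_mul] at h1
    exact h1
  let B : Subgroup G := V P ⊓ Subgroup.centralizer ((P ⊓ T : Subgroup G) : Set G)
  have hBmem : ∀ b, b ∈ B ↔ b ∈ V P ∧ ∀ t ∈ P, t ∈ T → t * b = b * t := by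
    intro b
    rw [Subgroup.mem_inf, Subgroup.mem_centralizer_iff]
    exact and_congr_right fun _ => ⟨fun h t h1 h2 => h t ⟨h1, h2⟩, fun h t ht => h t ht.1 ht.2⟩
  have hBn : B.Normal := by
    apply h.normal_of_sup
    · intro x hx b hb
      rw [hBmem] at hb ⊢
      refine ⟨Subgroup.normalClosure_normal.conj_mem b hb.1 x, fun t ht htT => ?_⟩
      have h1 := hb.2 (x⁻¹ * t * x) (P.mul_mem (P.mul_mem (P.inv_mem hx) ht) hx)
        (by simpa using hTn.conj_mem t htT x⁻¹)
      calc t * (x * b * x⁻¹) = x * (x⁻¹ * t * x * b) * x⁻¹ := by group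
        _ = x * (b * (x⁻¹ * t * x)) * x⁻¹ := by rw [h1]
        _ = _ := by group
    · intro s hs b hb
      rw [hBmem] at hb ⊢
      have hsb : s * b * s⁻¹ ∈ V P := Subgroup.normalClosure_normal.conj_mem b hb.1 s
      refine ⟨hsb, fun t ht htT => ?_⟩
      -- `t s = s t c` with `c` acting trivially on `V P`
      have hc : s⁻¹ * t⁻¹ * s * t ∈ C P := by
        have := hCn.conj_mem _ (hTmem t htT s hs) s⁻¹
        simpa [mul_assoc] using this
      have h1 := mem_C.1 hc b hb.1
      have h2 := hb.2 t ht htT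
      have e1 : t * s * (s⁻¹ * t⁻¹ * s * t) = s * t := by group
      have h3 : t * s * b = s * b * (s⁻¹ * t * s) := by
        have : t * s * (s⁻¹ * t⁻¹ * s * t) * b = s * (t * b) := by rw [e1]; group
        rw [mul_assoc (t * s), h1, h2] at this
        calc t * s * b = (t * s * (b * (s⁻¹ * t⁻¹ * s * t))) * (s⁻¹ * t⁻¹ * s * t)⁻¹ := by group
          _ = _ := by rw [this]; group
      calc t * (s * b * s⁻¹) = t * s * b * s⁻¹ := by group
        _ = _ := by rw [h3]; group
  have hVB : V P ≤ B := by
    refine Subgroup.normalClosure_le_normal ?_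
    intro z hz
    exact (hBmem z).2 ⟨Subgroup.subset_normalClosure hz, fun t ht _ => (mem_ctr.1 hz).2 t ht⟩
  intro a ha
  rw [mem_C]
  intro v hv
  exact ((hBmem v).1 (hVB hv)).2 a (hAT ha).1 (hAT ha).2

lemma maxAb_le_C [Finite G] (hp : p.Prime) (hp2 : p ≠ 2) (h : TConfig p P U K)
    {A : Subgroup G} (hA : MaxAb P A) : A ≤ C P := by
  have := Fact.mk hp
  suffices H : ∀ n (A : Subgroup G), MaxAb P A →
      Nat.card P - Nat.card (A ⊓ V P : Subgroup G) = n → A ≤ C P from H _ A hA rfl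
  intro n
  induction n using Nat.strong_induction_on with
  | _ n ih =>
  intro A hA hn
  by_cases hVA : V P ≤ Subgroup.normalizer (A : Set G)
  · exact h.le_C_of_normalizer hp hp2 hA.le hA.comm hVA
  exfalso
  have hVP : V P ≤ P := h.V_le_U.trans h.hUP
  obtain ⟨A', hA'P, hA'c, hcard, hA'N, hlt⟩ := replacement h.hP hA.le hA.comm hVP h.V_comm
    (fun a _ b hb => Subgroup.normalClosure_normal.conj_mem b hb a) hVA
  have hA' : MaxAb P A' := ⟨hA'P, hA'c, fun B h1 h2 => hcard ▸ hA.max B h1 h2⟩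
  have h1 : Nat.card (A ⊓ V P : Subgroup G) < Nat.card (A' ⊓ V P : Subgroup G) := by
    refine lt_of_le_of_ne (Subgroup.card_le_of_le hlt.le) fun e => hlt.ne ?_
    exact Subgroup.eq_of_le_of_card_ge hlt.le e.ge
  have h2 : Nat.card (A' ⊓ V P : Subgroup G) ≤ Nat.card P :=
    Subgroup.card_le_of_le (inf_le_left.trans hA'P)
  have hC := ih _ (by omega) A' hA' rfl
  -- by maximality `A'` contains `V P`, which it centralises
  have hVA' : V P ≤ A' := by
    have h3 : Nat.card (A' ⊔ V P : Subgroup G) ≤ Nat.card A' := by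
      refine hA'.max _ (sup_le hA'P hVP) ?_
      intro x hx y hy
      obtain ⟨a, ha, v, hv, rfl⟩ := Subgroup.mem_sup_of_normal_right.1 hx
      obtain ⟨b, hb, w, hw, rfl⟩ := Subgroup.mem_sup_of_normal_right.1 hy
      have c1 : a * b = b * a := hA'c a ha b hb
      have c2 : v * w = w * v := h.V_comm v hv w hw
      have c3 : a * w = w * a := mem_C.1 (hC ha) w hw
      have c4 : b * v = v * b := mem_C.1 (hC hb) v hv
      calc a * v * (b * w) = a * (v * b) * w := by group
        _ = (a * b) * (v * w) := by rw [← c4]; group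
        _ = b * (a * w) * v := by rw [c1, c2]; group
        _ = _ := by rw [c3]; group
    have h4 : A' = A' ⊔ V P := Subgroup.eq_of_le_of_card_ge le_sup_left h3
    exact h4 ▸ le_sup_right
  exact hVA (hVA'.trans hA'N)

/-- The conclusion of Thompson's argument in the minimal configuration. -/
theorem normal_or_normal [Finite G] (hp : p.Prime) (hp2 : p ≠ 2) (h : TConfig p P U K) :
    (ctr P).Normal ∨ (thompsonJ P).Normal := by
  have hCn : (C P).Normal := inferInstance
  have hzV : ctr P ≤ V P := fun z hz => Subgroup.subset_normalClosure hz
  rcases h.hmax (P ⊔ C P) le_sup_left with h1 | h1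
  · left
    refine ⟨fun z hz g => ?_⟩
    obtain ⟨x, hx, c, hc, rfl⟩ := Subgroup.mem_sup_of_normal_right.1
      (h1 ▸ Subgroup.mem_top g : g ∈ P ⊔ C P)
    have e1 := mem_C.1 hc z (hzV hz)
    have e2 := (mem_ctr.1 hz).2 x hx
    have : x * c * z * (x * c)⁻¹ = z := by
      rw [mul_assoc x c z, e1, ← mul_assoc x z c, e2]; group
    rwa [this]
  · right
    have hCP : C P ≤ P := (le_sup_right : C P ≤ P ⊔ C P).trans h1.le
    have hCU : C P ≤ U := h.hUmax _ hCn (h.hP.to_le hCP)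
    have hJ : ∀ A, MaxAb P A → A ≤ U := fun A hA => (h.maxAb_le_C hp hp2 hA).trans hCU
    rw [← Subgroup.normalizer_eq_top_iff, eq_top_iff]
    intro g _
    refine mem_normalizer_of_forall ?_
    have h2 : thompsonJ P ≤ (thompsonJ P).comap (MulAut.conj g).toMonoidHom := by
      refine sSup_le fun A hA => ?_
      rw [← Subgroup.map_le_iff_le_comap]
      refine le_sSup ?_
      have hc : Nat.card (A.map (MulAut.conj g).toMonoidHom) = Nat.card A :=
        (Nat.card_congr (Subgroup.equivMapOfInjective _ _ (MulAut.conj g).injective).toEquiv).symm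
      refine ⟨?_, ?_, fun B b1 b2 => hc ▸ hA.max B b1 b2⟩
      · rintro _ ⟨a, ha, rfl⟩
        exact h.hUP (h.hU.conj_mem a (hJ A hA ha) g)
      · rintro _ ⟨a, ha, rfl⟩ _ ⟨b, hb, rfl⟩
        exact (map_mul (MulAut.conj g).toMonoidHom a b).symm.trans
          ((congrArg _ (hA.comm a ha b hb)).trans (map_mul (MulAut.conj g).toMonoidHom b a))
    exact fun a ha => h2 ha

end TConfig

end Config2

/-! ### Thompson's normal `p`-complement theorem -/

section Transport

variable {p : ℕ} {G P S : Type*} [Group G] [Group P] [Group S]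

/-- The normalisers of the nontrivial characteristic subgroups of the image of `i` are
`p`-nilpotent. -/
def CharNil (p : ℕ) (i : P →* G) : Prop :=
  ∀ X : Subgroup P, X.Characteristic → X ≠ ⊥ →
    PNilpotent p (Subgroup.normalizer ((X.map i : Subgroup G) : Set G))

lemma char_conj [Finite G] {i : P →* G} (hi : Function.Injective i) {X : Subgroup P}
    (hX : X.Characteristic) {x : G} (hx : x ∈ Subgroup.normalizer (i.range : Set G)) :
    x ∈ Subgroup.normalizer ((X.map i : Subgroup G) : Set G) := by
  let e : P ≃* i.range := MonoidHom.ofInjective hi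
  let φ : P ≃* P := (e.trans (i.range.normalizerMonoidHom ⟨x, hx⟩)).trans e.symm
  have hφ : ∀ a, i (φ a) = x * i a * x⁻¹ := by
    intro a
    have h1 : e (φ a) = i.range.normalizerMonoidHom ⟨x, hx⟩ (e a) := by simp [φ]
    have h2 := congrArg Subtype.val h1
    exact h2
  refine mem_normalizer_of_forall ?_
  rintro _ ⟨a, ha, rfl⟩
  rw [← hφ]
  exact ⟨φ a, Subgroup.characteristic_iff_map_le.1 hX φ ⟨a, ha, rfl⟩, rfl⟩

lemma char_comap_equiv (e : P ≃* S) {X : Subgroup S} (hX : X.Characteristic) :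
    (X.comap e.toMonoidHom).Characteristic := by
  rw [Subgroup.characteristic_iff_map_le]
  rintro φ _ ⟨a, ha, rfl⟩
  have := Subgroup.characteristic_iff_map_le.1 hX ((e.symm.trans φ).trans e) ⟨e a, ha, rfl⟩
  simpa using this

/-- The hypothesis of Thompson's theorem only depends on the conjugacy class of the image. -/
lemma CharNil.transport [Finite G] {i : P →* G} {j : S →* G} (hi : Function.Injective i)
    (hj : Function.Injective j) (g : G) (h : ∀ x, x ∈ i.range ↔ g⁻¹ * x * g ∈ j.range)
    (hc : CharNil p i) : CharNil p j := by
  intro X hX hX1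
  let j' : S →* G := (MulAut.conj g).toMonoidHom.comp j
  have hj' : Function.Injective j' := (MulAut.conj g).injective.comp hj
  have hr : i.range = j'.range := by
    ext x
    rw [h]
    constructor
    · rintro ⟨s, hs⟩
      refine ⟨s, ?_⟩
      change g * j s * g⁻¹ = x
      rw [hs]; group
    · rintro ⟨s, hs⟩
      refine ⟨s, ?_⟩
      rw [← hs]
      change _ = g⁻¹ * (g * j s * g⁻¹) * g
      group
  let e : P ≃* S := ((MonoidHom.ofInjective hi).trans (MulEquiv.subgroupCongr hr)).trans
    (MonoidHom.ofInjective hj').symm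
  have he : ∀ a, g * j (e a) * g⁻¹ = i a := by
    intro a
    have h1 : MonoidHom.ofInjective hj' (e a) =
      MulEquiv.subgroupCongr hr (MonoidHom.ofInjective hi a) := by simp [e]
    exact congrArg Subtype.val h1
  have h1 := hc (X.comap e.toMonoidHom) (char_comap_equiv e hX) (by
    intro hb
    apply hX1
    rw [eq_bot_iff]
    intro s hs
    have : e.symm s ∈ X.comap e.toMonoidHom := by simpa using hs
    rw [hb, Subgroup.mem_bot] at this
    simpa using this)
  rw [pNilpotent_subgroup_iff] at h1 ⊢
  have key : ∀ x ∈ Subgroup.normalizer ((X.map j : Subgroup G) : Set G),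
      g * x * g⁻¹ ∈ Subgroup.normalizer
        (((X.comap e.toMonoidHom).map i : Subgroup G) : Set G) := by
    intro x hx
    refine mem_normalizer_of_forall ?_
    rintro _ ⟨a, ha, rfl⟩
    rw [← he]
    obtain ⟨s, hs, e2⟩ := (Subgroup.mem_normalizer_iff.1 hx (j (e a))).1 ⟨_, ha, rfl⟩
    refine ⟨e.symm s, by simpa using hs, ?_⟩
    rw [← he, e.apply_symm_apply, e2]
    group
  intro x hx y hy h2 h3
  rw [← isReg_conj_iff g]
  have := h1 _ (key x hx) _ (key y hy) ((isReg_conj_iff g).2 h2) ((isReg_conj_iff g).2 h3)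
  have e3 : g * (x * y) * g⁻¹ = g * x * g⁻¹ * (g * y * g⁻¹) := by group
  rwa [e3]

lemma CharNil.of_comp (i : P →* S) (j : S →* G) (hj : Function.Injective j)
    (hc : CharNil p (j.comp i)) : CharNil p i := by
  intro X hX hX1
  have h1 := hc X hX hX1
  have key : ∀ x : S, x ∈ Subgroup.normalizer ((X.map i : Subgroup S) : Set S) →
      j x ∈ Subgroup.normalizer ((X.map (j.comp i) : Subgroup G) : Set G) := by
    intro x hx
    rw [Subgroup.mem_normalizer_iff] at hx ⊢
    have hm : ∀ s, j s ∈ X.map (j.comp i) ↔ s ∈ X.map i := by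
      intro s
      rw [← Subgroup.map_map, Subgroup.mem_map_iff_mem hj]
    intro y
    rw [← Subgroup.map_map]
    constructor
    · rintro ⟨s, hs, rfl⟩
      exact ⟨x * s * x⁻¹, (hx s).1 hs, by simp⟩
    · rintro ⟨s, hs, e⟩
      refine ⟨x⁻¹ * s * x, ?_, ?_⟩
      · refine (hx _).2 ?_
        have : x * (x⁻¹ * s * x) * x⁻¹ = s := by group
        rwa [this]
      · rw [map_mul, map_mul, map_inv, e]; group
  rw [pNilpotent_subgroup_iff] at h1 ⊢
  intro x hx y hy h2 h3
  rw [← isReg_map_iff j hj, map_mul]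
  exact h1 _ (key x hx) _ (key y hy) (h2.map j) (h3.map j)

lemma exists_conj_of_relIndex [Finite G] (hp : p.Prime) {W A B : Subgroup G} (hA : A ≤ W)
    (hB : B ≤ W) (hAp : IsPGroup p A) (hBp : IsPGroup p B) (hAi : ¬ p ∣ A.relIndex W)
    (hBi : ¬ p ∣ B.relIndex W) : ∃ w ∈ W, ∀ x, x ∈ B ↔ w⁻¹ * x * w ∈ A := by
  have := Fact.mk hp
  have hA' : IsPGroup p (A.subgroupOf W) := hAp.of_equiv (Subgroup.subgroupOfEquivOfLe hA).symm
  have hB' : IsPGroup p (B.subgroupOf W) := hBp.of_equiv (Subgroup.subgroupOfEquivOfLe hB).symm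
  obtain ⟨w, hw⟩ := MulAction.exists_smul_eq W (hA'.toSylow hAi) (hB'.toSylow hBi)
  refine ⟨w, w.2, fun x => ?_⟩
  have h1 : ∀ y : W, y ∈ B.subgroupOf W ↔ w⁻¹ * y * w ∈ A.subgroupOf W := by
    intro y
    have h2 : (y ∈ (hB'.toSylow hBi : Subgroup W)) ↔ w⁻¹ * y * w ∈ (hA'.toSylow hAi : Subgroup W) := by
      rw [← hw, Sylow.coe_subgroup_smul, Subgroup.mem_pointwise_smul_iff_inv_smul_mem]
      simp [MulAut.smul_def]
    exact h2
  constructor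
  · intro hx
    exact (h1 ⟨x, hB hx⟩).1 hx
  · intro hx
    have hxW : x ∈ W := by
      have := W.mul_mem (W.mul_mem w.2 (hA hx)) (W.inv_mem w.2)
      simpa [mul_assoc] using this
    exact (h1 ⟨x, hxW⟩).2 hx

end Transport

lemma relIndex_mul_card {G : Type*} [Group G] {A W : Subgroup G} (h : A ≤ W) :
    A.relIndex W * Nat.card A = Nat.card W := by
  rw [mul_comm, ← Nat.card_congr (Subgroup.subgroupOfEquivOfLe h).toEquiv]
  exact Subgroup.card_mul_index _

section Thompson

variable {p : ℕ}

/-- Thompson's theorem for the group `G`: a Sylow `p`-subgroup (the image of `i`) all of whose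
nontrivial characteristic subgroups have `p`-nilpotent normalisers forces `G` to be `p`-nilpotent. -/
def ThompsonProp (p : ℕ) (G : Type u) [Group G] : Prop :=
  ∀ (P : Type u) [Group P] (i : P →* G), Function.Injective i → IsPGroup p P →
    ¬ p ∣ i.range.index → CharNil p i → PNilpotent p G

variable {G : Type u} [Group G] [Finite G]

/-- In a minimal counterexample to Thompson's theorem there is a nontrivial normal `p`-subgroup. -/
lemma exists_normal_pSubgroup (hp : p.Prime)
    (ih : ∀ (G' : Type u) [Group G'] [Finite G'], Nat.card G' < Nat.card G → ThompsonProp p G')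
    {P : Type u} [Group P] {i : P →* G} (hi : Function.Injective i) (hP : IsPGroup p P)
    (hind : ¬ p ∣ i.range.index) (hc : CharNil p i) (hG : ¬ PNilpotent p G) :
    ∃ D : Subgroup G, D.Normal ∧ IsPGroup p D ∧ D ≠ ⊥ := by
  have := Fact.mk hp
  -- pairs of a bad `p`-subgroup `D` and a `p`-subgroup normalising it
  let bad : Set (Subgroup G × Subgroup G) := {x | (IsPGroup p x.1 ∧ x.1 ≠ ⊥ ∧
    ¬ PNilpotent p (Subgroup.normalizer (x.1 : Set G))) ∧ IsPGroup p x.2 ∧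
    x.2 ≤ Subgroup.normalizer (x.1 : Set G)}
  have hbad : bad.Nonempty := by
    by_contra hne
    apply hG
    refine LocPNilpotent.pNilpotent hp _ G rfl (locPNilpotent_of_normalizer fun D hD hD1 => ?_)
    by_contra h1
    exact hne ⟨(D, ⊥), ⟨hD, hD1, h1⟩, IsPGroup.of_bot, bot_le⟩
  obtain ⟨⟨D, S⟩, ⟨⟨hD, hD1, hDn⟩, hS, hSD⟩, hmax⟩ :=
    Set.exists_max_image bad (fun x => Nat.card x.2) (Set.toFinite _) hbad
  refine ⟨D, ?_, hD, hD1⟩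
  by_contra hDnorm
  have hNtop : Subgroup.normalizer (D : Set G) ≠ ⊤ := fun h =>
    hDnorm (Subgroup.normalizer_eq_top_iff.1 h)
  simp only at hDn hSD hmax
  generalize hN : Subgroup.normalizer (D : Set G) = N at *
  have hNc : Nat.card N < Nat.card G := by
    refine lt_of_le_of_ne (Subgroup.card_le_card_group N) fun h => hNtop ?_
    exact Subgroup.card_eq_iff_eq_top N |>.1 h
  obtain ⟨S0, hS0⟩ := IsPGroup.exists_le_sylow
    (hS.of_equiv (Subgroup.subgroupOfEquivOfLe hSD).symm)
  have h1 : ¬ CharNil p (S0 : Subgroup N).subtype := fun h => hDn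
    (ih N hNc S0 _ (Subgroup.subtype_injective _) S0.2
      (by rw [Subgroup.range_subtype]; exact S0.not_dvd_index) h)
  let j : S0 →* G := N.subtype.comp (S0 : Subgroup N).subtype
  have hj : Function.Injective j := N.subtype_injective.comp (Subgroup.subtype_injective _)
  have h2 : ¬ CharNil p j := fun h => h1 (CharNil.of_comp _ _ N.subtype_injective h)
  have hjp : IsPGroup p j.range := S0.2.of_surjective j.rangeRestrict j.rangeRestrict_surjective
  have hSj : S ≤ j.range := by
    intro s hs
    exact ⟨⟨⟨s, hSD hs⟩, hS0 hs⟩, rfl⟩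
  rw [CharNil] at h2
  push Not at h2
  obtain ⟨X, hX, hX1, hXn⟩ := h2
  have hXp : IsPGroup p (X.map j) := (S0.2.to_subgroup X).map j
  have hXb : X.map j ≠ ⊥ := by
    rwa [Ne, Subgroup.map_eq_bot_iff_of_injective _ hj]
  by_cases hjS : p ∣ j.range.index
  · obtain ⟨P1, hP1⟩ := hjp.exists_le_sylow
    have hlt : j.range < P1 := by
      refine lt_of_le_of_ne hP1 fun h => ?_
      rw [h] at hjS
      exact P1.not_dvd_index hjS
    obtain ⟨x, hx, hxj, hxn⟩ := exists_mem_normalizer_not_mem P1.2 hlt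
    have hxX := char_conj hj hX hxn
    have hjX : j.range ≤ Subgroup.normalizer ((X.map j : Subgroup G) : Set G) := by
      intro y hy
      exact char_conj hj hX (Subgroup.le_normalizer hy)
    have h3 := hmax (X.map j, (P1 : Subgroup G) ⊓ Subgroup.normalizer ((X.map j : Subgroup G) : Set G))
      ⟨⟨hXp, hXb, hXn⟩, P1.2.to_le inf_le_left, inf_le_right⟩
    have h4 : j.range < (P1 : Subgroup G) ⊓ Subgroup.normalizer ((X.map j : Subgroup G) : Set G) := by
      refine lt_of_le_of_ne (le_inf hP1 hjX) fun h => hxj ?_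
      rw [h]; exact ⟨hx, hxX⟩
    have h5 := Subgroup.card_le_of_le hSj
    have h6 : Nat.card j.range < Nat.card ((P1 : Subgroup G) ⊓
        Subgroup.normalizer ((X.map j : Subgroup G) : Set G) : Subgroup G) := by
      refine lt_of_le_of_ne (Subgroup.card_le_of_le h4.le) fun e => h4.ne ?_
      exact Subgroup.eq_of_le_of_card_ge h4.le e.ge
    simp only at h3
    omega
  · have hip : IsPGroup p i.range := hP.of_surjective i.rangeRestrict i.rangeRestrict_surjective
    obtain ⟨w, -, hw⟩ := exists_conj_of_relIndex hp (W := ⊤) le_top le_top hjp hip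
      (by rwa [Subgroup.relIndex_top_right]) (by rwa [Subgroup.relIndex_top_right])
    exact hXn (hc.transport hi hj w hw X hX hX1)

/-- In a minimal counterexample, every normal `p'`-subgroup is trivial. -/
lemma eq_bot_of_isReg (hp : p.Prime)
    (ih : ∀ (G' : Type u) [Group G'] [Finite G'], Nat.card G' < Nat.card G → ThompsonProp p G')
    {P : Type u} [Group P] {i : P →* G} (hi : Function.Injective i) (hP : IsPGroup p P)
    (hind : ¬ p ∣ i.range.index) (hc : CharNil p i) (hG : ¬ PNilpotent p G)
    (N : Subgroup G) [hN : N.Normal] (hreg : ∀ x ∈ N, IsReg p x) : N = ⊥ := by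
  have := Fact.mk hp
  by_contra hNb
  apply hG
  refine PNilpotent.of_quotient hreg ?_
  let π := QuotientGroup.mk' N
  have hπ : Function.Surjective π := QuotientGroup.mk'_surjective N
  have hcard : Nat.card (G ⧸ N) < Nat.card G := by
    have h1 := Subgroup.card_mul_index N
    rw [Subgroup.index_eq_card] at h1
    have h2 : 1 < Nat.card N := (Subgroup.one_lt_card_iff_ne_bot N).2 hNb
    have h3 : 0 < Nat.card (G ⧸ N) := Nat.card_pos
    nlinarith
  have hpi : ∀ a : P, ∃ k, i a ^ p ^ k = 1 := by
    intro a
    obtain ⟨k, hk⟩ := hP a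
    exact ⟨k, by rw [← map_pow, hk, map_one]⟩
  have hinj : Function.Injective (π.comp i) := by
    rw [injective_iff_map_eq_one]
    intro a ha
    have h1 : i a ∈ N := (QuotientGroup.eq_one_iff _).1 ha
    obtain ⟨k, hk⟩ := hpi a
    have := (hreg _ h1).eq_one_of_pow hk
    exact hi (by rw [this, map_one])
  refine ih (G ⧸ N) hcard P (π.comp i) hinj hP ?_ ?_
  · rw [MonoidHom.range_comp]
    exact fun h => hind (h.trans (Subgroup.index_map_dvd _ hπ))
  intro X hX hX1
  set Y := X.map i with hY
  have hYp : IsPGroup p Y := (hP.to_subgroup X).map i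
  have hXY : X.map (π.comp i) = Y.map π := by rw [hY, Subgroup.map_map]
  rw [hXY]
  have h1 := hc X hX hX1
  rw [← hY] at h1
  have hNp : ¬ p ∣ Nat.card N := by
    rw [← hp.coprime_iff_not_dvd]
    exact coprime_card_of_isReg hp fun x => isReg_coe_iff.1 (hreg x x.2)
  let W := Y ⊔ N
  have hYW : ¬ p ∣ Y.relIndex W := by
    intro hd
    have h2 : Nat.card Y * Y.relIndex W = Nat.card W := by
      rw [mul_comm]; exact relIndex_mul_card le_sup_left
    have h3 : Nat.card (N ⊔ Y : Subgroup G) * Nat.card (N ⊓ Y : Subgroup G) = Nat.card N * Nat.card Y :=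
      card_sup_mul_card_inf (by rw [Subgroup.normalizer_eq_top_iff.2 hN]; exact le_top)
    rw [sup_comm, ← h2, mul_assoc, mul_comm (Nat.card N)] at h3
    have h4 := Nat.eq_of_mul_eq_mul_left Nat.card_pos h3
    exact hNp (h4 ▸ hd.mul_right _)
  have key : ∀ g ∈ Subgroup.normalizer ((Y.map π : Subgroup (G ⧸ N)) : Set (G ⧸ N)),
      ∃ x ∈ Subgroup.normalizer (Y : Set G), π x = g := by
    intro g hg
    obtain ⟨g, rfl⟩ := hπ g
    have hWmem : ∀ x, x ∈ W ↔ π x ∈ Y.map π := by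
      intro x
      have : W = (Y.map π).comap π := by
        rw [Subgroup.comap_map_eq, QuotientGroup.ker_mk']
      rw [this]; rfl
    -- the conjugate of `Y` by `g` is another Sylow subgroup of `Y N`
    let B := Y.map (MulAut.conj g).toMonoidHom
    have hBmem : ∀ y ∈ Y, g * y * g⁻¹ ∈ B := fun y hy => ⟨y, hy, rfl⟩
    have hBW : B ≤ W := by
      rintro _ ⟨y, hy, rfl⟩
      rw [hWmem]
      have := (Subgroup.mem_normalizer_iff.1 hg (π y)).1 ⟨y, hy, rfl⟩
      rw [← map_inv, ← map_mul, ← map_mul] at this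
      exact this
    have hcB : Nat.card B = Nat.card Y :=
      (Nat.card_congr (Subgroup.equivMapOfInjective _ _ (MulAut.conj g).injective).toEquiv).symm
    have hBi : ¬ p ∣ B.relIndex W := by
      have e1 := relIndex_mul_card hBW
      have e2 := relIndex_mul_card (le_sup_left : Y ≤ W)
      rw [hcB, ← e2] at e1
      rw [Nat.eq_of_mul_eq_mul_right Nat.card_pos e1]
      exact hYW
    obtain ⟨w, hw, hwB⟩ := exists_conj_of_relIndex hp le_sup_left hBW hYp (hYp.map _) hYW hBi
    obtain ⟨y, hy, n, hn, rfl⟩ := Subgroup.mem_sup_of_normal_right.1 hw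
    -- `w⁻¹ g` normalises `Y` and `w` lies in `Y N`
    have hn1 : (y * n)⁻¹ * g ∈ Subgroup.normalizer (Y : Set G) := by
      refine mem_normalizer_of_forall fun a ha => ?_
      have := (hwB _).1 (hBmem a ha)
      have e : (y * n)⁻¹ * g * a * ((y * n)⁻¹ * g)⁻¹ = (y * n)⁻¹ * (g * a * g⁻¹) * (y * n) := by
        group
      rwa [e]
    refine ⟨y * ((y * n)⁻¹ * g), (Subgroup.normalizer _).mul_mem (Subgroup.le_normalizer hy) hn1, ?_⟩
    have hn' : π n = 1 := (QuotientGroup.eq_one_iff _).2 hn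
    simp [hn']
  rw [pNilpotent_subgroup_iff] at h1
  intro a b ha hb
  rw [← isReg_coe_iff] at ha hb ⊢
  obtain ⟨a, ha'⟩ := a
  obtain ⟨b, hb'⟩ := b
  obtain ⟨x, hx, rfl⟩ := key a ha'
  obtain ⟨y, hy, rfl⟩ := key b hb'
  have h2 := h1 x hx y hy (isReg_of_quotient hreg ha) (isReg_of_quotient hreg hb)
  have := h2.map π
  rwa [map_mul] at this

end Thompson

section Thompson2

variable {p : ℕ} {G : Type u} [Group G] [Finite G]

/-- In a minimal counterexample the proper overgroups of the Sylow subgroup are `p`-nilpotent. -/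
lemma pNilpotent_of_range_le
    (ih : ∀ (G' : Type u) [Group G'] [Finite G'], Nat.card G' < Nat.card G → ThompsonProp p G')
    {P : Type u} [Group P] {i : P →* G} (hi : Function.Injective i) (hP : IsPGroup p P)
    (hind : ¬ p ∣ i.range.index) (hc : CharNil p i)
    {L : Subgroup G} (hL : i.range ≤ L) (hLt : L ≠ ⊤) : PNilpotent p L := by
  have hcard : Nat.card L < Nat.card G := by
    refine lt_of_le_of_ne (Subgroup.card_le_card_group L) fun h => hLt ?_
    exact Subgroup.card_eq_iff_eq_top L |>.1 h
  let i' : P →* L := i.codRestrict L fun a => hL ⟨a, rfl⟩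
  have hi' : Function.Injective i' := fun a b h => hi (congrArg Subtype.val h)
  refine ih L hcard P i' hi' hP ?_ (CharNil.of_comp i' L.subtype L.subtype_injective hc)
  have : i'.range = i.range.subgroupOf L := by
    ext x
    constructor
    · rintro ⟨a, rfl⟩; exact ⟨a, rfl⟩
    · rintro ⟨a, ha⟩; exact ⟨a, Subtype.ext ha⟩
  rw [this]
  exact fun h => hind (h.trans (Subgroup.relIndex_dvd_index_of_le hL))

/-- In a minimal counterexample the quotient by the largest normal `p`-subgroup is
`p`-nilpotent. -/
lemma pNilpotent_quotient (hp : p.Prime)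
    (ih : ∀ (G' : Type u) [Group G'] [Finite G'], Nat.card G' < Nat.card G → ThompsonProp p G')
    {P : Type u} [Group P] {i : P →* G} (hi : Function.Injective i) (hP : IsPGroup p P)
    (hind : ¬ p ∣ i.range.index) (hc : CharNil p i)
    {U : Subgroup G} [hU : U.Normal] (hUb : U ≠ ⊥) (hUi : U ≤ i.range)
    (hUmax : ∀ N : Subgroup G, N.Normal → IsPGroup p N → N ≤ U) : PNilpotent p (G ⧸ U) := by
  let π := QuotientGroup.mk' U
  have hπ : Function.Surjective π := QuotientGroup.mk'_surjective U
  have hcard : Nat.card (G ⧸ U) < Nat.card G := by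
    have h1 := Subgroup.card_mul_index U
    rw [Subgroup.index_eq_card] at h1
    have h2 : 1 < Nat.card U := (Subgroup.one_lt_card_iff_ne_bot U).2 hUb
    have h3 : 0 < Nat.card (G ⧸ U) := Nat.card_pos
    nlinarith
  let f : P →* G ⧸ U := π.comp i
  let j : P ⧸ f.ker →* G ⧸ U := QuotientGroup.kerLift f
  have hj : Function.Injective j := QuotientGroup.kerLift_injective f
  have hjf : ∀ a : P, j (QuotientGroup.mk' f.ker a) = π (i a) := fun a => rfl
  have hjr : j.range = i.range.map π := by
    ext x
    constructor
    · rintro ⟨a, rfl⟩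
      obtain ⟨a, rfl⟩ := QuotientGroup.mk'_surjective _ a
      exact ⟨i a, ⟨a, rfl⟩, rfl⟩
    · rintro ⟨_, ⟨a, rfl⟩, rfl⟩
      exact ⟨QuotientGroup.mk' f.ker a, rfl⟩
  refine ih (G ⧸ U) hcard _ j hj (hP.to_quotient _) ?_ ?_
  · rw [hjr]
    exact fun h => hind (h.trans (Subgroup.index_map_dvd _ hπ))
  intro X hX hX1
  let Y : Subgroup G := (X.map j).comap π
  have hYmem : ∀ g, g ∈ Y ↔ π g ∈ X.map j := fun g => Iff.rfl
  have hYi : Y ≤ i.range := by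
    rintro g ⟨a, ha, e⟩
    obtain ⟨a, rfl⟩ := QuotientGroup.mk'_surjective _ a
    rw [hjf] at e
    have h1 : (i a)⁻¹ * g ∈ U := QuotientGroup.eq.1 e
    have h2 := i.range.mul_mem ⟨a, rfl⟩ (hUi h1)
    simpa using h2
  have hYP : IsPGroup p Y := (hP.of_surjective i.rangeRestrict i.rangeRestrict_surjective).to_le hYi
  have hUY : U ≤ Y := fun u hu => by
    rw [hYmem, show π u = 1 from (QuotientGroup.eq_one_iff _).2 hu]
    exact Subgroup.one_mem _
  have hYn : ¬ Y.Normal := by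
    intro h
    have h1 : Y = U := le_antisymm (hUmax Y h hYP) hUY
    apply hX1
    rw [Subgroup.eq_bot_iff_forall]
    intro a ha
    obtain ⟨g, hg⟩ := hπ (j a)
    have h2 : g ∈ Y := ⟨a, ha, hg.symm⟩
    rw [h1] at h2
    apply hj
    rw [← hg, map_one]
    exact (QuotientGroup.eq_one_iff _).2 h2
  have hN1 : Subgroup.normalizer (Y : Set G) ≠ ⊤ := fun h => hYn (Subgroup.normalizer_eq_top_iff.1 h)
  have hN2 : i.range ≤ Subgroup.normalizer (Y : Set G) := by
    rintro _ ⟨a, rfl⟩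
    refine mem_normalizer_of_forall ?_
    intro g hg
    obtain ⟨b, hb, e⟩ := hg
    refine ⟨QuotientGroup.mk' f.ker a * b * (QuotientGroup.mk' f.ker a)⁻¹, ?_, ?_⟩
    · exact (Subgroup.normal_of_characteristic X).conj_mem b hb _
    · rw [map_mul, map_mul, map_inv, e, hjf]; rfl
  have hN3 := pNilpotent_of_range_le ih hi hP hind hc hN2 hN1
  have hmap : ∀ g, g ∈ Subgroup.normalizer (Y : Set G) ↔
      π g ∈ Subgroup.normalizer ((X.map j : Subgroup (G ⧸ U)) : Set (G ⧸ U)) := by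
    intro g
    constructor
    · intro hg
      refine mem_normalizer_of_forall ?_
      intro x hx
      obtain ⟨x, rfl⟩ := hπ x
      have := (Subgroup.mem_normalizer_iff.1 hg x).1 hx
      rw [hYmem] at this
      simpa using this
    · intro hg
      refine mem_normalizer_of_forall fun x hx => ?_
      have := (Subgroup.mem_normalizer_iff.1 hg (π x)).1 hx
      rw [hYmem]
      simpa using this
  let ψ : Subgroup.normalizer (Y : Set G) →*
      Subgroup.normalizer ((X.map j : Subgroup (G ⧸ U)) : Set (G ⧸ U)) :=
    (π.comp (Subgroup.subtype _)).codRestrict _ fun g => (hmap g).1 g.2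
  refine hN3.of_surjective hp ψ ?_
  rintro ⟨g, hg⟩
  obtain ⟨g, rfl⟩ := hπ g
  exact ⟨⟨g, (hmap g).2 hg⟩, rfl⟩

/-- **Thompson's normal `p`-complement theorem**, for odd `p`. -/
theorem thompson (hp : p.Prime) (hp2 : p ≠ 2) : ∀ (n : ℕ) (G : Type u) [Group G] [Finite G],
    Nat.card G = n → ThompsonProp p G := by
  intro n
  induction n using Nat.strong_induction_on with
  | _ n ihn =>
  intro G _ _ hn P _ i hi hP hind hc
  have := Fact.mk hp
  have ih : ∀ (G' : Type u) [Group G'] [Finite G'], Nat.card G' < Nat.card G → ThompsonProp p G' :=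
    fun G' _ _ h => ihn _ (hn ▸ h) G' rfl
  by_contra hG
  set R := i.range with hR
  have hRp : IsPGroup p R := hP.of_surjective i.rangeRestrict i.rangeRestrict_surjective
  -- the largest normal `p`-subgroup `U`
  obtain ⟨D, hDn, hDp, hD1⟩ := exists_normal_pSubgroup hp ih hi hP hind hc hG
  obtain ⟨U, ⟨hU, hUp⟩, hUM⟩ := Set.exists_max_image
    {N : Subgroup G | N.Normal ∧ IsPGroup p N} (fun N => Nat.card N) (Set.toFinite _)
    ⟨D, hDn, hDp⟩
  have hUmax : ∀ N : Subgroup G, N.Normal → IsPGroup p N → N ≤ U := by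
    intro N hN hNp
    have h1 := hUM (U ⊔ N) ⟨inferInstance, hUp.to_sup_of_normal_right hNp⟩
    rw [Subgroup.eq_of_le_of_card_ge (le_sup_left : U ≤ U ⊔ N) h1]
    exact le_sup_right
  have hUb : U ≠ ⊥ := fun h => hD1 (le_bot_iff.1 (h ▸ hUmax D hDn hDp))
  have hUR : U ≤ R := hUp.le_sylow_of_normal (hRp.toSylow hind)
  have hbot : ∀ N : Subgroup G, N.Normal → (∀ x ∈ N, IsReg p x) → N = ⊥ := fun N hN h =>
    eq_bot_of_isReg hp ih hi hP hind hc hG N h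
  -- the preimage `K` of the normal `p`-complement of `G / U`
  have hq := pNilpotent_quotient hp ih hi hP hind hc hUb hUR hUmax
  let π := QuotientGroup.mk' U
  let K : Subgroup G := hq.compl.comap π
  have hKmem : ∀ x, x ∈ K ↔ IsReg p (π x) := fun x => Iff.rfl
  have hKn : K.Normal := inferInstance
  have hKp : ∀ x ∈ K, ∀ k, x ^ p ^ k = 1 → x ∈ U := by
    intro x hx k hk
    refine (QuotientGroup.eq_one_iff x).1 (((hKmem x).1 hx).eq_one_of_pow (k := k) ?_)
    rw [← map_pow, hk, map_one]
  have hcent : Subgroup.centralizer (U : Set G) ⊓ K ≤ U := by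
    set M := Subgroup.centralizer (U : Set G) ⊓ K with hM
    have hMn : M.Normal := inferInstance
    have hloc : LocPNilpotent p M := by
      intro D hD g hg hn d hd
      obtain ⟨k, hk⟩ := hD ⟨d, hd⟩
      have h1 : (d : G) ∈ U := hKp d d.2.2 k (by
        have := congrArg (fun x : D => ((x : M) : G)) hk
        simpa using this)
      have h2 := Subgroup.mem_centralizer_iff.1 g.2.1 d h1
      apply Subtype.ext
      change (g : G) * d * (g : G)⁻¹ = d
      rw [← h2]; group
    have hMN := LocPNilpotent.pNilpotent hp _ M rfl hloc
    have hb := hbot (hMN.compl.map M.subtype) (by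
      refine ⟨?_⟩
      rintro _ ⟨x, hx, rfl⟩ g
      refine ⟨⟨g * x * g⁻¹, hMn.conj_mem x x.2 g⟩, ?_, rfl⟩
      exact isReg_coe_iff.1 ((isReg_conj_iff g).2 (isReg_coe_iff.2 hx))) (by
      rintro _ ⟨x, hx, rfl⟩
      exact isReg_coe_iff.2 hx)
    refine hUmax M hMn (isPGroup_of_isReg_eq_one hp fun x hx => ?_)
    have : (x : G) ∈ hMN.compl.map M.subtype := ⟨x, hx, rfl⟩
    rw [hb, Subgroup.mem_bot] at this
    exact Subtype.ext this
  have hcfg : TConfig p R U K := by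
    refine ⟨hRp, hU, hUp, hUmax, hKn, ?_, hKp, ?_, hcent, hUR, ?_, ?_, ?_⟩
    · intro u hu
      rw [hKmem, show π u = 1 from (QuotientGroup.eq_one_iff _).2 hu]
      exact IsReg.one
    · intro x hx
      refine ⟨orderOf (π x), hx, ?_⟩
      rw [← QuotientGroup.eq_one_iff]
      exact pow_orderOf_eq_one (π x)
    · intro L hL
      by_cases hLt : L = ⊤
      · exact Or.inl hLt
      right
      have hLN := pNilpotent_of_range_le ih hi hP hind hc hL hLt
      have hLp : IsPGroup p L := by
        refine isPGroup_of_isReg_eq_one hp fun x hx => ?_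
        -- a `p`-regular element of `L` centralises `U`
        have h1 : (x : G) ∈ Subgroup.centralizer (U : Set G) := by
          rw [Subgroup.mem_centralizer_iff]
          intro u hu
          have hu' : u ∈ L := hL (hUR hu)
          have h2 : IsReg p ((⟨u, hu'⟩ : L) * x * (⟨u, hu'⟩ : L)⁻¹ * x⁻¹) :=
            hLN _ _ ((isReg_conj_iff _).2 hx) hx.inv
          have h3 : IsReg p (u * x * u⁻¹ * (x : G)⁻¹) := isReg_coe_iff.2 h2
          have h4 : u * x * u⁻¹ * (x : G)⁻¹ ∈ U := by
            have := U.mul_mem hu (hU.conj_mem _ (U.inv_mem hu) (x : G))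
            simpa [mul_assoc] using this
          have h5 := h3.eq_one_of_mem hUp h4
          rw [mul_inv_eq_one, mul_inv_eq_iff_eq_mul] at h5
          exact h5
        have h6 : (x : G) ∈ U := hcent ⟨h1, (hKmem _).2 ((isReg_coe_iff.2 hx).map π)⟩
        exact Subtype.ext ((isReg_coe_iff.2 hx).eq_one_of_mem hUp h6)
      exact (hRp.toSylow hind).3 hLp hL
    · intro h
      rw [h] at hRp
      exact hG (hRp.of_equiv Subgroup.topEquiv).pNilpotent
    · rw [← Subgroup.index_eq_one]
      have h1 : (R ⊔ K).index ∣ R.index := Subgroup.index_dvd_of_le le_sup_left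
      have h2 : (R ⊔ K).index ∣ K.index := Subgroup.index_dvd_of_le le_sup_right
      have h3 : IsPGroup p (G ⧸ K) := by
        intro x
        obtain ⟨x, rfl⟩ := QuotientGroup.mk'_surjective K x
        obtain ⟨k, hk⟩ := exists_isReg_pow hp x
        refine ⟨k, ?_⟩
        rw [← map_pow]
        exact (QuotientGroup.eq_one_iff _).2 ((hKmem _).2 (hk.map π))
      obtain ⟨m, hm⟩ := IsPGroup.iff_card.1 h3
      rw [Subgroup.index_eq_card K, hm] at h2
      have h4 : (p ^ m).Coprime R.index :=
        Nat.Coprime.pow_left m ((hp.coprime_iff_not_dvd).2 hind)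
      exact Nat.eq_one_of_dvd_coprimes h4 h2 h1
  have hcR : CharNil p R.subtype := hc.transport hi R.subtype_injective 1 (by
    intro x; simp [hR])
  have hfin : ∀ X : Subgroup R, X.Characteristic → X ≠ ⊥ → ¬ (X.map R.subtype).Normal := by
    intro X hX hX1 hn
    have h1 := hcR X hX hX1
    rw [Subgroup.normalizer_eq_top_iff.2 hn] at h1
    exact hG (pNilpotent_top_iff.1 h1)
  have hRb : R ≠ ⊥ := fun h => hUb (le_bot_iff.1 (h ▸ hUR))
  have : Nontrivial R := (Subgroup.nontrivial_iff_ne_bot R).2 hRb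
  rcases hcfg.normal_or_normal hp hp2 with h | h
  · refine hfin (Subgroup.center R) inferInstance ?_ ?_
    · have := hRp.center_nontrivial
      exact (Subgroup.nontrivial_iff_ne_bot _).1 this
    · have : (Subgroup.center R).map R.subtype = TConfig.ctr R := by
        ext z
        rw [TConfig.mem_ctr]
        constructor
        · rintro ⟨z, hz, rfl⟩
          exact ⟨z.2, fun x hx => congrArg Subtype.val (Subgroup.mem_center_iff.1 hz ⟨x, hx⟩)⟩
        · rintro ⟨hz, h2⟩
          exact ⟨⟨z, hz⟩, Subgroup.mem_center_iff.2 fun x => Subtype.ext (h2 x x.2), rfl⟩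
      rw [this]; exact h
  · refine hfin _ (thompsonJ_characteristic R) ?_ ?_
    · intro h1
      have h2 := Subgroup.map_subgroupOf_eq_of_le (thompsonJ_le R)
      rw [h1, Subgroup.map_bot] at h2
      exact thompsonJ_ne_bot hRb h2.symm
    · rw [Subgroup.map_subgroupOf_eq_of_le (thompsonJ_le R)]; exact h

end Thompson2

/-! ### Groups with a fixed-point-free automorphism of prime order -/

/-- `G` is `p`-nilpotent for all primes `p`. For finite groups this is equivalent to nilpotency. -/
def AllNil (G : Type*) [Group G] : Prop := ∀ p : ℕ, p.Prime → PNilpotent p G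

lemma AllNil.of_injective {G G' : Type*} [Group G] [Group G'] (φ : G →* G')
    (hφ : Function.Injective φ) (h : AllNil G') : AllNil G :=
  fun p hp => (h p hp).of_injective φ hφ

lemma isReg_of_isPGroup {p s : ℕ} {G : Type*} [Group G] (hp : p.Prime) (hs : s.Prime) (hps : s ≠ p)
    (h : IsPGroup p G) (x : G) : IsReg s x := by
  obtain ⟨k, hk⟩ := h x
  exact IsReg.of_pow (((Nat.coprime_primes hs hp).2 hps).pow_right k) hk

lemma IsPGroup.allNil {p : ℕ} {G : Type*} [Group G] (hp : p.Prime) (h : IsPGroup p G) :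
    AllNil G := by
  intro s hs
  by_cases hps : s = p
  · rw [hps]; exact h.pNilpotent
  · exact fun x y _ _ => isReg_of_isPGroup hp hs hps h _

lemma PNilpotent.of_center {p : ℕ} {G : Type u} [Group G] [Finite G] (hp : p.Prime)
    (h : PNilpotent p (G ⧸ Subgroup.center G)) : PNilpotent p G := by
  refine LocPNilpotent.pNilpotent hp _ G rfl ?_
  intro D hD g hg hn d hd
  let π := QuotientGroup.mk' (Subgroup.center G)
  have h1 := h.loc (D.map π) (hD.map π) (π g) (hg.map π) (by
    have h0 : ∀ x ∈ D.map π, π g * x * (π g)⁻¹ ∈ D.map π := by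
      rintro _ ⟨x, hx, rfl⟩
      exact ⟨g * x * g⁻¹, (hn x).1 hx, by simp⟩
    have := mem_normalizer_of_forall h0
    exact fun x => Subgroup.mem_normalizer_iff.1 this x) (π d) ⟨d, hd, rfl⟩
  have h2 : d⁻¹ * (g * d * g⁻¹) ∈ Subgroup.center G := by
    rw [← QuotientGroup.eq]
    rw [← map_mul, ← map_inv, ← map_mul] at h1
    exact h1.symm
  set z := d⁻¹ * (g * d * g⁻¹) with hz
  have hzD : z ∈ D := D.mul_mem (D.inv_mem hd) ((hn d).1 hd)
  have hzc : ∀ x, x * z = z * x := fun x => Subgroup.mem_center_iff.1 h2 x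
  have h3 : g * d * g⁻¹ = d * z := by rw [hz]; group
  have h4 : ∀ n : ℕ, g ^ n * d * (g ^ n)⁻¹ = d * z ^ n := by
    intro n
    induction n with
    | zero => simp
    | succ n ih =>
      calc g ^ (n + 1) * d * (g ^ (n + 1))⁻¹ = g * (g ^ n * d * (g ^ n)⁻¹) * g⁻¹ := by
            rw [pow_succ']; group
        _ = g * d * g⁻¹ * (g * z ^ n * g⁻¹) := by rw [ih]; group
        _ = _ := by
          have : g * z ^ n = z ^ n * g := (Commute.pow_right (show Commute g z from hzc g) n)
          rw [h3, this, pow_succ']; group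
  have h5 := h4 (orderOf g)
  rw [pow_orderOf_eq_one] at h5
  have h6 : z ^ orderOf g = 1 := by simpa using h5
  have h7 : z = 1 := (IsReg.of_pow hg h6).eq_one_of_mem hD hzD
  rw [h3, h7, mul_one]

section Coprime

variable {S V : Type*} [Group S] [Finite S] [CommGroup V] [MulDistribMulAction S V]

lemma aut_pow_fpf {S : Type*} [Group S] {r : ℕ} (hr : r.Prime) {β : MulAut S} (hβ : β ^ r = 1)
    (hfix : ∀ x, β x = x → x = 1) {i : ℕ} (hi : 0 < i) (hir : i < r) {x : S}
    (hx : (β ^ i) x = x) : x = 1 := by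
  apply hfix
  let T := MulAction.stabilizer (MulAut S) x
  have h1 : β ^ i ∈ T := hx
  have h2 : β ^ r ∈ T := by rw [hβ]; exact T.one_mem
  have hc : Nat.Coprime i r := (Nat.coprime_of_lt_prime hi.ne' hir hr).symm
  have h3 : β ^ (Nat.gcd i r : ℤ) ∈ T := by
    rw [Nat.gcd_eq_gcd_ab, zpow_add, zpow_mul, zpow_mul]
    refine T.mul_mem (T.zpow_mem ?_ _) (T.zpow_mem ?_ _)
    · exact_mod_cast h1
    · exact_mod_cast h2
  rw [hc.gcd_eq_one] at h3
  have h4 : β ∈ T := by simpa using h3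
  exact h4

/-- Let a group of prime order `r` act on `S` and on the abelian group `V`, fixed-point-freely on
both and compatibly with an action of `S` on `V`. Then `S` fixes all `|S|`-th powers in `V`: the
products over the conjugates of `⟨γ⟩` vanish, and so `v ^ |S|` is a product of `S`-traces. -/
lemma smul_pow_card {r : ℕ} (hr : r.Prime) (β : MulAut S) (γ : MulAut V) (hβ : β ^ r = 1)
    (hγ : γ ^ r = 1) (hβf : ∀ x, β x = x → x = 1) (hγf : ∀ v, γ v = v → v = 1)
    (hc : ∀ (s : S) (v : V), γ (s • v) = β s • γ v) (s : S) (v : V) :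
    s • v ^ Nat.card S = v ^ Nat.card S := by
  have := Fintype.ofFinite S
  have hcn : ∀ (n : ℕ) (s : S) (v : V), (γ ^ n) (s • v) = (β ^ n) s • (γ ^ n) v := by
    intro n
    induction n with
    | zero => intro s v; rfl
    | succ n ih =>
      intro s v
      rw [pow_succ', pow_succ', MulAut.mul_apply, MulAut.mul_apply, MulAut.mul_apply, ih, hc]
  have hnorm : ∀ v : V, ∏ i ∈ Finset.range r, (γ ^ i) v = 1 := by
    intro v
    apply hγf
    rw [map_prod]
    have h1 : ∀ i, γ ((γ ^ i) v) = (γ ^ (i + 1)) v := fun i => by rw [pow_succ']; rfl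
    simp_rw [h1]
    have h2 := Finset.prod_range_succ (fun i => (γ ^ i) v) r
    rw [Finset.prod_range_succ', hγ] at h2
    exact mul_right_cancel h2
  -- the `S`-trace
  let T : V → V := fun w => ∏ t : S, t • w
  have hT : ∀ (s : S) w, s • T w = T w := by
    intro s w
    change s • ∏ t : S, t • w = ∏ t : S, t • w
    rw [Finset.smul_prod']
    simp_rw [smul_smul]
    exact (Group.mulLeft_bijective s).prod_comp fun t => t • w
  have h1 : ∏ x : S, x⁻¹ • ∏ i ∈ Finset.range r, (γ ^ i) (x • v) = 1 := by
    simp [hnorm]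
  have h2 : ∏ i ∈ Finset.range r, ∏ x : S, (x⁻¹ * (β ^ i) x) • (γ ^ i) v = 1 := by
    rw [Finset.prod_comm, ← h1]
    refine Finset.prod_congr rfl fun x _ => ?_
    rw [Finset.smul_prod']
    refine Finset.prod_congr rfl fun i _ => ?_
    rw [hcn, smul_smul]
  have h3 : ∀ i, 0 < i → i < r → ∏ x : S, (x⁻¹ * (β ^ i) x) • (γ ^ i) v = T ((γ ^ i) v) := by
    intro i hi hir
    have hinj : Function.Injective fun x : S => x⁻¹ * (β ^ i) x := by
      intro x y hxy
      have h4 : (β ^ i) (y * x⁻¹) = y * x⁻¹ := by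
        have : x⁻¹ * (β ^ i) x = y⁻¹ * (β ^ i) y := hxy
        rw [inv_mul_eq_iff_eq_mul] at this
        rw [map_mul, map_inv, this]; group
      have h5 := aut_pow_fpf hr hβ hβf hi hir h4
      exact (mul_inv_eq_one.1 h5).symm
    exact (Finite.injective_iff_bijective.1 hinj).prod_comp fun t => t • (γ ^ i) v
  obtain ⟨m, rfl⟩ : ∃ m, r = m + 1 := ⟨r - 1, by have := hr.pos; omega⟩
  rw [Finset.prod_range_succ'] at h2
  have h4 : ∏ x : S, (x⁻¹ * (β ^ 0) x) • (γ ^ 0) v = v ^ Nat.card S := by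
    simp [Nat.card_eq_fintype_card]
  rw [h4] at h2
  have h5 : v ^ Nat.card S = (∏ i ∈ Finset.range m, T ((γ ^ (i + 1)) v))⁻¹ := by
    rw [eq_inv_iff_mul_eq_one, mul_comm, ← h2]
    congr 1
    refine Finset.prod_congr rfl fun i hi => ?_
    exact (h3 (i + 1) (by omega) (by have := Finset.mem_range.1 hi; omega)).symm
  rw [h5, smul_inv', Finset.smul_prod']
  simp_rw [hT]

end Coprime

section Restrict

variable {G : Type*} [Group G] [Finite G]

/-- The restriction of an automorphism to an invariant subgroup. -/
noncomputable def restrAut (α : MulAut G) (S : Subgroup G) (hS : ∀ x ∈ S, α x ∈ S) : MulAut S :=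
  MulEquiv.ofBijective ((α.toMonoidHom.comp S.subtype).codRestrict S fun x => hS x x.2)
    (Finite.injective_iff_bijective.1 fun _ _ h => Subtype.ext (α.injective (congrArg Subtype.val h)))

lemma restrAut_apply (α : MulAut G) (S : Subgroup G) (hS : ∀ x ∈ S, α x ∈ S) (x : S) :
    ((restrAut α S hS x : S) : G) = α x := rfl

lemma restrAut_pow {α : MulAut G} {r : ℕ} (hα : α ^ r = 1) (S : Subgroup G)
    (hS : ∀ x ∈ S, α x ∈ S) : (restrAut α S hS) ^ r = 1 := by
  have h : ∀ (n : ℕ) (x : S), ((((restrAut α S hS) ^ n) x : S) : G) = (α ^ n) x := by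
    intro n
    induction n with
    | zero => intro x; rfl
    | succ n ih =>
      intro x
      rw [pow_succ', pow_succ', MulAut.mul_apply, MulAut.mul_apply, restrAut_apply, ih]
  ext x
  rw [h, hα]; rfl

lemma restrAut_fpf {α : MulAut G} (hf : ∀ g, α g = g → g = 1) (S : Subgroup G)
    (hS : ∀ x ∈ S, α x ∈ S) (x : S) (hx : restrAut α S hS x = x) : x = 1 :=
  Subtype.ext (hf x (congrArg Subtype.val hx))

/-- A fixed-point-free automorphism induces a fixed-point-free one on invariant quotients. -/
lemma exists_quotient_aut {α : MulAut G} {r : ℕ} (hα : α ^ r = 1) (hf : ∀ g, α g = g → g = 1)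
    (N : Subgroup G) [N.Normal] (hN : ∀ x ∈ N, α x ∈ N) :
    ∃ β : MulAut (G ⧸ N), β ^ r = 1 ∧ ∀ g, β g = g → g = 1 := by
  have hmap : N.map (α : G ≃* G).toMonoidHom = N := by
    have hle : N.map (α : G ≃* G).toMonoidHom ≤ N := by
      rintro _ ⟨x, hx, rfl⟩; exact hN x hx
    refine Subgroup.eq_of_le_of_card_ge hle ?_
    exact (Nat.card_congr (Subgroup.equivMapOfInjective _ _ (α : G ≃* G).injective).toEquiv).le
  let β : MulAut (G ⧸ N) := QuotientGroup.congr N N α hmap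
  have hβ : ∀ g : G, β (g : G ⧸ N) = ((α g : G) : G ⧸ N) := fun g => rfl
  refine ⟨β, ?_, ?_⟩
  · have h : ∀ (n : ℕ) (g : G), (β ^ n) (g : G ⧸ N) = (((α ^ n) g : G) : G ⧸ N) := by
      intro n
      induction n with
      | zero => intro x; rfl
      | succ n ih =>
        intro x
        rw [pow_succ', pow_succ', MulAut.mul_apply, MulAut.mul_apply, ih, hβ]
    ext g
    obtain ⟨g, rfl⟩ := QuotientGroup.mk_surjective g
    rw [h, hα]; rfl
  · intro g hg
    obtain ⟨g, rfl⟩ := QuotientGroup.mk_surjective g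
    rw [hβ] at hg
    have h1 : g⁻¹ * α g ∈ N := QuotientGroup.eq.1 hg.symm
    -- `n ↦ n⁻¹ α(n)` is a bijection of `N`
    have hinj : Function.Injective fun n : N => n⁻¹ * restrAut α N hN n := by
      intro x y hxy
      have h2 : x⁻¹ * restrAut α N hN x = y⁻¹ * restrAut α N hN y := hxy
      have h4 : restrAut α N hN (y * x⁻¹) = y * x⁻¹ := by
        rw [inv_mul_eq_iff_eq_mul] at h2
        rw [map_mul, map_inv, h2]; group
      exact (mul_inv_eq_one.1 (restrAut_fpf hf N hN _ h4)).symm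
    obtain ⟨n, hn⟩ := (Finite.injective_iff_bijective.1 hinj).2 ⟨_, h1⟩
    have h3 : (n : G)⁻¹ * α n = g⁻¹ * α g := congrArg Subtype.val hn
    have h5 : g * (n : G)⁻¹ = 1 := by
      apply hf
      rw [map_mul, map_inv]
      rw [inv_mul_eq_iff_eq_mul] at h3
      rw [h3]; group
    rw [mul_inv_eq_one] at h5
    rw [QuotientGroup.eq_one_iff, h5]
    exact n.2

end Restrict

section FPF

variable {G : Type u} [Group G] [Finite G] {α : MulAut G} {r : ℕ}

lemma not_dvd_card_of_fpf (hr : r.Prime) (hα : α ^ r = 1) (hf : ∀ g, α g = g → g = 1) :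
    ¬ r ∣ Nat.card G := by
  have := Fact.mk hr
  have hΓ : IsPGroup r (Subgroup.zpowers α) := by
    rintro ⟨_, m, rfl⟩
    refine ⟨1, Subtype.ext ?_⟩
    change (α ^ m) ^ r ^ 1 = 1
    rw [pow_one, ← zpow_natCast, ← zpow_mul, mul_comm, zpow_mul, zpow_natCast, hα, one_zpow]
  intro hd
  obtain ⟨b, hb, hb1⟩ := hΓ.exists_fixed_point_of_prime_dvd_card_of_fixed_point G hd (a := 1)
    (by intro γ; exact map_one (γ : MulAut G))
  refine hb1 (hf b ?_).symm
  exact hb ⟨α, Subgroup.mem_zpowers α⟩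

lemma exists_fpf_sylow (hr : r.Prime) (hα : α ^ r = 1) (hf : ∀ g, α g = g → g = 1) {s : ℕ}
    (hs : s.Prime) : ∃ S : Sylow s G, ∀ x ∈ S, α x ∈ S := by
  have hΓ : IsPGroup r (Subgroup.zpowers α) := by
    rintro ⟨_, m, rfl⟩
    refine ⟨1, Subtype.ext ?_⟩
    change (α ^ m) ^ r ^ 1 = 1
    rw [pow_one, ← zpow_natCast, ← zpow_mul, mul_comm, zpow_mul, zpow_natCast, hα, one_zpow]
  obtain ⟨S, hS⟩ := exists_invariant_sylow (s := s) (Γ := Subgroup.zpowers α) (K := G) hr hs hΓ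
    (not_dvd_card_of_fpf hr hα hf)
  exact ⟨S, fun x hx => hS ⟨α, Subgroup.mem_zpowers α⟩ x hx⟩

/-- A normal `α`-invariant abelian `t`-subgroup is centralised by every `α`-invariant `s`-subgroup,
for primes `s ≠ t`. -/
lemma comm_of_coprime (hr : r.Prime) (hα : α ^ r = 1) (hf : ∀ g, α g = g → g = 1) {s t : ℕ}
    (hs : s.Prime) (ht : t.Prime) (hst : s ≠ t) {V S : Subgroup G} (hV : V.Normal)
    (hVα : ∀ x ∈ V, α x ∈ V) (hVc : ∀ a ∈ V, ∀ b ∈ V, a * b = b * a) (hVt : IsPGroup t V)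
    (hSα : ∀ x ∈ S, α x ∈ S) (hSs : IsPGroup s S) : ∀ x ∈ S, ∀ v ∈ V, x * v * x⁻¹ = v := by
  have := Fact.mk hs
  let _ : CommGroup V := { (inferInstance : Group V) with
    mul_comm := fun a b => Subtype.ext (hVc a a.2 b b.2) }
  let act : MulDistribMulAction S V :=
    MulDistribMulAction.compHom V ((MulAut.conjNormal (H := V)).comp S.subtype)
  have hact : ∀ (x : S) (v : V), ((x • v : V) : G) = x * v * (x : G)⁻¹ := fun x v => rfl
  intro x hx v hv
  obtain ⟨m, hm⟩ := IsPGroup.iff_card.1 hSs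
  obtain ⟨k, hk⟩ := hVt ⟨v, hv⟩
  have hcop : Nat.Coprime (s ^ m) (t ^ k) := ((Nat.coprime_primes hs ht).2 hst).pow m k
  have h1 := smul_pow_card (S := S) (V := V) hr (restrAut α S hSα) (restrAut α V hVα)
    (restrAut_pow hα S hSα) (restrAut_pow hα V hVα) (restrAut_fpf hf S hSα)
    (restrAut_fpf hf V hVα) (by
      intro y w
      apply Subtype.ext
      rw [hact, restrAut_apply, restrAut_apply, hact, restrAut_apply, map_mul, map_mul, map_inv])
    ⟨x, hx⟩ ⟨v, hv⟩
  rw [hm] at h1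
  -- `v` is a power of `v ^ |S|`
  obtain ⟨e, he⟩ : ∃ e, ((⟨v, hv⟩ : V) ^ s ^ m) ^ e = ⟨v, hv⟩ := by
    have h2 : orderOf (⟨v, hv⟩ : V) ∣ t ^ k := orderOf_dvd_of_pow_eq_one hk
    exact exists_pow_eq_self_of_coprime (Nat.Coprime.coprime_dvd_right h2 hcop)
  have h3 : (⟨x, hx⟩ : S) • (⟨v, hv⟩ : V) = ⟨v, hv⟩ := by
    conv_lhs => rw [← he]
    rw [smul_pow', h1, he]
  exact congrArg Subtype.val h3

/-- If there is a nontrivial normal `α`-invariant abelian subgroup of prime power order, then `G`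
has a nontrivial centre. -/
lemma center_ne_bot_of_fpf (hr : r.Prime) (hα : α ^ r = 1) (hf : ∀ g, α g = g → g = 1) {t : ℕ}
    (ht : t.Prime) {V : Subgroup G} (hV : V.Normal) (hVα : ∀ x ∈ V, α x ∈ V)
    (hVc : ∀ a ∈ V, ∀ b ∈ V, a * b = b * a) (hVt : IsPGroup t V) (hVb : V ≠ ⊥) :
    Subgroup.center G ≠ ⊥ := by
  have := Fact.mk ht
  obtain ⟨R, hR⟩ := exists_fpf_sylow hr hα hf ht
  let act : MulDistribMulAction R V :=
    MulDistribMulAction.compHom V ((MulAut.conjNormal (H := V)).comp (R : Subgroup G).subtype)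
  have hact : ∀ (x : R) (v : V), ((x • v : V) : G) = x * v * (x : G)⁻¹ := fun x v => rfl
  have hd : t ∣ Nat.card V := by
    obtain ⟨m, hm⟩ := IsPGroup.iff_card.1 hVt
    have h1 : 1 < Nat.card V := (Subgroup.one_lt_card_iff_ne_bot V).2 hVb
    rw [hm] at h1 ⊢
    exact dvd_pow_self t (by rintro rfl; simp at h1)
  obtain ⟨c, hc, hc1⟩ := R.2.exists_fixed_point_of_prime_dvd_card_of_fixed_point V hd (a := 1)
    (fun γ => smul_one γ)
  have hcent : Subgroup.centralizer {(c : G)} = ⊤ := by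
    rw [← Subgroup.index_eq_one]
    by_contra hne
    obtain ⟨s, hs, hsd⟩ := Nat.exists_prime_and_dvd hne
    have := Fact.mk hs
    have key : ∃ S : Sylow s G, (S : Subgroup G) ≤ Subgroup.centralizer {(c : G)} := by
      by_cases hst : s = t
      · subst hst
        refine ⟨R, fun x hx => ?_⟩
        rw [Subgroup.mem_centralizer_singleton_iff]
        have := congrArg Subtype.val (hc ⟨x, hx⟩)
        rw [hact] at this
        exact mul_inv_eq_iff_eq_mul.1 this
      · obtain ⟨S, hS⟩ := exists_fpf_sylow hr hα hf hs
        refine ⟨S, fun x hx => ?_⟩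
        rw [Subgroup.mem_centralizer_singleton_iff]
        exact mul_inv_eq_iff_eq_mul.1
          (comm_of_coprime hr hα hf hs ht hst hV hVα hVc hVt hS S.2 x hx c c.2)
    obtain ⟨S, hS⟩ := key
    exact S.not_dvd_index (hsd.trans (Subgroup.index_dvd_of_le hS))
  intro hb
  have h1 : (c : G) ∈ Subgroup.center G := by
    rw [Subgroup.mem_center_iff]
    intro g
    exact Subgroup.mem_centralizer_singleton_iff.1 (hcent ▸ Subgroup.mem_top g)
  rw [hb, Subgroup.mem_bot] at h1
  exact hc1 (Subtype.ext h1).symm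

/-- The centre of the Sylow `t`-subgroup of a subgroup `M` that is `p`-nilpotent for all `p`. -/
def sylowCenter (t : ℕ) (M : Subgroup G) (hM : AllNil M) : Subgroup G where
  carrier := {x | (x ∈ M ∧ ∀ s : ℕ, s.Prime → s ≠ t → IsReg s x) ∧
    ∀ y ∈ M, (∀ s : ℕ, s.Prime → s ≠ t → IsReg s y) → x * y = y * x}
  one_mem' := ⟨⟨M.one_mem, fun _ _ _ => IsReg.one⟩, fun y _ _ => by simp⟩
  mul_mem' := by
    rintro a b ⟨⟨ha, ha1⟩, ha2⟩ ⟨⟨hb, hb1⟩, hb2⟩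
    refine ⟨⟨M.mul_mem ha hb, fun s hs hst => ?_⟩, fun y hy hy1 => ?_⟩
    · exact pNilpotent_subgroup_iff.1 (hM s hs) a ha b hb (ha1 s hs hst) (hb1 s hs hst)
    · rw [mul_assoc, hb2 y hy hy1, ← mul_assoc, ha2 y hy hy1, mul_assoc]
  inv_mem' := by
    rintro a ⟨⟨ha, ha1⟩, ha2⟩
    refine ⟨⟨M.inv_mem ha, fun s hs hst => (ha1 s hs hst).inv⟩, fun y hy hy1 => ?_⟩
    exact (Commute.inv_left (show Commute a y from ha2 y hy hy1)).eq

lemma sylowCenter_map (t : ℕ) (M : Subgroup G) (hM : AllNil M) (φ : MulAut G)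
    (hφ : ∀ x, x ∈ M ↔ φ x ∈ M) {x : G} (hx : x ∈ sylowCenter t M hM) :
    φ x ∈ sylowCenter t M hM := by
  obtain ⟨⟨h1, h2⟩, h3⟩ := hx
  have hreg : ∀ s y, IsReg s (φ y) ↔ IsReg s y := fun s y =>
    isReg_map_iff (φ : G ≃* G).toMonoidHom (φ : G ≃* G).injective
  refine ⟨⟨(hφ x).1 h1, fun s hs hst => (hreg s x).2 (h2 s hs hst)⟩, fun y hy hy1 => ?_⟩
  obtain ⟨y, rfl⟩ := (φ : G ≃* G).surjective y
  rw [← map_mul, ← map_mul, h3 y ((hφ y).2 hy) fun s hs hst => (hreg s y).1 (hy1 s hs hst)]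

lemma isPGroup_of_forall_isReg {t : ℕ} {S : Type*} [Group S] [Finite S]
    (h : ∀ x : S, ∀ s : ℕ, s.Prime → s ≠ t → IsReg s x) : IsPGroup t S := by
  intro x
  have h1 := Nat.eq_prime_pow_of_unique_prime_dvd (n := orderOf x) (p := t) (orderOf_pos x).ne'
    (by
      intro d hd hdx
      by_contra hne
      have := (h x d hd hne).eq_one_of_dvd hdx
      exact hd.one_lt.ne' this)
  exact ⟨_, by rw [← h1]; exact pow_orderOf_eq_one x⟩

lemma sylowCenter_isPGroup (t : ℕ) (M : Subgroup G) (hM : AllNil M) :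
    IsPGroup t (sylowCenter t M hM) :=
  isPGroup_of_forall_isReg fun x s hs hst => isReg_coe_iff.1 (x.2.1.2 s hs hst)

lemma sylowCenter_ne_bot {t : ℕ} (ht : t.Prime) (M : Subgroup G) (hM : AllNil M)
    (hd : t ∣ Nat.card M) : sylowCenter t M hM ≠ ⊥ := by
  have := Fact.mk ht
  obtain ⟨S⟩ : Nonempty (Sylow t M) := inferInstance
  have hSmem : ∀ x : M, x ∈ S ↔ ∀ s : ℕ, s.Prime → s ≠ t → IsReg s x := by
    -- the `t`-elements of `M` form a `t`-subgroup containing `S`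
    let R : Subgroup M :=
      { carrier := {x | ∀ s : ℕ, s.Prime → s ≠ t → IsReg s x}
        one_mem' := fun _ _ _ => IsReg.one
        mul_mem' := fun ha hb s hs hst => hM s hs _ _ (ha s hs hst) (hb s hs hst)
        inv_mem' := fun ha s hs hst => (ha s hs hst).inv }
    have hRp : IsPGroup t R :=
      isPGroup_of_forall_isReg fun x s hs hst => isReg_coe_iff.1 (x.2 s hs hst)
    have hSR : (S : Subgroup M) ≤ R := fun x hx s hs hst =>
      isReg_coe_iff.2 (isReg_of_isPGroup ht hs hst S.2 ⟨x, hx⟩)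
    have := S.3 hRp hSR
    intro x
    constructor
    · exact fun hx => hSR hx
    · intro hx
      have hx' : x ∈ R := hx
      rw [this] at hx'
      exact hx'
  have hSn : Nontrivial S := (Subgroup.nontrivial_iff_ne_bot _).2 (S.ne_bot_of_dvd_card hd)
  have h1 := IsPGroup.center_nontrivial (G := S) S.2
  obtain ⟨⟨c, hc⟩, hc1⟩ := exists_ne (1 : Subgroup.center S)
  intro hb
  have h2 : ((c : M) : G) ∈ sylowCenter t M hM := by
    refine ⟨⟨(c : M).2, fun s hs hst => isReg_coe_iff.2 ((hSmem c).1 c.2 s hs hst)⟩, ?_⟩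
    intro y hy hy1
    have hyS : (⟨y, hy⟩ : M) ∈ S := (hSmem _).2 fun s hs hst => isReg_coe_iff.1 (hy1 s hs hst)
    have := Subgroup.mem_center_iff.1 hc ⟨⟨y, hy⟩, hyS⟩
    exact (congrArg (fun z : S => ((z : M) : G)) this).symm
  rw [hb, Subgroup.mem_bot] at h2
  exact hc1 (Subtype.ext (Subtype.ext (Subtype.ext h2)))

/-- A finite group with a fixed-point-free automorphism of prime order is `p`-nilpotent for all
primes `p` (Thompson). -/
theorem allNil_of_fpf (hr : r.Prime) : ∀ (n : ℕ) (G : Type u) [Group G] [Finite G],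
    Nat.card G = n → ∀ α : MulAut G, α ^ r = 1 → (∀ g, α g = g → g = 1) → AllNil G := by
  intro n
  induction n using Nat.strong_induction_on with
  | _ n ihn =>
  intro G _ _ hn α hα hf
  have ih : ∀ (M : Subgroup G), (∀ x ∈ M, α x ∈ M) → M ≠ ⊤ → AllNil M := by
    intro M hM hMt
    have hcard : Nat.card M < Nat.card G := by
      refine lt_of_le_of_ne (Subgroup.card_le_card_group M) fun h => hMt ?_
      exact Subgroup.card_eq_iff_eq_top M |>.1 h
    exact ihn _ (hn ▸ hcard) M rfl (restrAut α M hM) (restrAut_pow hα M hM) (restrAut_fpf hf M hM)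
  have hαiff : ∀ M : Subgroup G, (∀ x ∈ M, α x ∈ M) → ∀ x, x ∈ M ↔ α x ∈ M := by
    intro M hM x
    refine ⟨hM x, fun h => ?_⟩
    obtain ⟨y, hy⟩ := (restrAut α M hM).surjective ⟨α x, h⟩
    have : α (y : G) = α x := congrArg Subtype.val hy
    rw [← α.injective this]; exact y.2
  -- a nontrivial normal abelian invariant subgroup of prime power order finishes the proof
  have case1 : ∀ (t : ℕ) (V : Subgroup G), t.Prime → V.Normal → (∀ x ∈ V, α x ∈ V) →
      (∀ a ∈ V, ∀ b ∈ V, a * b = b * a) → IsPGroup t V → V ≠ ⊥ → AllNil G := by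
    intro t V ht hV hVα hVc hVt hVb
    have hZ := center_ne_bot_of_fpf hr hα hf ht hV hVα hVc hVt hVb
    have hZα : ∀ x ∈ Subgroup.center G, α x ∈ Subgroup.center G := by
      intro x hx
      rw [Subgroup.mem_center_iff] at hx ⊢
      intro g
      obtain ⟨g, rfl⟩ := (α : G ≃* G).surjective g
      rw [← map_mul, ← map_mul, hx]
    obtain ⟨β, hβ, hβf⟩ := exists_quotient_aut hα hf (Subgroup.center G) hZα
    have hcard : Nat.card (G ⧸ Subgroup.center G) < Nat.card G := by
      have h1 := Subgroup.card_mul_index (Subgroup.center G)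
      rw [Subgroup.index_eq_card] at h1
      have h2 : 1 < Nat.card (Subgroup.center G) := (Subgroup.one_lt_card_iff_ne_bot _).2 hZ
      have h3 : 0 < Nat.card (G ⧸ Subgroup.center G) := Nat.card_pos
      nlinarith
    have := ihn _ (hn ▸ hcard) (G ⧸ Subgroup.center G) rfl β hβ hβf
    exact fun p hp => (this p hp).of_center hp
  by_contra hG
  -- hence `G` has no proper nontrivial invariant normal subgroup
  have case2 : ∀ M : Subgroup G, M.Normal → (∀ x ∈ M, α x ∈ M) → M ≠ ⊤ → M = ⊥ := by
    intro M hM hMα hMt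
    by_contra hMb
    have hMN := ih M hMα hMt
    obtain ⟨t, ht, htd⟩ := Nat.exists_prime_and_dvd
      ((Subgroup.one_lt_card_iff_ne_bot M).2 hMb).ne'
    apply hG
    refine case1 t (sylowCenter t M hMN) ht ⟨fun x hx g => ?_⟩
      (fun x hx => sylowCenter_map t M hMN α (hαiff M hMα) hx) ?_
      (sylowCenter_isPGroup t M hMN) (sylowCenter_ne_bot ht M hMN htd)
    · refine sylowCenter_map t M hMN (MulAut.conj g) (fun y => ?_) hx
      rw [MulAut.conj_apply]
      exact ⟨fun h => hM.conj_mem y h g, fun h => by simpa [mul_assoc] using hM.conj_mem _ h g⁻¹⟩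
    · intro a ha b hb
      exact ha.2 b hb.1.1 hb.1.2
  have hnp : ∀ t : ℕ, t.Prime → ¬ IsPGroup t G := fun t ht h => hG (h.allNil ht)
  obtain ⟨p, hp, hp2, hpd⟩ : ∃ p : ℕ, p.Prime ∧ p ≠ 2 ∧ p ∣ Nat.card G := by
    by_contra hcon
    push Not at hcon
    refine hnp 2 Nat.prime_two (isPGroup_of_forall_isReg fun x s hs hs2 => ?_)
    exact isReg_of_card ((hs.coprime_iff_not_dvd).2 (hcon s hs hs2)) x
  have := Fact.mk hp
  obtain ⟨P, hP⟩ := exists_fpf_sylow hr hα hf hp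
  have hT : PNilpotent p G := by
    refine thompson hp hp2 _ G rfl P (P : Subgroup G).subtype (Subgroup.subtype_injective _) P.2
      (by rw [Subgroup.range_subtype]; exact P.not_dvd_index) ?_
    intro X hX hX1
    let Y := X.map (P : Subgroup G).subtype
    have hYα : ∀ x ∈ Y, α x ∈ Y := by
      rintro _ ⟨x, hx, rfl⟩
      exact ⟨restrAut α P hP x, Subgroup.characteristic_iff_map_le.1 hX (restrAut α P hP)
        ⟨x, hx, rfl⟩, rfl⟩
    have hYb : Y ≠ ⊥ := by
      rwa [Ne, Subgroup.map_eq_bot_iff_of_injective _ (Subgroup.subtype_injective _)]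
    have hYp : IsPGroup p Y := (P.2.to_subgroup X).map _
    refine ih (Subgroup.normalizer (Y : Set G)) ?_ ?_ p hp
    · intro x hx
      refine mem_normalizer_of_forall fun y hy => ?_
      obtain ⟨y', hy'⟩ := (restrAut α Y hYα).surjective ⟨y, hy⟩
      have h1 : α (y' : G) = y := congrArg Subtype.val hy'
      rw [← h1, ← map_inv, ← map_mul, ← map_mul]
      exact hYα _ ((Subgroup.mem_normalizer_iff.1 hx _).1 y'.2)
    · intro h
      have hYn : Y.Normal := Subgroup.normalizer_eq_top_iff.1 h
      by_cases hYt : Y = ⊤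
      · rw [hYt] at hYp
        exact hnp p hp (hYp.of_equiv Subgroup.topEquiv)
      · exact hYb (case2 Y hYn hYα hYt)
  by_cases hct : hT.compl = ⊤
  · have h1 : ∀ x : G, IsReg p x := fun x => hT.mem_compl.1 (hct ▸ Subgroup.mem_top x)
    exact (hp.coprime_iff_not_dvd.1 (coprime_card_of_isReg hp h1)) hpd
  · have h1 := case2 hT.compl inferInstance (fun x hx =>
      (isReg_map_iff (α : G ≃* G).toMonoidHom (α : G ≃* G).injective).2 hx) hct
    refine hnp p hp (isPGroup_of_isReg_eq_one hp fun x hx => ?_)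
    have : x ∈ hT.compl := hx
    rwa [h1, Subgroup.mem_bot] at this

end FPF

/-! ### Lifting fixed points and counting fixed points -/

section Lift

variable {A : Type u} [Group A] [Finite A]

/-- An element centralised by the `r`-regular elements of `L` and by a Sylow `r`-subgroup of `L`
is centralised by `L`. -/
lemma conj_eq_of_isReg_of_sylow {r : ℕ} (hr : r.Prime) {L : Subgroup A} (R : Sylow r L) {z : A}
    (h1 : ∀ f ∈ L, IsReg r f → f * z * f⁻¹ = z)
    (h2 : ∀ g : L, g ∈ (R : Subgroup L) → g.1 * z * g.1⁻¹ = z) :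
    ∀ f ∈ L, f * z * f⁻¹ = z := by
  have := Fact.mk hr
  let D : Subgroup L := (Subgroup.centralizer {z}).subgroupOf L
  have hD : ∀ g : L, g ∈ D ↔ g.1 * z * g.1⁻¹ = z := by
    intro g
    rw [Subgroup.mem_subgroupOf, Subgroup.mem_centralizer_singleton_iff, mul_inv_eq_iff_eq_mul]
  have hDt : D = ⊤ := by
    rw [← Subgroup.index_eq_one]
    by_contra hi
    obtain ⟨s, hs, hsd⟩ := Nat.exists_prime_and_dvd hi
    have := Fact.mk hs
    by_cases hsr : s = r
    · subst hsr
      have h3 : (R : Subgroup L) ≤ D := fun g hg => (hD g).2 (h2 g hg)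
      exact R.not_dvd_index (hsd.trans (Subgroup.index_dvd_of_le h3))
    · let S : Sylow s L := default
      have h3 : (S : Subgroup L) ≤ D := fun g hg => by
        refine (hD g).2 (h1 _ g.2 (isReg_coe_iff.2 ?_))
        obtain ⟨k, hk⟩ := S.2 ⟨g, hg⟩
        have hk' : g ^ s ^ k = 1 := congrArg Subtype.val hk
        refine IsReg.of_pow (Nat.Coprime.pow_right k ?_) hk'
        exact (Nat.coprime_primes hr hs).2 (Ne.symm hsr)
      exact S.not_dvd_index (hsd.trans (Subgroup.index_dvd_of_le h3))
  intro f hf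
  exact (hD ⟨f, hf⟩).1 (hDt ▸ Subgroup.mem_top _)

/-- Lifting of fixed points for a coprime action on a coset: if `L` is a nilpotent `q'`-group
normalising the `q`-group `N` and fixing the coset `N x`, then `L` centralises an element of
`N x`. The proof peels off one prime divisor `r` of `|L|` at a time: the points of `N x` fixed
by the `r`-complement of `L` form a coset of a subgroup of `N`, on which a Sylow `r`-subgroup has
a fixed point since `r ≠ q`. -/
lemma exists_fixed_mem_coset {q : ℕ} (hq : q.Prime) (N : Subgroup A) (hN : IsPGroup q N) (x : A) :
    ∀ (n : ℕ) (L : Subgroup A), Nat.card L = n → AllNil L → ¬ q ∣ Nat.card L →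
      (∀ f ∈ L, ∀ y ∈ N, f * y * f⁻¹ ∈ N) → (∀ f ∈ L, f * x * f⁻¹ * x⁻¹ ∈ N) →
      ∃ z, z * x⁻¹ ∈ N ∧ ∀ f ∈ L, f * z * f⁻¹ = z := by
  intro n
  induction n using Nat.strong_induction_on with
  | _ n ih =>
  intro L hn hL hqL hLN hLx
  by_cases hn1 : Nat.card L = 1
  · refine ⟨x, by simp, fun f hf => ?_⟩
    rw [Subgroup.card_eq_one] at hn1
    subst hn1
    rw [Subgroup.mem_bot.1 hf]
    simp
  obtain ⟨r, hr, hrd⟩ := Nat.exists_prime_and_dvd hn1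
  have := Fact.mk hr
  have hLr := hL r hr
  let L1 : Subgroup A := hLr.compl.map L.subtype
  have hL1 : ∀ f, f ∈ L1 ↔ f ∈ L ∧ IsReg r f := by
    intro f
    constructor
    · rintro ⟨g, hg, rfl⟩
      exact ⟨g.2, isReg_coe_iff.2 hg⟩
    · rintro ⟨h1, h2⟩
      exact ⟨⟨f, h1⟩, isReg_coe_iff.1 h2, rfl⟩
  have hL1L : L1 ≤ L := fun f hf => ((hL1 f).1 hf).1
  have hlt : Nat.card L1 < n := by
    rw [← hn]
    refine lt_of_le_of_ne (Subgroup.card_le_of_le hL1L) fun h => ?_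
    have h1 : L1 = L := Subgroup.eq_of_le_of_card_ge hL1L h.ge
    obtain ⟨g, hg⟩ := exists_prime_orderOf_dvd_card' (G := L) r hrd
    have h2 : IsReg r g := isReg_coe_iff.1 ((hL1 g.1).1 (h1.ge g.2)).2
    rw [IsReg, hg, Nat.coprime_self] at h2
    exact hr.ne_one h2
  obtain ⟨z0, hz0, hz0f⟩ := ih _ hlt L1 rfl
    (hL.of_injective (Subgroup.inclusion hL1L) (Subgroup.inclusion_injective hL1L))
    (fun h => hqL (h.trans (Subgroup.card_dvd_of_le hL1L)))
    (fun f hf => hLN f (hL1L hf)) (fun f hf => hLx f (hL1L hf))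
  let Y : Type u := {z : A // z * x⁻¹ ∈ N ∧ ∀ f ∈ L1, f * z * f⁻¹ = z}
  let C : Subgroup A := N ⊓ Subgroup.centralizer (L1 : Set A)
  have hC : ∀ c, c ∈ C ↔ c ∈ N ∧ ∀ f ∈ L1, f * c * f⁻¹ = c := by
    intro c
    rw [Subgroup.mem_inf, Subgroup.mem_centralizer_iff]
    exact and_congr_right fun _ => forall₂_congr fun f _ => mul_inv_eq_iff_eq_mul.symm
  have hcard : Nat.card Y = Nat.card C := by
    refine Nat.card_congr
      ⟨fun z => ⟨z.1 * z0⁻¹, (hC _).2 ⟨?_, fun f hf => ?_⟩⟩,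
       fun c => ⟨c.1 * z0, ?_, fun f hf => ?_⟩, fun z => ?_, fun c => ?_⟩
    · have := N.mul_mem z.2.1 (N.inv_mem hz0)
      simpa using this
    · conv_rhs => rw [← z.2.2 f hf, ← hz0f f hf]
      group
    · have := N.mul_mem ((hC _).1 c.2).1 hz0
      simpa [mul_assoc] using this
    · conv_rhs => rw [← ((hC _).1 c.2).2 f hf, ← hz0f f hf]
      group
    · simp
    · simp
  have hrY : ¬ r ∣ Nat.card Y := by
    rw [hcard]
    intro h
    have := Fact.mk hq
    obtain ⟨k, hk⟩ := IsPGroup.iff_card.1 hN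
    have h1 := h.trans (Subgroup.card_dvd_of_le (inf_le_left : C ≤ N))
    rw [hk] at h1
    have h2 := (Nat.prime_dvd_prime_iff_eq hr hq).1 (hr.dvd_of_dvd_pow h1)
    exact hqL (h2 ▸ hrd)
  let R : Sylow r L := default
  let _ : MulAction (R : Subgroup L) Y :=
    { smul := fun g z => ⟨g.1.1 * z.1 * g.1.1⁻¹, by
        have h1 := N.mul_mem (hLN g.1 g.1.2 _ z.2.1) (hLx g.1 g.1.2)
        simpa [mul_assoc] using h1, fun f hf => by
        have h1 : g.1.1⁻¹ * f * g.1.1 ∈ L1 := by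
          rw [hL1] at hf ⊢
          refine ⟨L.mul_mem (L.mul_mem (L.inv_mem g.1.2) hf.1) g.1.2, ?_⟩
          simpa using (isReg_conj_iff (g.1.1⁻¹)).2 hf.2
        conv_rhs => rw [← z.2.2 _ h1]
        group⟩
      one_smul := fun z => Subtype.ext (by
        change (1 : A) * z.1 * (1 : A)⁻¹ = z.1
        simp)
      mul_smul := fun g h z => Subtype.ext (by
        change (g.1.1 * h.1.1) * z.1 * (g.1.1 * h.1.1)⁻¹ =
          g.1.1 * (h.1.1 * z.1 * h.1.1⁻¹) * g.1.1⁻¹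
        group) }
  obtain ⟨z, hz⟩ := R.2.nonempty_fixed_point_of_prime_not_dvd_card Y hrY
  have hzR : ∀ g : L, g ∈ (R : Subgroup L) → g.1 * z.1 * g.1⁻¹ = z.1 :=
    fun g hg => congrArg Subtype.val (hz ⟨g, hg⟩)
  refine ⟨z.1, z.2.1, ?_⟩
  exact conj_eq_of_isReg_of_sylow hr R (fun f hf h => z.2.2 f ((hL1 f).2 ⟨hf, h⟩)) hzR

end Lift

section Count

/-- If every nonidentity element of a finite nontrivial group fixes exactly one point of a finite
set, then the group fixes a point. For an orbit `Γ` whose points have nontrivial stabilisers, the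
nonidentity elements with a fixed point in `Γ` number `|G| - |Γ| ≥ |G| / 2`; so there is only one
such orbit, and `|G| - |Γ| = |G| - 1`. -/
lemma exists_common_fixed_point {G X : Type*} [Group G] [Finite G] [Finite X] [MulAction G X]
    (hex : ∀ g : G, g ≠ 1 → ∃ x : X, g • x = x)
    (hun : ∀ g : G, g ≠ 1 → ∀ x y : X, g • x = x → g • y = y → x = y)
    (g0 : G) (hg0 : g0 ≠ 1) : ∃ x : X, ∀ g : G, g • x = x := by
  classical
  have := Fintype.ofFinite G
  have := Fintype.ofFinite X
  let T : X → Finset G := fun y => Finset.univ.filter fun g => g ≠ 1 ∧ g • y = y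
  have hT : ∀ y g, g ∈ T y ↔ g ≠ 1 ∧ g • y = y := by simp [T]
  let orb : X → Finset X := fun x => Finset.univ.filter fun y => y ∈ MulAction.orbit G x
  have horb : ∀ x y, y ∈ orb x ↔ y ∈ MulAction.orbit G x := by simp [orb]
  have hTc : ∀ y, (T y).card + 1 = Fintype.card (MulAction.stabilizer G y) := by
    intro y
    rw [Fintype.card_subtype, ← Finset.card_insert_of_notMem (a := (1 : G)) (by simp [hT])]
    congr 1
    ext g
    by_cases hg : g = 1
    · simp [hg]
    · simp [hg, hT]
  have horbc : ∀ x, (orb x).card = Fintype.card (MulAction.orbit G x) := by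
    intro x
    rw [Fintype.card_subtype]
  let D : X → Finset G := fun x => (orb x).biUnion T
  have hD : ∀ x g, g ∈ D x ↔ g ≠ 1 ∧ ∃ y ∈ MulAction.orbit G x, g • y = y := by
    intro x g
    simp only [D, Finset.mem_biUnion, horb, hT]
    tauto
  have hDc : ∀ x, (D x).card + (orb x).card = Fintype.card G := by
    intro x
    have h1 : (D x).card = ∑ y ∈ orb x, (T y).card := by
      refine Finset.card_biUnion fun y _ y' _ hyy => ?_
      refine Finset.disjoint_left.2 ?_
      intro g h1 h2
      rw [hT] at h1 h2
      exact hyy (hun g h1.1 _ _ h1.2 h2.2)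
    have h2 : ∑ y ∈ orb x, (T y).card + (orb x).card = ∑ y ∈ orb x, ((T y).card + 1) := by
      rw [Finset.sum_add_distrib]; simp
    have h3 : ∀ y ∈ orb x, (orb x).card * ((T y).card + 1) = Fintype.card G := by
      intro y hy
      rw [horb] at hy
      have h4 : orb x = orb y := by
        ext z
        rw [horb, horb, MulAction.orbit_eq_iff.2 hy]
      rw [hTc, h4, horbc]
      exact MulAction.card_orbit_mul_card_stabilizer_eq_card_group G y
    have h5 : 0 < (orb x).card := Finset.card_pos.2 ⟨x, (horb _ _).2 (MulAction.mem_orbit_self x)⟩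
    apply Nat.eq_of_mul_eq_mul_left h5
    rw [h1, h2, Finset.mul_sum, Finset.sum_congr rfl h3]
    simp
  have hD1 : ∀ x, D x ⊆ Finset.univ.erase 1 := by
    intro x g hg
    simp [((hD x g).1 hg).1]
  have hhalf : ∀ (x : X) (g : G), g ≠ 1 → g • x = x → (orb x).card * 2 ≤ Fintype.card G := by
    intro x g hg hgx
    have h1 : 1 ≤ (T x).card := Finset.card_pos.2 ⟨g, (hT x g).2 ⟨hg, hgx⟩⟩
    have h2 := MulAction.card_orbit_mul_card_stabilizer_eq_card_group G x
    rw [← horbc, ← hTc] at h2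
    rw [← h2]
    exact Nat.mul_le_mul_left _ (by omega)
  obtain ⟨x, hx⟩ := hex g0 hg0
  have hall : Finset.univ.erase 1 ⊆ D x := by
    intro g hg
    have hg1 : g ≠ 1 := by simpa using hg
    by_contra hgD
    obtain ⟨y, hy⟩ := hex g hg1
    have hdis : Disjoint (D x) (D y) := by
      rw [Finset.disjoint_left]
      intro a ha ha'
      rw [hD] at ha ha'
      obtain ⟨h1, u, hu, hau⟩ := ha
      obtain ⟨-, v, hv, hav⟩ := ha'
      have huv := hun a h1 u v hau hav
      subst huv
      have h3 : y ∈ MulAction.orbit G x := by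
        rw [← MulAction.orbit_eq_iff] at hu hv ⊢
        rw [← hu, hv]
      exact hgD ((hD x g).2 ⟨hg1, y, h3, hy⟩)
    have h1 := Finset.card_le_card (Finset.union_subset (hD1 x) (hD1 y))
    rw [Finset.card_union_of_disjoint hdis, Finset.card_erase_of_mem (Finset.mem_univ _),
      Finset.card_univ] at h1
    have h2 := hDc x
    have h3 := hDc y
    have h4 := hhalf x g0 hg0 hx
    have h5 := hhalf y g hg1 hy
    have h6 : 0 < Fintype.card G := Fintype.card_pos
    omega
  have h1 := Finset.card_le_card hall
  rw [Finset.card_erase_of_mem (Finset.mem_univ _), Finset.card_univ] at h1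
  have h2 := hDc x
  have h3 : (orb x).card ≤ 1 := by
    have h6 : 0 < Fintype.card G := Fintype.card_pos
    omega
  refine ⟨x, fun g => ?_⟩
  exact Finset.card_le_one.1 h3 _ ((horb _ _).2 (MulAction.mem_orbit x g)) _
    ((horb _ _).2 (MulAction.mem_orbit_self x))

end Count

section Frob

variable {A : Type u} [Group A] [Finite A] {F H : Subgroup A}

/-- If `h` acts fixed-point-freely on `F`, then every element of an `h`-invariant subgroup `M` of
`F` is a commutator `f⁻¹ f ^ h` with `f ∈ M`. -/
lemma exists_eq_comm {M : Subgroup A} {h : A} (hM : ∀ f ∈ M, h * f * h⁻¹ ∈ M)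
    (hf : ∀ f ∈ M, h * f * h⁻¹ = f → f = 1) (m : A) (hm : m ∈ M) :
    ∃ f ∈ M, f⁻¹ * (h * f * h⁻¹) = m := by
  let T : M → M := fun f => ⟨f.1⁻¹ * (h * f.1 * h⁻¹), M.mul_mem (M.inv_mem f.2) (hM _ f.2)⟩
  have hT : Function.Injective T := by
    intro a b hab
    have h1 : a.1⁻¹ * (h * a.1 * h⁻¹) = b.1⁻¹ * (h * b.1 * h⁻¹) := congrArg Subtype.val hab
    have h2 : h * (a.1 * b.1⁻¹) * h⁻¹ = a.1 * b.1⁻¹ := by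
      have : h * a.1 * h⁻¹ = a.1 * (b.1⁻¹ * (h * b.1 * h⁻¹)) := by rw [← h1]; group
      calc h * (a.1 * b.1⁻¹) * h⁻¹ = (h * a.1 * h⁻¹) * (h * b.1 * h⁻¹)⁻¹ := by group
        _ = _ := by rw [this]; group
    have h3 := hf _ (M.mul_mem a.2 (M.inv_mem b.2)) h2
    exact Subtype.ext (mul_inv_eq_one.1 h3)
  obtain ⟨f, hf⟩ := (Finite.injective_iff_surjective.1 hT) ⟨m, hm⟩
  exact ⟨f.1, f.2, congrArg Subtype.val hf⟩

/-- Let `FH` be a Frobenius group acting on a set and let `χ` be a point fixed by a nonidentity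
element of `H`. Then the stabiliser in `H` of any other point of the orbit `F χ` is trivial. -/
lemma stab_trivial {Ω : Type*} [MulAction A Ω]
    (hFH : ∀ h ∈ H, ∀ f ∈ F, h * f * h⁻¹ ∈ F)
    (hfpf : ∀ h ∈ H, h ≠ 1 → ∀ f ∈ F, h * f * h⁻¹ = f → f = 1)
    (χ : Ω) (h1 : A) (h1H : h1 ∈ H) (h1n : h1 ≠ 1) (h1χ : h1 • χ = χ)
    (f : A) (hf : f ∈ F) (hfχ : f • χ ≠ χ) (h : A) (hh : h ∈ H) (hhf : h • f • χ = f • χ) :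
    h = 1 := by
  have hconj : ∀ (h g : A) (μ : Ω), h • g • μ = (h * g * h⁻¹) • h • μ := by
    intro h g μ
    simp [← mul_smul]
  -- two points of the orbit fixed by a nonidentity element of `H` coincide
  have huniq : ∀ h ∈ H, h ≠ 1 → ∀ μ : Ω, ∀ g ∈ F, h • μ = μ → h • g • μ = g • μ →
      g • μ = μ := by
    intro h hh hn μ g hg hμ hgμ
    let M : Subgroup A := F ⊓ MulAction.stabilizer A μ
    have hM : ∀ f ∈ M, h * f * h⁻¹ ∈ M := by
      intro f hf
      refine ⟨hFH h hh f hf.1, ?_⟩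
      have h2 : f • μ = μ := hf.2
      change (h * f * h⁻¹) • μ = μ
      conv_lhs => rw [← hμ]
      rw [← hconj, h2, hμ]
    have hgM : g⁻¹ * (h * g * h⁻¹) ∈ M := by
      refine ⟨F.mul_mem (F.inv_mem hg) (hFH h hh g hg), ?_⟩
      change (g⁻¹ * (h * g * h⁻¹)) • μ = μ
      rw [hconj, hμ] at hgμ
      rw [mul_smul, hgμ, inv_smul_smul]
    obtain ⟨f, hf, hfe⟩ := exists_eq_comm hM (fun f hf => hfpf h hh hn f hf.1) _ hgM
    have h3 : h * (f * g⁻¹) * h⁻¹ = f * g⁻¹ := by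
      have : h * f * h⁻¹ = f * (g⁻¹ * (h * g * h⁻¹)) := by rw [← hfe]; group
      calc h * (f * g⁻¹) * h⁻¹ = (h * f * h⁻¹) * (h * g * h⁻¹)⁻¹ := by group
        _ = _ := by rw [this]; group
    have h4 := hfpf h hh hn _ (F.mul_mem hf.1 (F.inv_mem hg)) h3
    rw [← mul_inv_eq_one.1 h4]
    exact hf.2
  by_contra hne
  let O : Set Ω := {μ | ∃ f ∈ F, f • χ = μ}
  have hhO : ∀ k ∈ H, k • χ ∈ O → ∀ μ ∈ O, k • μ ∈ O := by
    rintro k hk ⟨f0, hf0, hf0χ⟩ _ ⟨g, hg, rfl⟩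
    refine ⟨k * g * k⁻¹ * f0, F.mul_mem (hFH k hk g hg) hf0, ?_⟩
    rw [hconj, ← hf0χ, mul_smul]
  let HO : Subgroup A :=
    { carrier := {k | k ∈ H ∧ k • χ ∈ O}
      one_mem' := ⟨H.one_mem, 1, F.one_mem, by simp⟩
      mul_mem' := fun {a b} ha hb => ⟨H.mul_mem ha.1 hb.1, by
        rw [mul_smul]
        exact hhO a ha.1 ha.2 _ hb.2⟩
      inv_mem' := fun {a} ha => ⟨H.inv_mem ha.1, by
        obtain ⟨f0, hf0, hf0χ⟩ := ha.2
        refine ⟨a⁻¹ * f0⁻¹ * (a⁻¹)⁻¹, hFH _ (H.inv_mem ha.1) _ (F.inv_mem hf0), ?_⟩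
        rw [inv_inv, mul_smul, ← hf0χ, mul_smul, inv_smul_smul]⟩ }
  let _ : MulAction HO O :=
    { smul := fun k μ => ⟨k.1 • μ.1, hhO k.1 k.2.1 k.2.2 μ.1 μ.2⟩
      one_smul := fun μ => Subtype.ext (one_smul A μ.1)
      mul_smul := fun a b μ => Subtype.ext (mul_smul a.1 b.1 μ.1) }
  have hsm : ∀ (k : HO) (μ : O), (k • μ = μ) ↔ k.1 • μ.1 = μ.1 := fun k μ => Subtype.ext_iff
  have : Finite O := Set.Finite.to_subtype
    (((Set.toFinite (F : Set A)).image fun f => f • χ).subset fun μ hμ => hμ)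
  have huniqO : ∀ k : HO, k ≠ 1 → ∀ μ ν : O, k • μ = μ → k • ν = ν → μ = ν := by
    rintro k hk ⟨_, a, ha, rfl⟩ ⟨_, b, hb, rfl⟩ h2 h3
    rw [hsm] at h2 h3
    have h4 : b • χ = (b * a⁻¹) • a • χ := by rw [mul_smul, inv_smul_smul]
    have h5 := huniq k.1 k.2.1 (fun h => hk (Subtype.ext h)) (a • χ) (b * a⁻¹)
      (F.mul_mem hb (F.inv_mem ha)) h2 (by rw [← h4]; exact h3)
    exact Subtype.ext (h5.symm.trans h4.symm)
  have hχO : h1 • χ ∈ O := by rw [h1χ]; exact ⟨1, F.one_mem, by simp⟩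
  obtain ⟨μ, hμ⟩ := exists_common_fixed_point (G := HO) (X := O) (fun k hk => by
      obtain ⟨f0, hf0, hf0χ⟩ := k.2.2
      obtain ⟨g, hg, hge⟩ := exists_eq_comm (hFH k.1 k.2.1)
        (hfpf k.1 k.2.1 fun h => hk (Subtype.ext h)) f0⁻¹ (F.inv_mem hf0)
      refine ⟨⟨g • χ, g, hg, rfl⟩, (hsm _ _).2 ?_⟩
      change k.1 • g • χ = g • χ
      have : k.1 * g * k.1⁻¹ = g * f0⁻¹ := by rw [← hge]; group
      rw [hconj, this, ← hf0χ, ← mul_smul]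
      simp) huniqO ⟨h1, h1H, hχO⟩ (fun h => h1n (congrArg Subtype.val h))
  have hμχ : μ.1 = χ := by
    have := huniqO ⟨h1, h1H, hχO⟩ (fun h => h1n (congrArg Subtype.val h)) μ
      ⟨χ, 1, F.one_mem, by simp⟩ (hμ _) ((hsm _ _).2 h1χ)
    exact congrArg Subtype.val this
  have hhO' : h • χ ∈ O := by
    refine ⟨(h * f * h⁻¹)⁻¹ * f, F.mul_mem (F.inv_mem (hFH h hh f hf)) hf, ?_⟩
    rw [hconj] at hhf
    rw [mul_smul, ← hhf, inv_smul_smul]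
  have h2 : h • χ = χ := by
    have := (hsm _ _).1 (hμ ⟨h, hh, hhO'⟩)
    rwa [hμχ] at this
  exact hfχ (huniq h hh hne χ f hf h2 hhf)

end Frob

/-! ### Weight spaces and trivial actions -/

section Weights

variable {A : Type u} [Group A] {K V : Type*} [Field K] [AddCommGroup V] [Module K V]

/-- The subgroup of the elements acting trivially on the submodule `U`. -/
def trivOn (ρ : Representation K A V) (U : Submodule K V) : Subgroup A where
  carrier := {a | ∀ v ∈ U, ρ a v = v}
  one_mem' := by intro v _; simp
  mul_mem' := by
    intro a b ha hb v hv
    rw [map_mul, Module.End.mul_apply, hb v hv, ha v hv]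
  inv_mem' := by
    intro a ha v hv
    conv_lhs => rw [← ha v hv]
    simp

variable {ρ : Representation K A V}

lemma mem_trivOn {U : Submodule K V} {a : A} : a ∈ trivOn ρ U ↔ ∀ v ∈ U, ρ a v = v := Iff.rfl

lemma trivOn_anti {U U' : Submodule K V} (h : U ≤ U') : trivOn ρ U' ≤ trivOn ρ U :=
  fun _ ha v hv => ha v (h hv)

lemma rho_mul (a b : A) (v : V) : ρ (a * b) v = ρ a (ρ b v) := by
  rw [map_mul, Module.End.mul_apply]

lemma rho_inv_rho (a : A) (v : V) : ρ a⁻¹ (ρ a v) = v := by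
  rw [← rho_mul, inv_mul_cancel, map_one, Module.End.one_apply]

lemma rho_rho_inv (a : A) (v : V) : ρ a (ρ a⁻¹ v) = v := by
  rw [← rho_mul, mul_inv_cancel, map_one, Module.End.one_apply]

/-- A family of endomorphisms commuting and of finite order prime to the characteristic on a
finite-dimensional space decomposes it into simultaneous eigenspaces. -/
lemma weight_decomposition [IsAlgClosed K] {ι : Type*} (W : Submodule K V) [FiniteDimensional K W]
    (f : ι → Module.End K V) (hfW : ∀ i, ∀ w ∈ W, f i w ∈ W)
    (hcomm : ∀ i j, ∀ w ∈ W, f i (f j w) = f j (f i w))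
    (hss : ∀ i, ∃ n : ℕ, (n : K) ≠ 0 ∧ ∀ w ∈ W, (f i ^ n) w = w) :
    ∃ S : (ι → K) → Submodule K V, (∀ χ v, v ∈ S χ ↔ v ∈ W ∧ ∀ i, f i v = χ i • v) ∧
      iSupIndep S ∧ W ≤ ⨆ χ, S χ := by
  let g : ι → Module.End K W := fun i => (f i).restrict (hfW i)
  have hg : ∀ i (w : W), (g i w : V) = f i w := fun i w => rfl
  have hgc : ∀ i j, Commute (g i) (g j) := fun i j => by
    refine LinearMap.ext fun w => Subtype.ext ?_
    exact hcomm i j w w.2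
  have hgp : ∀ i n (w : W), ((g i ^ n) w : V) = (f i ^ n) w := by
    intro i n
    induction n with
    | zero => intro w; simp
    | succ n ih => intro w; rw [pow_succ, pow_succ, Module.End.mul_apply, ih]; rfl
  have hsemi : ∀ i, (g i).IsSemisimple := by
    intro i
    obtain ⟨n, hn, hw⟩ := hss i
    refine Module.End.isSemisimple_of_squarefree_aeval_eq_zero
      (Polynomial.X_pow_sub_one_separable_iff.2 hn).squarefree ?_
    rw [map_sub, map_pow, Polynomial.aeval_X, map_one, sub_eq_zero]
    refine LinearMap.ext fun w => Subtype.ext ?_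
    rw [hgp, hw w w.2]
    rfl
  have hmax : ∀ i μ, (g i).maxGenEigenspace μ = (g i).eigenspace μ := fun i μ =>
    (hsemi i).isFinitelySemisimple.maxGenEigenspace_eq_eigenspace μ
  have hmaps : ∀ i j φ, Set.MapsTo (g i) ((g j).maxGenEigenspace φ) ((g j).maxGenEigenspace φ) :=
    fun i j φ => Module.End.mapsTo_maxGenEigenspace_of_comm (hgc j i) φ
  have h1 := Module.End.independent_iInf_maxGenEigenspace_of_forall_mapsTo g hmaps
  have h2 := Module.End.iSup_iInf_maxGenEigenspace_eq_top_of_forall_mapsTo g hmaps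
    fun i => Module.End.iSup_maxGenEigenspace_eq_top (g i)
  refine ⟨fun χ => (⨅ i, (g i).maxGenEigenspace (χ i)).map W.subtype, fun χ v => ?_, ?_, ?_⟩
  · simp only [hmax, Submodule.mem_map, Submodule.mem_iInf, Module.End.mem_eigenspace_iff]
    constructor
    · rintro ⟨w, hw, rfl⟩
      exact ⟨w.2, fun i => congrArg Subtype.val (hw i)⟩
    · rintro ⟨hv, h⟩
      exact ⟨⟨v, hv⟩, fun i => Subtype.ext (h i), rfl⟩
  · exact LinearMap.iSupIndep_map W.subtype W.injective_subtype h1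
  · rw [← Submodule.map_iSup, h2, Submodule.map_top, Submodule.range_subtype]

/-- Averaging over `H`: if `x` centralises `H` and is trivial on the `H`-fixed points of `W`, then
it is trivial on the vectors of weight `χ` fixed by the stabiliser of `χ` in `H`. -/
lemma eq_of_fixed_by_stab {Ω : Type*} [MulAction A Ω] [Finite A] (S : Ω → Submodule K V)
    (hind : iSupIndep S) (W : Submodule K V) (hSW : ∀ χ, S χ ≤ W) {H : Subgroup A}
    (hHS : ∀ h ∈ H, ∀ χ, ∀ v ∈ S χ, ρ h v ∈ S (h • χ)) (hHK : (Nat.card H : K) ≠ 0)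
    {x : A} (hxH : ∀ h ∈ H, h * x * h⁻¹ = x) (hxS : ∀ χ, ∀ v ∈ S χ, ρ x v ∈ S χ)
    (hx : ∀ v ∈ W, (∀ h ∈ H, ρ h v = v) → ρ x v = v)
    (χ : Ω) (v : V) (hv : v ∈ S χ) (hfix : ∀ h ∈ H, h • χ = χ → ρ h v = v) : ρ x v = v := by
  classical
  have := Fintype.ofFinite H
  have hxc : ∀ h ∈ H, ∀ w, ρ x (ρ h w) = ρ h (ρ x w) := by
    intro h hh w
    rw [← rho_mul, ← rho_mul, ← mul_inv_eq_iff_eq_mul.1 (hxH h hh)]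
  let w : V := ∑ h : H, ρ h.1 v
  have hwH : ∀ h ∈ H, ρ h w = w := by
    intro h hh
    simp only [w, map_sum, ← rho_mul]
    exact Fintype.sum_equiv (Equiv.mulLeft (⟨h, hh⟩ : H)) _ _ fun _ => rfl
  have hwW : w ∈ W := W.sum_mem fun h _ => hSW _ (hHS h.1 h.2 χ v hv)
  let u : V := ρ x v - v
  have huS : u ∈ S χ := (S χ).sub_mem (hxS χ v hv) hv
  have hufix : ∀ h ∈ H, h • χ = χ → ρ h u = u := by
    intro h hh hχ
    simp only [u, map_sub, ← hxc h hh, hfix h hh hχ]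
  have hsum : ∑ h : H, ρ h.1 u = 0 := by
    have h1 : ρ x w - w = 0 := sub_eq_zero.2 (hx w hwW hwH)
    rw [← h1]
    simp only [u, w, map_sum, map_sub, Finset.sum_sub_distrib]
    congr 1
    exact Finset.sum_congr rfl fun h _ => (hxc h.1 h.2 v).symm
  rw [← Finset.sum_filter_add_sum_filter_not Finset.univ (fun h : H => h.1 • χ = χ)] at hsum
  have h1 : ∑ h : H with h.1 • χ = χ, ρ h.1 u =
      ((Finset.univ.filter fun h : H => h.1 • χ = χ).card : K) • u := by
    rw [Finset.sum_congr rfl (g := fun _ => u), Finset.sum_const, Nat.cast_smul_eq_nsmul]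
    intro h hh
    exact hufix h.1 h.2 (Finset.mem_filter.1 hh).2
  have h2 : ∑ h : H with ¬ h.1 • χ = χ, ρ h.1 u ∈ ⨆ (μ) (_ : μ ≠ χ), S μ := by
    refine Submodule.sum_mem _ fun h hh => ?_
    have := hHS h.1 h.2 χ u huS
    exact Submodule.mem_iSup_of_mem _ (Submodule.mem_iSup_of_mem (Finset.mem_filter.1 hh).2 this)
  have h3 : ((Finset.univ.filter fun h : H => h.1 • χ = χ).card : K) • u = 0 := by
    rw [h1] at hsum
    refine Submodule.disjoint_def.1 (hind χ) _ ((S χ).smul_mem _ huS) ?_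
    rw [eq_neg_of_add_eq_zero_left hsum]
    exact Submodule.neg_mem _ h2
  have h4 : ((Finset.univ.filter fun h : H => h.1 • χ = χ).card : K) ≠ 0 := by
    let H1 : Subgroup H := (MulAction.stabilizer A χ).subgroupOf H
    have h5 : (Finset.univ.filter fun h : H => h.1 • χ = χ).card = Nat.card H1 := by
      rw [← Fintype.card_subtype, ← Nat.card_eq_fintype_card]
      rfl
    rw [h5]
    intro h6
    obtain ⟨m, hm⟩ := Subgroup.card_subgroup_dvd_card H1
    exact hHK (by rw [hm, Nat.cast_mul, h6, zero_mul])
  exact sub_eq_zero.1 ((smul_eq_zero.1 h3).resolve_left h4)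

/-- Gluing: if `c` is centralised by the stabiliser of `χ` in `F` and acts trivially on the
weight spaces of the other points of the orbit `F χ`, then some element of `Q` (a product of
conjugates of `c`) acts as `f c f⁻¹` on the weight space of `f χ`, for every `f ∈ F`. -/
lemma exists_glue {Ω : Type*} [MulAction A Ω] [Finite A] (S : Ω → Submodule K V)
    {Q F : Subgroup A} (hFQ : ∀ f ∈ F, ∀ y ∈ Q, f * y * f⁻¹ ∈ Q)
    (hFS : ∀ f ∈ F, ∀ χ, ∀ v ∈ S χ, ρ f v ∈ S (f • χ)) (hQS : ∀ y ∈ Q, ∀ χ, ∀ v ∈ S χ, ρ y v ∈ S χ)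
    (χ : Ω) {c : A} (hc : c ∈ Q) (hcF : ∀ f ∈ F, f • χ = χ → f * c * f⁻¹ = c)
    (hctriv : ∀ f ∈ F, f • χ ≠ χ → ∀ v ∈ S (f • χ), ρ c v = v) :
    ∃ b ∈ Q, ∀ f ∈ F, ∀ v ∈ S (f • χ), ρ b v = ρ (f * c * f⁻¹) v := by
  classical
  have key : ∀ s : Finset Ω, ∃ b ∈ Q, ∀ f ∈ F, ∀ v ∈ S (f • χ),
      ρ b v = if f • χ ∈ s then ρ (f * c * f⁻¹) v else v := by
    intro s
    induction s using Finset.induction_on with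
    | empty => exact ⟨1, Q.one_mem, by simp⟩
    | insert μ s hμ ih =>
      obtain ⟨b, hb, hbs⟩ := ih
      by_cases hex : ∃ g ∈ F, g • χ = μ
      · obtain ⟨g, hg, rfl⟩ := hex
        have hgc := hFQ g hg c hc
        refine ⟨b * (g * c * g⁻¹), Q.mul_mem hb hgc, fun f hf v hv => ?_⟩
        have hv' : ρ (g * c * g⁻¹) v ∈ S (f • χ) := hQS _ hgc _ _ hv
        rw [rho_mul, hbs f hf _ hv']
        by_cases hfg : f • χ = g • χ
        · rw [if_neg (hfg ▸ hμ), if_pos (hfg ▸ Finset.mem_insert_self _ _)]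
          have h1 := hcF (g⁻¹ * f) (F.mul_mem (F.inv_mem hg) hf)
            (by rw [mul_smul, hfg, inv_smul_smul])
          have h2 : g * c * g⁻¹ = f * c * f⁻¹ := by
            conv_lhs => rw [← h1]
            group
          rw [h2]
        · have h2 : ρ (g * c * g⁻¹) v = v := by
            have h3 := hFS g⁻¹ (F.inv_mem hg) _ _ hv
            rw [← mul_smul] at h3
            rw [mul_assoc, rho_mul, rho_mul, hctriv _ (F.mul_mem (F.inv_mem hg) hf) ?_ _ h3,
              rho_rho_inv]
            rw [mul_smul, Ne, inv_smul_eq_iff]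
            exact hfg
          rw [h2]
          simp only [Finset.mem_insert, hfg, false_or]
      · refine ⟨b, hb, fun f hf v hv => ?_⟩
        have hfμ : f • χ ≠ μ := fun h => hex ⟨f, hf, h⟩
        rw [hbs f hf v hv]
        simp only [Finset.mem_insert, hfμ, false_or]
  have hfin : ((Set.image (fun f => f • χ) (F : Set A)) : Set Ω).Finite := (Set.toFinite _).image _
  obtain ⟨b, hb, hbs⟩ := key hfin.toFinset
  refine ⟨b, hb, fun f hf v hv => ?_⟩
  rw [hbs f hf v hv, if_pos (by simpa using ⟨f, hf, rfl⟩)]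

/-- If all commutators of `x ∈ Q` with elements of `F` act trivially on the `F`-invariant
subspace `U` of `W`, and `C_Q(F)` acts trivially on `W`, then `x` acts trivially on `U`. -/
lemma mem_trivOn_of_comm [Finite A] {q : ℕ} (hq : q.Prime) {Q F : Subgroup A} (hQ : IsPGroup q Q)
    (hFQ : ∀ f ∈ F, ∀ y ∈ Q, f * y * f⁻¹ ∈ Q) (hF : AllNil F) (hqF : ¬ q ∣ Nat.card F)
    {U W : Submodule K V} (hUW : U ≤ W) (hFU : ∀ f ∈ F, ∀ v ∈ U, ρ f v ∈ U)
    (hC : ∀ c ∈ Q, (∀ f ∈ F, f * c * f⁻¹ = c) → c ∈ trivOn ρ W)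
    {x : A} (hx : x ∈ Q) (hxU : ∀ f ∈ F, ∀ v ∈ U, ρ (f * x * f⁻¹) v = ρ x v)
    (hxU' : ∀ v ∈ U, ρ x v ∈ U) : x ∈ trivOn ρ U := by
  have hxinv : ∀ v ∈ U, ρ x⁻¹ v ∈ U := by
    intro v hv
    have h1 : ∀ n : ℕ, ρ (x ^ n) v ∈ U := by
      intro n
      induction n with
      | zero => simpa using hv
      | succ n ih => rw [pow_succ', rho_mul]; exact hxU' _ ih
    have h2 : x⁻¹ = x ^ (orderOf x - 1) := by
      rw [inv_eq_iff_mul_eq_one, ← pow_succ', Nat.sub_add_cancel (orderOf_pos x),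
        pow_orderOf_eq_one]
    rw [h2]
    exact h1 _
  let N : Subgroup A := Q ⊓ trivOn ρ U
  obtain ⟨z, hz, hzF⟩ := exists_fixed_mem_coset hq N (hQ.to_le inf_le_left) x _ F rfl hF hqF
    (fun f hf y hy => ⟨hFQ f hf y hy.1, fun v hv => by
      rw [mul_assoc, rho_mul, rho_mul, hy.2 _ (hFU _ (F.inv_mem hf) _ hv), rho_rho_inv]⟩)
    (fun f hf => ⟨Q.mul_mem (hFQ f hf x hx) (Q.inv_mem hx), fun v hv => by
      rw [rho_mul, hxU f hf _ (hxinv v hv), rho_rho_inv]⟩)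
  have hzQ : z ∈ Q := by
    have := Q.mul_mem hz.1 hx
    simpa using this
  have h1 : z ∈ trivOn ρ U := trivOn_anti hUW (hC z hzQ hzF)
  have h2 := (trivOn ρ U).mul_mem ((trivOn ρ U).inv_mem hz.2) h1
  simpa using h2

/-- A `q`-group acting nontrivially on `W` has an element acting nontrivially and commuting with
the action of the whole group. -/
lemma exists_central_action [Finite A] {q : ℕ} (hq : q.Prime) {Q : Subgroup A} (hQ : IsPGroup q Q)
    (W : Submodule K V) (hQW : ∀ y ∈ Q, ∀ w ∈ W, ρ y w ∈ W) (hn : ¬ Q ≤ trivOn ρ W) :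
    ∃ z ∈ Q, z ∉ trivOn ρ W ∧ ∀ y ∈ Q, ∀ w ∈ W, ρ z (ρ y w) = ρ y (ρ z w) := by
  have := Fact.mk hq
  let φ : Q →* Module.End K W :=
    { toFun := fun y => (ρ y.1).restrict (hQW y.1 y.2)
      map_one' := LinearMap.ext fun w => Subtype.ext (by simp)
      map_mul' := fun a b => LinearMap.ext fun w => Subtype.ext (rho_mul a.1 b.1 w.1) }
  have hφ : ∀ (y : Q) (w : W), (φ y w : V) = ρ y.1 w.1 := fun y w => rfl
  let ψ : Q →* (Module.End K W)ˣ := φ.toHomUnits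
  have hψ : ∀ y, (ψ y : Module.End K W) = φ y := fun y => rfl
  have hR : IsPGroup q ψ.range := hQ.of_surjective ψ.rangeRestrict ψ.rangeRestrict_surjective
  have hker : ∀ y : Q, y.1 ∈ trivOn ρ W ↔ ψ y = 1 := by
    intro y
    rw [Units.ext_iff, hψ, Units.val_one]
    constructor
    · intro h
      exact LinearMap.ext fun w => Subtype.ext (h w.1 w.2)
    · intro h w hw
      have := congrArg Subtype.val (LinearMap.congr_fun h ⟨w, hw⟩)
      exact this
  have : Finite ψ.range := Finite.of_surjective _ ψ.rangeRestrict_surjective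
  obtain ⟨y, hy, hyn⟩ := SetLike.not_le_iff_exists.1 hn
  have : Nontrivial ψ.range := by
    refine ⟨⟨ψ ⟨y, hy⟩, ⟨y, hy⟩, rfl⟩, 1, fun h => hyn ((hker ⟨y, hy⟩).2 ?_)⟩
    exact congrArg Subtype.val h
  obtain ⟨⟨⟨_, ⟨z, rfl⟩⟩, hzc⟩, hz1⟩ := @exists_ne _ hR.center_nontrivial 1
  refine ⟨z.1, z.2, fun h => hz1 ?_, fun y hy w hw => ?_⟩
  · rw [hker] at h
    exact Subtype.ext (Subtype.ext h)
  · rw [Subgroup.mem_center_iff] at hzc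
    have h1 : ψ ⟨y, hy⟩ * ψ z = ψ z * ψ ⟨y, hy⟩ :=
      congrArg Subtype.val (hzc ⟨ψ ⟨y, hy⟩, ⟨y, hy⟩, rfl⟩)
    have h2 : φ ⟨y, hy⟩ * φ z = φ z * φ ⟨y, hy⟩ := congrArg Units.val h1
    exact (congrArg Subtype.val (LinearMap.congr_fun h2 ⟨w, hw⟩)).symm

end Weights

/-! ### The case of a finite-dimensional module over an algebraically closed field -/

/-- Functions on the group `A`, regarded as weights; `A` acts on them through conjugation on the
argument. -/
def Wt (A K : Type*) := A → K

instance Wt.mulAction {A K : Type*} [Group A] : MulAction A (Wt A K) where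
  smul g χ := fun a => χ (g⁻¹ * a * g)
  one_smul χ := funext fun a => congrArg χ (by group)
  mul_smul g h χ := funext fun a => congrArg χ (by group)

lemma Wt.smul_apply {A K : Type*} [Group A] (g : A) (χ : Wt A K) (a : A) :
    (g • χ) a = χ (g⁻¹ * a * g) := rfl

section Main

variable {A : Type u} [Group A] {K V : Type*} [Field K] [AddCommGroup V] [Module K V]

/-- The inductive situation: the subgroups `Q`, `F`, `H` of an ambient group play their roles with
respect to the invariant subspace `W`, the `q'`-group `F` being nilpotent, `C_Q(F)` acting
trivially on `W`, and `x ∈ C_Q(H)` acting trivially on `C_W(H)`. -/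
structure ActConfig (ρ : Representation K A V) (q : ℕ) (x : A) (Q F H : Subgroup A)
    (W : Submodule K V) : Prop where
  pgroup : IsPGroup q Q
  nil : AllNil F
  cop : ¬ q ∣ Nat.card F
  FQ : ∀ f ∈ F, ∀ y ∈ Q, f * y * f⁻¹ ∈ Q
  HQ : ∀ h ∈ H, ∀ y ∈ Q, h * y * h⁻¹ ∈ Q
  HF : ∀ h ∈ H, ∀ f ∈ F, h * f * h⁻¹ ∈ F
  fpf : ∀ h ∈ H, h ≠ 1 → ∀ f ∈ F, h * f * h⁻¹ = f → f = 1
  cardQ : (Nat.card Q : K) ≠ 0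
  cardH : (Nat.card H : K) ≠ 0
  invQ : ∀ y ∈ Q, ∀ w ∈ W, ρ y w ∈ W
  invF : ∀ y ∈ F, ∀ w ∈ W, ρ y w ∈ W
  invH : ∀ y ∈ H, ∀ w ∈ W, ρ y w ∈ W
  cent : ∀ c ∈ Q, (∀ f ∈ F, f * c * f⁻¹ = c) → c ∈ trivOn ρ W
  mem : x ∈ Q
  comm : ∀ h ∈ H, h * x * h⁻¹ = x
  fix : ∀ v ∈ W, (∀ h ∈ H, ρ h v = v) → ρ x v = v

lemma natCast_card_ne_zero_of_le [Finite A] {S T : Subgroup A} (h : S ≤ T)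
    (hT : (Nat.card T : K) ≠ 0) : (Nat.card S : K) ≠ 0 := by
  obtain ⟨m, hm⟩ := Subgroup.card_dvd_of_le h
  intro h0
  exact hT (by rw [hm, Nat.cast_mul, h0, zero_mul])

/-- In the inductive situation `x` acts trivially on `W`. The space `W` is decomposed under the
elements `Z` of `Q` acting centrally on it. On the fixed points of `Z` the kernel of `Q` is larger.
If `F` fixes a weight `χ` then `Z` is trivial on the corresponding weight space. Otherwise either
the stabiliser of `χ` in `H` is trivial and averaging over `H` applies, or it is nontrivial, and
then averaging applies to all other weights in the orbit `F χ`, so that the stabilisers of `χ` in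
`F` and `H` and the conjugates of `x` form a configuration with a smaller `F`. -/
theorem ActConfig.trivial [Finite A] [IsAlgClosed K] {ρ : Representation K A V} {q : ℕ}
    (hq : q.Prime) (x : A) : ∀ (n m : ℕ) (Q F H : Subgroup A) (W : Submodule K V),
    FiniteDimensional K W → Nat.card F = n →
    Nat.card Q - Nat.card (Q ⊓ trivOn ρ W : Subgroup A) = m →
    ActConfig ρ q x Q F H W → x ∈ trivOn ρ W := by
  classical
  intro n
  induction n using Nat.strong_induction_on with
  | _ n ihn =>
  intro m
  induction m using Nat.strong_induction_on with
  | _ m ihm =>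
  intro Q F H W hfd hn hm c
  by_cases hQW : Q ≤ trivOn ρ W
  · exact hQW c.mem
  -- `G` consists of the elements normalising `Q` and stabilising `W`
  let G : Set A := {g | (∀ y ∈ Q, g * y * g⁻¹ ∈ Q) ∧ (∀ y ∈ Q, g⁻¹ * y * g ∈ Q) ∧
    (∀ w ∈ W, ρ g w ∈ W) ∧ (∀ w ∈ W, ρ g⁻¹ w ∈ W)}
  have hGQ : ∀ y ∈ Q, y ∈ G := fun y hy =>
    ⟨fun z hz => Q.mul_mem (Q.mul_mem hy hz) (Q.inv_mem hy),
      fun z hz => Q.mul_mem (Q.mul_mem (Q.inv_mem hy) hz) hy, c.invQ y hy,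
      c.invQ _ (Q.inv_mem hy)⟩
  have hGF : ∀ y ∈ F, y ∈ G := fun y hy =>
    ⟨c.FQ y hy, fun z hz => by simpa using c.FQ _ (F.inv_mem hy) z hz, c.invF y hy,
      c.invF _ (F.inv_mem hy)⟩
  have hGH : ∀ y ∈ H, y ∈ G := fun y hy =>
    ⟨c.HQ y hy, fun z hz => by simpa using c.HQ _ (H.inv_mem hy) z hz, c.invH y hy,
      c.invH _ (H.inv_mem hy)⟩
  let Z : Set A := {z | z ∈ Q ∧ ∀ y ∈ Q, ∀ w ∈ W, ρ z (ρ y w) = ρ y (ρ z w)}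
  have hZG : ∀ g ∈ G, ∀ z ∈ Z, g * z * g⁻¹ ∈ Z := by
    rintro g ⟨h1, h2, h3, h4⟩ z ⟨hz, hzc⟩
    refine ⟨h1 z hz, fun y hy w hw => ?_⟩
    have h5 := hzc (g⁻¹ * y * g) (h2 y hy) (ρ g⁻¹ w) (h4 w hw)
    have h6 := congrArg (ρ g) h5
    simp only [← rho_mul] at h6 ⊢
    convert h6 using 3 <;> group
  have hGinv : ∀ g ∈ G, g⁻¹ ∈ G := by
    rintro g ⟨h1, h2, h3, h4⟩
    exact ⟨by simpa using h2, by simpa using h1, h4, by simpa using h3⟩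
  have hZG' : ∀ g ∈ G, ∀ z, g⁻¹ * z * g ∈ Z ↔ z ∈ Z := by
    intro g hg z
    constructor
    · intro h
      have := hZG g hg _ h
      simpa [mul_assoc] using this
    · intro h
      simpa using hZG _ (hGinv g hg) z h
  let f : A → Module.End K V := fun a => if a ∈ Z then ρ a else 1
  have hfZ : ∀ a ∈ Z, f a = ρ a := fun a ha => if_pos ha
  have hfZ' : ∀ a, a ∉ Z → f a = 1 := fun a ha => if_neg ha
  obtain ⟨S, hSmem, hSind, hSsup⟩ := weight_decomposition (ι := A) W f
    (fun a w hw => by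
      by_cases ha : a ∈ Z
      · rw [hfZ a ha]; exact c.invQ a ha.1 w hw
      · rw [hfZ' a ha]; exact hw)
    (fun a b w hw => by
      by_cases ha : a ∈ Z
      · by_cases hb : b ∈ Z
        · rw [hfZ a ha, hfZ b hb]; exact ha.2 b hb.1 w hw
        · rw [hfZ' b hb]; rfl
      · rw [hfZ' a ha]; rfl)
    (fun a => ⟨Nat.card Q, c.cardQ, fun w hw => by
      by_cases ha : a ∈ Z
      · rw [hfZ a ha, ← map_pow]
        have h1 : a ^ Nat.card Q = 1 := by
          have : (⟨a, ha.1⟩ : Q) ^ Nat.card Q = 1 := pow_card_eq_one'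
          exact congrArg Subtype.val this
        rw [h1, map_one, Module.End.one_apply]
      · rw [hfZ' a ha, one_pow, Module.End.one_apply]⟩)
  change Wt A K → Submodule K V at S
  replace hSmem : ∀ (χ : Wt A K) (v : V), v ∈ S χ ↔ v ∈ W ∧ ∀ a, f a v = χ a • v := hSmem
  have hSW : ∀ χ, S χ ≤ W := fun χ v hv => ((hSmem χ v).1 hv).1
  have hSZ : ∀ χ, ∀ v ∈ S χ, ∀ z ∈ Z, ρ z v = χ z • v := fun χ v hv z hz => by
    rw [← hfZ z hz]
    exact ((hSmem χ v).1 hv).2 z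
  have hGS : ∀ g ∈ G, ∀ χ : Wt A K, ∀ v ∈ S χ, ρ g v ∈ S (g • χ) := by
    intro g hg χ v hv
    rw [hSmem] at hv ⊢
    refine ⟨hg.2.2.1 v hv.1, fun a => ?_⟩
    have h1 := hv.2 (g⁻¹ * a * g)
    rw [Wt.smul_apply]
    by_cases ha : a ∈ Z
    · rw [hfZ _ ((hZG' g hg a).2 ha)] at h1
      rw [hfZ a ha, ← map_smul, ← h1, ← rho_mul, ← rho_mul]
      congr 2
      group
    · rw [hfZ' _ (fun h => ha ((hZG' g hg a).1 h)), Module.End.one_apply] at h1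
      rw [hfZ' a ha, Module.End.one_apply, ← map_smul, ← h1]
  have hQS : ∀ y ∈ Q, ∀ χ : Wt A K, ∀ v ∈ S χ, ρ y v ∈ S χ := by
    intro y hy χ v hv
    rw [hSmem] at hv ⊢
    refine ⟨c.invQ y hy v hv.1, fun a => ?_⟩
    have h1 := hv.2 a
    by_cases ha : a ∈ Z
    · rw [hfZ a ha] at h1 ⊢
      rw [ha.2 y hy v hv.1, h1, map_smul]
    · rw [hfZ' a ha, Module.End.one_apply] at h1 ⊢
      rw [← map_smul, ← h1]
  -- `x` is trivial on the fixed points of `Z`, where the kernel of `Q` is larger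
  let W0 : Submodule K V :=
    { carrier := {w | w ∈ W ∧ ∀ z ∈ Z, ρ z w = w}
      zero_mem' := ⟨W.zero_mem, fun z _ => map_zero _⟩
      add_mem' := fun {a b} ha hb => ⟨W.add_mem ha.1 hb.1, fun z hz => by
        rw [map_add, ha.2 z hz, hb.2 z hz]⟩
      smul_mem' := fun t {a} ha => ⟨W.smul_mem t ha.1, fun z hz => by
        rw [map_smul, ha.2 z hz]⟩ }
  have hW0 : ∀ w, w ∈ W0 ↔ w ∈ W ∧ ∀ z ∈ Z, ρ z w = w := fun w => Iff.rfl
  have hW0W : W0 ≤ W := fun w hw => hw.1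
  have hGW0 : ∀ g ∈ G, ∀ w ∈ W0, ρ g w ∈ W0 := by
    intro g hg w hw
    refine ⟨hg.2.2.1 w hw.1, fun z hz => ?_⟩
    have h1 := congrArg (ρ g) (hw.2 _ ((hZG' g hg z).2 hz))
    rw [← rho_mul] at h1
    rw [← rho_mul, ← h1]
    congr 2
    group
  have hxW0 : x ∈ trivOn ρ W0 := by
    obtain ⟨z, hzQ, hzW, hzc⟩ := exists_central_action hq c.pgroup W c.invQ hQW
    have hlt : Nat.card (Q ⊓ trivOn ρ W : Subgroup A) <
        Nat.card (Q ⊓ trivOn ρ W0 : Subgroup A) := by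
      have hle : Q ⊓ trivOn ρ W ≤ Q ⊓ trivOn ρ W0 := inf_le_inf_left _ (trivOn_anti hW0W)
      refine lt_of_le_of_ne (Subgroup.card_le_of_le hle) fun h => hzW ?_
      have h1 := Subgroup.eq_of_le_of_card_ge hle h.ge
      have h2 : z ∈ Q ⊓ trivOn ρ W0 := ⟨hzQ, fun w hw => hw.2 z ⟨hzQ, hzc⟩⟩
      rw [← h1] at h2
      exact h2.2
    have hle2 : Nat.card (Q ⊓ trivOn ρ W0 : Subgroup A) ≤ Nat.card Q :=
      Subgroup.card_le_of_le inf_le_left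
    refine ihm _ (by omega) Q F H W0 (Submodule.finiteDimensional_of_le hW0W) hn rfl
      { c with
        invQ := fun y hy => hGW0 y (hGQ y hy)
        invF := fun y hy => hGW0 y (hGF y hy)
        invH := fun y hy => hGW0 y (hGH y hy)
        cent := fun y hy h => trivOn_anti hW0W (c.cent y hy h)
        fix := fun v hv h => c.fix v hv.1 h }
  have hstab : ∀ χ : Wt A K, ∀ v ∈ S χ, (∀ h ∈ H, h • χ = χ → ρ h v = v) → ρ x v = v :=
    eq_of_fixed_by_stab S hSind W hSW (fun h hh => hGS h (hGH h hh)) c.cardH c.comm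
      (hQS x c.mem) c.fix
  suffices hχ : ∀ χ : Wt A K, x ∈ trivOn ρ (S χ) by
    have h1 : (⨆ χ, S χ) ≤ LinearMap.eqLocus (ρ x) LinearMap.id :=
      iSup_le fun χ v hv => hχ χ v hv
    exact fun v hv => h1 (hSsup hv)
  intro χ
  by_cases hFχ : ∀ g ∈ F, g • χ = χ
  · refine trivOn_anti (fun v hv => (hW0 v).2 ⟨hSW χ hv, fun z hz => ?_⟩) hxW0
    have hFS : ∀ g ∈ F, ∀ v ∈ S χ, ρ g v ∈ S χ := fun g hg v hv => by
      have := hGS g (hGF g hg) χ v hv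
      rwa [hFχ g hg] at this
    refine mem_trivOn_of_comm hq c.pgroup c.FQ c.nil c.cop (hSW χ) hFS c.cent hz.1 ?_
      (hQS z hz.1 χ) v hv
    intro g hg w hw
    rw [hSZ χ w hw _ (hZG g (hGF g hg) z hz), hSZ χ w hw z hz]
    have h1 : (g⁻¹ • χ) z = χ (g⁻¹⁻¹ * z * g⁻¹) := rfl
    rw [hFχ _ (F.inv_mem hg), inv_inv] at h1
    rw [h1]
  by_cases hHχ : ∀ h ∈ H, h • χ = χ → h = 1
  · intro v hv
    refine hstab χ v hv fun h hh hhχ => ?_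
    rw [hHχ h hh hhχ, map_one, Module.End.one_apply]
  push Not at hHχ hFχ
  obtain ⟨h1, h1H, h1χ, h1n⟩ := hHχ
  let F0 : Subgroup A := F ⊓ MulAction.stabilizer A χ
  let H1 : Subgroup A := H ⊓ MulAction.stabilizer A χ
  have hF0 : ∀ g ∈ F0, g ∈ F ∧ g • χ = χ := fun g hg => ⟨hg.1, hg.2⟩
  have hH1 : ∀ g ∈ H1, g ∈ H ∧ g • χ = χ := fun g hg => ⟨hg.1, hg.2⟩
  have hxother : ∀ g ∈ F, g • χ ≠ χ → x ∈ trivOn ρ (S (g • χ)) := by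
    intro g hg hgχ v hv
    refine hstab _ v hv fun h hh hhχ => ?_
    rw [stab_trivial c.HF c.fpf χ h1 h1H h1n h1χ g hg hgχ h hh hhχ, map_one,
      Module.End.one_apply]
  have hF0F : F0 ≤ F := inf_le_left
  have hlt : Nat.card F0 < n := by
    rw [← hn]
    refine lt_of_le_of_ne (Subgroup.card_le_of_le hF0F) fun h => ?_
    have h2 := Subgroup.eq_of_le_of_card_ge hF0F h.ge
    obtain ⟨g, hg, hgχ⟩ := hFχ
    rw [← h2] at hg
    exact hgχ hg.2
  let X : Subgroup A := Subgroup.closure {y | ∃ g ∈ F0, y = g * x * g⁻¹}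
  have hXQ : X ≤ Q := by
    rw [Subgroup.closure_le]
    rintro _ ⟨g, hg, rfl⟩
    exact c.FQ g hg.1 x c.mem
  have hXconj : ∀ k : A, (∀ g ∈ F0, ∃ g' ∈ F0, k * (g * x * g⁻¹) * k⁻¹ = g' * x * g'⁻¹) →
      ∀ y ∈ X, k * y * k⁻¹ ∈ X := by
    intro k hk y hy
    have h2 : X ≤ X.comap (MulAut.conj k).toMonoidHom := by
      rw [Subgroup.closure_le]
      rintro _ ⟨g, hg, rfl⟩
      obtain ⟨g', hg', he⟩ := hk g hg
      exact Subgroup.subset_closure ⟨g', hg', he⟩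
    exact h2 hy
  have hH1F0 : ∀ h ∈ H1, ∀ g ∈ F0, h * g * h⁻¹ ∈ F0 := by
    intro h hh g hg
    refine ⟨c.HF h hh.1 g hg.1, ?_⟩
    change (h * g * h⁻¹) • χ = χ
    rw [mul_smul, mul_smul, inv_smul_eq_iff.2 (hH1 h hh).2.symm, (hF0 g hg).2, (hH1 h hh).2]
  have hXother : ∀ g ∈ F, g • χ ≠ χ → X ≤ trivOn ρ (S (g • χ)) := by
    intro g hg hgχ
    rw [Subgroup.closure_le]
    rintro _ ⟨k, hk, rfl⟩ v hv
    have h2 := hGS k⁻¹ (hGF _ (F.inv_mem hk.1)) _ v hv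
    rw [← mul_smul] at h2
    have h3 : (k⁻¹ * g) • χ ≠ χ := by
      rw [mul_smul, Ne, inv_smul_eq_iff, (hF0 k hk).2]
      exact hgχ
    rw [mul_assoc, rho_mul, rho_mul,
      hxother _ (F.mul_mem (F.inv_mem hk.1) hg) h3 _ h2, rho_rho_inv]
  refine ihn _ hlt _ X F0 H1 (S χ) (Submodule.finiteDimensional_of_le (hSW χ)) rfl rfl
    { pgroup := c.pgroup.to_le hXQ
      nil := c.nil.of_injective (Subgroup.inclusion hF0F) (Subgroup.inclusion_injective hF0F)
      cop := fun h => c.cop (h.trans (Subgroup.card_dvd_of_le hF0F))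
      FQ := fun k hk => hXconj k fun g hg => ⟨k * g, F0.mul_mem hk hg, by group⟩
      HQ := fun h hh => hXconj h fun g hg => ⟨h * g * h⁻¹, hH1F0 h hh g hg, by
        conv_rhs => rw [← c.comm h hh.1]
        group⟩
      HF := hH1F0
      fpf := fun h hh hn g hg => c.fpf h hh.1 hn g hg.1
      cardQ := natCast_card_ne_zero_of_le hXQ c.cardQ
      cardH := natCast_card_ne_zero_of_le inf_le_left c.cardH
      invQ := fun y hy => hQS y (hXQ hy) χ
      invF := fun y hy w hw => by
        have := hGS y (hGF y hy.1) χ w hw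
        rwa [(hF0 y hy).2] at this
      invH := fun y hy w hw => by
        have := hGS y (hGH y hy.1) χ w hw
        rwa [(hH1 y hy).2] at this
      cent := ?_
      mem := Subgroup.subset_closure ⟨1, F0.one_mem, by simp⟩
      comm := fun h hh => c.comm h hh.1
      fix := fun v hv h => hstab χ v hv fun k hk hkχ => h k ⟨hk, hkχ⟩ }
  intro d hd hdF
  obtain ⟨b, hb, hbd⟩ := exists_glue S c.FQ (fun g hg => hGS g (hGF g hg)) hQS χ (hXQ hd)
    (fun g hg hgχ => hdF g ⟨hg, hgχ⟩) (fun g hg hgχ => hXother g hg hgχ hd)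
  -- `b` commutes with `F` on the sum `U` of the weight spaces of the orbit, so is trivial there
  let U : Submodule K V := ⨆ g : F, S (g.1 • χ)
  have hUW : U ≤ W := iSup_le fun g => hSW _
  have hUmem : ∀ g ∈ F, S (g • χ) ≤ U := fun g hg => le_iSup (fun g : F => S (g.1 • χ)) ⟨g, hg⟩
  have hFU : ∀ k ∈ F, ∀ v ∈ U, ρ k v ∈ U := by
    intro k hk
    have : U ≤ U.comap (ρ k) := iSup_le fun g v hv => by
      have h2 := hGS k (hGF k hk) _ v hv
      rw [← mul_smul] at h2
      exact hUmem _ (F.mul_mem hk g.2) h2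
    exact fun v hv => this hv
  have hbU : b ∈ trivOn ρ U := by
    refine mem_trivOn_of_comm hq c.pgroup c.FQ c.nil c.cop hUW hFU c.cent hb ?_ ?_
    · intro k hk
      have : U ≤ LinearMap.eqLocus (ρ (k * b * k⁻¹)) (ρ b) := iSup_le fun g v hv => by
        rw [LinearMap.mem_eqLocus]
        have h2 := hGS k⁻¹ (hGF _ (F.inv_mem hk)) _ v hv
        rw [← mul_smul] at h2
        rw [mul_assoc, rho_mul, rho_mul, hbd _ (F.mul_mem (F.inv_mem hk) g.2) _ h2,
          hbd g.1 g.2 v hv, ← rho_mul, ← rho_mul]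
        congr 2
        group
      exact fun v hv => this hv
    · have : U ≤ U.comap (ρ b) := iSup_le fun g v hv => hUmem g.1 g.2 (hQS b hb _ v hv)
      exact fun v hv => this hv
  intro v hv
  have hv1 : v ∈ S ((1 : A) • χ) := by rwa [one_smul]
  have h2 := hbd 1 F.one_mem v hv1
  rw [hbU v (hUmem 1 F.one_mem hv1)] at h2
  simpa using h2.symm

end Main

/-! ### Reduction to the algebraically closed case -/

/-- The kernel of a Frobenius group with nontrivial complement is nilpotent. -/
lemma allNil_of_frobenius {A : Type u} [Group A] [Finite A] {F H : Subgroup A} (hH : H ≠ ⊥)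
    (hFinv : ∀ h ∈ H, ∀ f ∈ F, h * f * h⁻¹ ∈ F)
    (hFrob : ∀ h ∈ H, h ≠ 1 → ∀ f ∈ F, h * f * h⁻¹ = f → f = 1) : AllNil F := by
  obtain ⟨r, hr, hrd⟩ := Nat.exists_prime_and_dvd ((Subgroup.one_lt_card_iff_ne_bot H).2 hH).ne'
  have := Fact.mk hr
  obtain ⟨h, hh⟩ := exists_prime_orderOf_dvd_card' (G := H) r hrd
  have hhr : h.1 ^ r = 1 := by
    have h1 : h ^ r = 1 := by rw [← hh, pow_orderOf_eq_one]
    exact congrArg Subtype.val h1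
  have hh1 : h.1 ≠ 1 := by
    intro h1
    rw [orderOf_eq_one_iff.2 (Subtype.ext h1)] at hh
    exact hr.ne_one hh.symm
  have hinv : ∀ f ∈ F, MulAut.conj h.1 f ∈ F := fun f hf => hFinv h.1 h.2 f hf
  refine allNil_of_fpf hr _ F rfl (restrAut (MulAut.conj h.1) F hinv)
    (restrAut_pow (by rw [← map_pow, hhr, map_one]) F hinv) fun f hf => ?_
  exact Subtype.ext (hFrob h.1 h.2 hh1 f.1 f.2 (congrArg Subtype.val hf))

/-- If `F` has no nontrivial fixed point on the `q`-group `Q`, then neither has the subgroup of its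
`q`-regular elements: on the centraliser of that subgroup a Sylow `q`-subgroup of `F` acts, and it
would have a nontrivial fixed point. -/
lemma eq_one_of_isReg_fixed {A : Type u} [Group A] [Finite A] {q : ℕ} (hq : q.Prime)
    {Q F : Subgroup A} (hQ : IsPGroup q Q) (hFQ : ∀ f ∈ F, ∀ y ∈ Q, f * y * f⁻¹ ∈ Q)
    (hCQF : ∀ x ∈ Q, (∀ f ∈ F, f * x * f⁻¹ = x) → x = 1) (x : A) (hx : x ∈ Q)
    (hxF : ∀ f ∈ F, IsReg q f → f * x * f⁻¹ = x) : x = 1 := by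
  have := Fact.mk hq
  by_contra hx1
  let C : Subgroup A := Q ⊓ Subgroup.centralizer {f | f ∈ F ∧ IsReg q f}
  have hC : ∀ c, c ∈ C ↔ c ∈ Q ∧ ∀ f ∈ F, IsReg q f → f * c * f⁻¹ = c := by
    intro c
    rw [Subgroup.mem_inf, Subgroup.mem_centralizer_iff]
    simp only [Set.mem_ofPred_eq, and_imp, mul_inv_eq_iff_eq_mul]
  have hqC : q ∣ Nat.card C := by
    have h1 : IsPGroup q C := hQ.to_le inf_le_left
    have h2 : Nontrivial C := ⟨⟨x, (hC x).2 ⟨hx, hxF⟩⟩, 1, fun h => hx1 (congrArg Subtype.val h)⟩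
    obtain ⟨n, hn, hcn⟩ := h1.nontrivial_iff_card.1 h2
    rw [hcn]
    exact dvd_pow_self q hn.ne'
  let R : Sylow q F := default
  let _ : MulAction (R : Subgroup F) C :=
    { smul := fun g z => ⟨g.1.1 * z.1 * g.1.1⁻¹, by
        have hz := (hC _).1 z.2
        refine (hC _).2 ⟨hFQ _ g.1.2 _ hz.1, fun f hf hfr => ?_⟩
        have h1 := hz.2 (g.1.1⁻¹ * f * g.1.1)
          (F.mul_mem (F.mul_mem (F.inv_mem g.1.2) hf) g.1.2)
          (by simpa using (isReg_conj_iff (g.1.1⁻¹)).2 hfr)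
        conv_rhs => rw [← h1]
        group⟩
      one_smul := fun z => Subtype.ext (by
        change (1 : A) * z.1 * (1 : A)⁻¹ = z.1
        simp)
      mul_smul := fun g h z => Subtype.ext (by
        change (g.1.1 * h.1.1) * z.1 * (g.1.1 * h.1.1)⁻¹ =
          g.1.1 * (h.1.1 * z.1 * h.1.1⁻¹) * g.1.1⁻¹
        group) }
  have h1 : (1 : C) ∈ MulAction.fixedPoints (R : Subgroup F) C := fun g => Subtype.ext (by
    change g.1.1 * (1 : A) * g.1.1⁻¹ = 1
    simp)
  obtain ⟨y, hy, hy1⟩ := R.2.exists_fixed_point_of_prime_dvd_card_of_fixed_point C hqC h1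
  have hyQ := (hC y).1 y.2
  refine hy1 (Subtype.ext (hCQF y.1 hyQ.1 ?_).symm)
  exact conj_eq_of_isReg_of_sylow hq R hyQ.2 fun g hg => congrArg Subtype.val (hy ⟨g, hg⟩)

open scoped TensorProduct in
/-- The main result for an arbitrary field and an arbitrary module, the kernel `F` being already
replaced by a nilpotent `q'`-group. Extending scalars to the algebraic closure preserves the
relation `x (∑ h) = ∑ h` that expresses the triviality of `x` on `C_V(H)`, and each vector lies in
a finite-dimensional submodule. -/
lemma eq_of_eq_on_repFixed {A : Type u} [Group A] [Finite A] {Q F H : Subgroup A}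
    [hQn : Q.Normal] (hHF : ∀ h ∈ H, ∀ f ∈ F, h * f * h⁻¹ ∈ F)
    (hfpf : ∀ h ∈ H, h ≠ 1 → ∀ f ∈ F, h * f * h⁻¹ = f → f = 1)
    {q : ℕ} (hq : q.Prime) (hQ : IsPGroup q Q) (hF : AllNil F) (hqF : ¬ q ∣ Nat.card F)
    (hC : ∀ x ∈ Q, (∀ f ∈ F, f * x * f⁻¹ = x) → x = 1)
    {k V : Type*} [Field k] [AddCommGroup V] [Module k V] (hcQ : (Nat.card Q : k) ≠ 0)
    (hcH : (Nat.card H : k) ≠ 0) (ρ : Representation k A V) {x : A} (hx : x ∈ Q)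
    (hxH : ∀ h ∈ H, h * x * h⁻¹ = x) (hfix : ∀ v ∈ repFixed ρ H, ρ x v = v) (v : V) :
    ρ x v = v := by
  have := Fintype.ofFinite H
  let K := AlgebraicClosure k
  let ρ' : Representation K A (K ⊗[k] V) :=
    { toFun := fun a => (ρ a).baseChange K
      map_one' := by rw [map_one]; exact LinearMap.baseChange_id
      map_mul' := fun a b => by rw [map_mul]; exact LinearMap.baseChange_comp _ _ }
  have hρ' : ∀ a t v, ρ' a (t ⊗ₜ v) = t ⊗ₜ ρ a v := fun a t v => rfl
  have hcast : ∀ S : Subgroup A, (Nat.card S : k) ≠ 0 → (Nat.card S : K) ≠ 0 := by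
    intro S hS h
    rw [← map_natCast (algebraMap k K), map_eq_zero] at h
    exact hS h
  have hsum : ∀ m, ρ' x (∑ h : H, ρ' h.1 m) = ∑ h : H, ρ' h.1 m := by
    intro m
    induction m using TensorProduct.induction_on with
    | zero => simp
    | tmul t v =>
      simp only [hρ', ← TensorProduct.tmul_sum]
      congr 1
      refine hfix _ fun h hh => ?_
      simp only [map_sum, ← rho_mul]
      exact Fintype.sum_equiv (Equiv.mulLeft (⟨h, hh⟩ : H)) _ _ fun _ => rfl
    | add a b ha hb => simp only [map_add, Finset.sum_add_distrib, ha, hb]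
  let W : Submodule K (K ⊗[k] V) := Submodule.span K (Set.range fun a : A => ρ' a (1 ⊗ₜ v))
  have hWfd : FiniteDimensional K W := FiniteDimensional.span_of_finite K (Set.finite_range _)
  have hWinv : ∀ a : A, ∀ w ∈ W, ρ' a w ∈ W := by
    intro a
    have : W ≤ W.comap (ρ' a) := by
      rw [Submodule.span_le]
      rintro _ ⟨b, rfl⟩
      change ρ' a (ρ' b _) ∈ W
      rw [← rho_mul]
      exact Submodule.subset_span ⟨a * b, rfl⟩
    exact fun w hw => this hw
  have hmain := ActConfig.trivial hq x _ _ Q F H W hWfd rfl rfl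
    { pgroup := hQ
      nil := hF
      cop := hqF
      FQ := fun f _ y hy => hQn.conj_mem y hy f
      HQ := fun f _ y hy => hQn.conj_mem y hy f
      HF := hHF
      fpf := hfpf
      cardQ := hcast Q hcQ
      cardH := hcast H hcH
      invQ := fun y _ => hWinv y
      invF := fun y _ => hWinv y
      invH := fun y _ => hWinv y
      cent := fun c hc hcF => by
        rw [hC c hc hcF]
        exact (trivOn ρ' W).one_mem
      mem := hx
      comm := hxH
      fix := fun w _ hw => by
        have h1 := hsum w
        rw [Finset.sum_congr rfl fun h _ => hw h.1 h.2, Finset.sum_const, Finset.card_univ,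
          ← Nat.card_eq_fintype_card, ← Nat.cast_smul_eq_nsmul K, map_smul] at h1
        exact smul_right_injective _ (hcast H hcH) h1 }
  have h1 : ρ' x (1 ⊗ₜ v) = 1 ⊗ₜ v := hmain _ (Submodule.subset_span ⟨1, by simp⟩)
  rw [hρ'] at h1
  exact Module.FaithfullyFlat.tensorProduct_mk_injective (A := k) (B := K) V h1

/-- **Corollary 2.2.** Let a Frobenius group `FH` with kernel `F` and complement `H` act
on a finite `q`-group `Q` with `C_Q(F) = 1` (all inside the ambient semidirect product
`A = Q ⋊ FH`), and let `V` be a `k[Q ⋊ FH]`-module over a field `k` whose characteristic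
is coprime to `|Q||H|`. Then `Ker(C_Q(H) on C_V(H)) = Ker(C_Q(H) on V)`. -/
theorem ker_on_fixed_eq_ker_of_fixed_point_free_kernel
    (A : Type*) [Group A] [Finite A]
    (Q F H : Subgroup A)
    (hQnorm : Q.Normal) (hQdisj : Disjoint Q (F ⊔ H)) (hQgen : Q ⊔ (F ⊔ H) = ⊤)
    (hFHdisj : Disjoint F H)
    (hFinv : ∀ h ∈ H, ∀ f ∈ F, h * f * h⁻¹ ∈ F)
    (hFrob : ∀ h ∈ H, h ≠ 1 → ∀ f ∈ F, h * f * h⁻¹ = f → f = 1)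
    (q : ℕ) (hq : q.Prime) (hQp : IsPGroup q Q)
    (hCQF : ∀ x ∈ Q, (∀ f ∈ F, f * x * f⁻¹ = x) → x = 1)
    (k : Type*) [Field k]
    (hchar : ∀ r : ℕ, r.Prime → CharP k r → ¬ r ∣ Nat.card Q * Nat.card H)
    (V : Type*) [AddCommGroup V] [Module k V]
    (ρ : Representation k A V) :
    ∀ x ∈ Q, (∀ h ∈ H, h * x * h⁻¹ = x) →
      ((∀ v ∈ repFixed ρ H, ρ x v = v) ↔ ∀ v : V, ρ x v = v) := by
  intro x hx hxH
  refine ⟨fun hfix v => ?_, fun h v _ => h v⟩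
  by_cases hH : H = ⊥
  · refine hfix v fun h hh => ?_
    rw [hH, Subgroup.mem_bot] at hh
    rw [hh, map_one, Module.End.one_apply]
  have hF := allNil_of_frobenius hH hFinv hFrob
  have hcard : ((Nat.card Q * Nat.card H : ℕ) : k) ≠ 0 := by
    intro h0
    have hp := ringChar.charP k
    rcases CharP.char_is_prime_or_zero k (ringChar k) with h | h
    · exact hchar _ h hp ((CharP.cast_eq_zero_iff k _ _).1 h0)
    · rw [CharP.cast_eq_zero_iff k (ringChar k), h, zero_dvd_iff] at h0
      exact (Nat.mul_pos Nat.card_pos Nat.card_pos).ne' h0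
  rw [Nat.cast_mul] at hcard
  -- the normal `q`-complement of `F` replaces `F`
  have hFq := hF q hq
  let F1 : Subgroup A := hFq.compl.map F.subtype
  have hF1 : ∀ f, f ∈ F1 ↔ f ∈ F ∧ IsReg q f := by
    intro f
    constructor
    · rintro ⟨g, hg, rfl⟩
      exact ⟨g.2, isReg_coe_iff.2 hg⟩
    · rintro ⟨h1, h2⟩
      exact ⟨⟨f, h1⟩, isReg_coe_iff.1 h2, rfl⟩
  have hF1F : F1 ≤ F := fun f hf => ((hF1 f).1 hf).1
  refine eq_of_eq_on_repFixed (F := F1) (H := H) ?_ (fun h hh hn f hf => hFrob h hh hn f (hF1F hf))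
    hq hQp (hF.of_injective (Subgroup.inclusion hF1F) (Subgroup.inclusion_injective hF1F)) ?_ ?_
    (left_ne_zero_of_mul hcard) (right_ne_zero_of_mul hcard) ρ hx hxH hfix v
  · intro h hh f hf
    rw [hF1] at hf ⊢
    exact ⟨hFinv h hh f hf.1, (isReg_conj_iff h).2 hf.2⟩
  · rw [← hq.coprime_iff_not_dvd]
    exact coprime_card_of_isReg hq fun f => isReg_coe_iff.1 ((hF1 f.1).1 f.2).2
  · intro y hy hyF
    exact eq_one_of_isReg_fixed hq hQp (fun f _ z hz => hQnorm.conj_mem z hz f) hCQF y hy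
      fun f hf hfr => hyF f ((hF1 f).2 ⟨hf, hfr⟩)
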